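/- arXiv:2411.03516 — 2 statements merged into one kernel-verified Lean document; each statement's English description precedes it below -/
import Mathlib

section
/- For each m ∈ ℕ, the Komornik–Loreti constant β_m belongs to E_∞ with coding (s_1, 01, 01, …), where s_1 = (k−1)k if m = 2k−1 and s_1 = k if m = 2k, and its critical value is τ(β_m) = m/(β_m − 1) − 1 = (m + 1 − β_m)/(β_m − 1). -/
open Set Filter MeasureTheory Topology

noncomputable section

/-- The β-transformation `x ↦ βx - ⌊βx⌋`. -/
def Tbeta (β x : ℝ) : ℝ := Int.fract (β * x)

/-- The survivor set `K_β(t)`: points of `[0,1)` whose orbit never enters `[0,t)`. -/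
def survivor (β t : ℝ) : Set ℝ :=
  {x | x ∈ Set.Ico (0 : ℝ) 1 ∧ ∀ n : ℕ, t ≤ (Tbeta β)^[n] x}

/-- The set-valued bifurcation set `E_β`. -/
def Ebif (β : ℝ) : Set ℝ :=
  {t | t ∈ Set.Ico (0 : ℝ) 1 ∧ ∀ t' : ℝ, t < t' → survivor β t' ≠ survivor β t}

/-- `(c)_β = Σ_{i≥1} c_i β^{-i}` for an infinite digit sequence (indexed from `0`). -/
def valSeq (β : ℝ) (c : ℕ → ℕ) : ℝ := ∑' i : ℕ, (c i : ℝ) / β ^ (i + 1)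

/-- `(w 0^∞)_β` for a finite word `w`. -/
def valWord (β : ℝ) (w : List ℕ) : ℝ :=
  ∑ i ∈ Finset.range w.length, (w.getD i 0 : ℝ) / β ^ (i + 1)

/-- `w⁺`: increment the last letter of `w`. -/
def wplus (w : List ℕ) : List ℕ := w.dropLast ++ [w.getLast! + 1]

/-- `w⁻`: decrement the last letter of `w`. -/
def wminus (w : List ℕ) : List ℕ := w.dropLast ++ [w.getLast! - 1]

/-- `θ`: increment every digit of `w` by one. -/
def theta (w : List ℕ) : List ℕ := w.map (· + 1)

/-- `L(w)`: the lexicographically largest cyclic permutation of `w`. -/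
def maxCyc (w : List ℕ) : List ℕ := ((List.range w.length).map w.rotate).foldl max []

/-- `w^∞`: the periodic sequence with period block `w`. -/
def perSeq (w : List ℕ) : ℕ → ℕ := fun i => w.getD (i % w.length) 0

/-- The sequence given by the word `w` followed by the sequence `c`. -/
def wordSeq (w : List ℕ) (c : ℕ → ℕ) : ℕ → ℕ :=
  fun i => if i < w.length then w.getD i 0 else c (i - w.length)

/-- Strict lexicographic order `≺` on sequences. -/
def seqLt (x y : ℕ → ℕ) : Prop := ∃ n, (∀ i < n, x i = y i) ∧ x n < y n

/-- Lexicographic order `≼` on sequences. -/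
def seqLe (x y : ℕ → ℕ) : Prop := x = y ∨ seqLt x y

/-- The `n`-fold left shift `σⁿ` on sequences. -/
def shiftn (n : ℕ) (x : ℕ → ℕ) : ℕ → ℕ := fun i => x (i + n)

/-- One step of the Farey recursion: insert the concatenation `w_i w_{i+1}`
between consecutive entries. -/
def fareyInsert : List (List ℕ) → List (List ℕ)
  | [] => []
  | [w] => [w]
  | w :: v :: rest => w :: (w ++ v) :: fareyInsert (v :: rest)

/-- The ordered set `F_n` of Farey words of level `n`. -/
def fareyLevel : ℕ → List (List ℕ)
  | 0 => [[0], [1]]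
  | n + 1 => fareyInsert (fareyLevel n)

/-- `F`: all Farey words of length at least two. -/
def FareySet : Set (List ℕ) := {w | (∃ n, w ∈ fareyLevel n) ∧ w ≠ [0] ∧ w ≠ [1]}

/-- `F̂ = F ∪ {1}`. -/
def FareyHat : Set (List ℕ) := FareySet ∪ {[1]}

/-- The extended Farey set `F_e = {θ^k(w) : w ∈ F̂, k ≥ 0}`. -/
def FareyExt : Set (List ℕ) := {w | ∃ v ∈ FareyHat, ∃ k : ℕ, w = theta^[k] v}

/-- A nonempty word is Lyndon iff it is strictly smaller than each of its nontrivial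
cyclic rotations (equivalently: aperiodic and lexicographically smallest among its
cyclic permutations). -/
def IsLyndon (w : List ℕ) : Prop := w ≠ [] ∧ ∀ i, 0 < i → i < w.length → w < w.rotate i

/-- `L_e`: all Lyndon words over `ℕ ∪ {0}` except the single-letter word `0`. -/
def LyndonExt : Set (List ℕ) := {w | IsLyndon w ∧ w ≠ [0]}

/-- `L`: Lyndon words over `{0,1}` of length at least `2`. -/
def LyndonBin : Set (List ℕ) := {w | IsLyndon w ∧ 2 ≤ w.length ∧ ∀ d ∈ w, d ≤ 1}

/-- The block of `Φ_s` emitted for current digit `d` after previous digit `p`: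
`L(s)` for `00`, `s⁻` for `10`, `L(s)⁺` for `01`, `s` for `11`. -/
def phiBlock (s : List ℕ) (p d : ℕ) : List ℕ :=
  if d = 0 then (if p = 0 then maxCyc s else wminus s)
  else (if p = 0 then wplus (maxCyc s) else s)

def phiAux (s : List ℕ) : ℕ → List ℕ → List ℕ
  | _, [] => []
  | p, d :: rest => phiBlock s p d ++ phiAux s d rest

/-- The substitution `Φ_s` on finite words; `s • r = subst s r`.  An initial digit `0`
produces `s⁻`, an initial digit `1` produces `L(s)⁺`, and thereafter runs
`0^k` resp. `1^l` produce `L(s)^{k-1}` resp. `s^{l-1}`, in accordance with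
`Φ_s(0^{k₁}1^{l₁}…) = s⁻ L(s)^{k₁-1} L(s)⁺ s^{l₁-1} …` and
`Φ_s(1^{k₁}0^{l₁}…) = L(s)⁺ s^{k₁-1} s⁻ L(s)^{l₁-1} …`. -/
def subst (s r : List ℕ) : List ℕ :=
  match r with
  | [] => []
  | d :: rest => phiBlock s (1 - d) d ++ phiAux s d rest

/-- The substitution `Φ_s` on infinite sequences, as the limit of its values
on initial segments (each digit contributes a nonempty block, so the `i`-th letter
is determined by the first `i+1` digits). -/
def phiSeq (s : List ℕ) (c : ℕ → ℕ) : ℕ → ℕ :=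
  fun i => (subst s (List.ofFn fun j : Fin (i + 1) => c j)).getD i 0

/-- `Λ_e(m) = {s₁ • s₂ • … • s_m : s₁ ∈ F_e, s₂,…,s_m ∈ F}`. -/
def LambdaE (m : ℕ) : Set (List ℕ) :=
  {w | ∃ s₁ ∈ FareyExt, ∃ rs : List (List ℕ),
    rs.length = m - 1 ∧ (∀ r ∈ rs, r ∈ FareySet) ∧ w = rs.foldl subst s₁}

/-- `Λ_e = ∪_{m≥1} Λ_e(m)`. -/
def LambdaExt : Set (List ℕ) := ⋃ m ∈ Set.Ici 1, LambdaE m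

/-- `β_ℓ^S`: the base `β > 1` with `(L(S)^∞)_β = 1` (it is unique since
`β ↦ (c)_β` is strictly decreasing). -/
def betaL (S : List ℕ) : ℝ :=
  Classical.epsilon fun β : ℝ => 1 < β ∧ valSeq β (perSeq (maxCyc S)) = 1

/-- `β_*^S`: the base `β > 1` with `(L(S)⁺ S⁻ L(S)^∞)_β = 1`. -/
def betaStar (S : List ℕ) : ℝ :=
  Classical.epsilon fun β : ℝ =>
    1 < β ∧ valSeq β (wordSeq (wplus (maxCyc S) ++ wminus S) (perSeq (maxCyc S))) = 1

/-- `β_r^S`: the base `β > 1` with `(L(S)⁺ S^∞)_β = 1`. -/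
def betaR (S : List ℕ) : ℝ :=
  Classical.epsilon fun β : ℝ => 1 < β ∧ valSeq β (wordSeq (wplus (maxCyc S)) (perSeq S)) = 1

/-- The Lyndon/Farey interval `J^S = [β_ℓ^S, β_r^S]`. -/
def Jint (S : List ℕ) : Set ℝ := Set.Icc (betaL S) (betaR S)

/-- The basic interval `I^S = [β_ℓ^S, β_*^S]`. -/
def Iint (S : List ℕ) : Set ℝ := Set.Icc (betaL S) (betaStar S)

/-- The exceptional set `E = (1,∞) ∖ ∪_{s ∈ F_e} J^s`. -/
def Eexc : Set ℝ := Set.Ioi 1 \ ⋃ s ∈ FareyExt, Jint s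

/-- The relative exceptional set `E^S = (J^S ∖ I^S) ∖ ∪_{r ∈ F} J^{S•r}`. -/
def EexcRel (S : List ℕ) : Set ℝ :=
  (Jint S \ Iint S) \ ⋃ r ∈ FareySet, Jint (subst S r)

/-- The infinitely renormalizable set `E_∞ = ∩_{m≥1} ∪_{S ∈ Λ_e(m)} J^S`. -/
def Einf : Set ℝ := ⋂ m ∈ Set.Ici 1, ⋃ S ∈ LambdaE m, Jint S

/-- `E_L = E ∪ {β_ℓ^s : s ∈ F_e}`. -/
def EL : Set ℝ := Eexc ∪ {x | ∃ s ∈ FareyExt, x = betaL s}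

/-- The critical value `τ(β) = min{t > 0 : dim_H K_β(t) = 0}`. -/
def tau (β : ℝ) : ℝ := sInf {t : ℝ | 0 < t ∧ dimH (survivor β t) = 0}

end

/-- The Komornik–Loreti constant for the alphabet `{0,1,…,m}`: the smallest base
`β > 1` in which `1` has a unique expansion `1 = Σ_{i≥1} c_i β^{-i}` with digits
`c_i ∈ {0,…,m}`. -/
noncomputable def klConst (m : ℕ) : ℝ :=
  sInf {β : ℝ | 1 < β ∧ ∃! c : ℕ → ℕ, (∀ i, c i ≤ m) ∧ valSeq β c = 1}

namespace KomornikLoreti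

/-! ### Values of digit sequences -/

section Values

variable {β : ℝ} {m : ℕ} {x y : ℕ → ℕ}

lemma shiftn_shiftn (i j : ℕ) (x : ℕ → ℕ) : shiftn i (shiftn j x) = shiftn (i + j) x := by
  funext k
  simp [shiftn, add_assoc]

lemma shiftn_le (hx : ∀ i, x i ≤ m) (n i : ℕ) : shiftn n x i ≤ m := hx _

lemma shiftn_zero (x : ℕ → ℕ) : shiftn 0 x = x := rfl

lemma hasSum_geometric_digit (hβ : 1 < β) (a : ℝ) :
    HasSum (fun i : ℕ => a / β ^ (i + 1)) (a / (β - 1)) := by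
  have h0 : (0 : ℝ) < β := by linarith
  have h := (hasSum_geometric_of_lt_one (inv_nonneg.2 h0.le) (inv_lt_one_of_one_lt₀ hβ)).mul_left
    (a / β)
  have h1 : β - 1 ≠ 0 := by linarith
  have h2 : 1 - β⁻¹ = (β - 1) / β := by field_simp
  have h3 : a / β * (1 - β⁻¹)⁻¹ = a / (β - 1) := by
    rw [h2]
    field_simp
  rw [h3] at h
  have h4 : (fun i : ℕ => a / β * β⁻¹ ^ i) = fun i : ℕ => a / β ^ (i + 1) := by
    funext i
    rw [inv_pow, pow_succ]
    field_simp
  rwa [h4] at h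

lemma summable_digits (hβ : 1 < β) (hx : ∀ i, x i ≤ m) :
    Summable fun i : ℕ => (x i : ℝ) / β ^ (i + 1) := by
  have h0 : (0 : ℝ) < β := by linarith
  refine Summable.of_nonneg_of_le (fun i => by positivity) (fun i => ?_)
    (hasSum_geometric_digit hβ (m : ℝ)).summable
  have : (x i : ℝ) ≤ m := by exact_mod_cast hx i
  gcongr

lemma valSeq_nonneg (hβ : 1 < β) (x : ℕ → ℕ) : 0 ≤ valSeq β x := by
  have h0 : (0 : ℝ) < β := by linarith
  exact tsum_nonneg fun i => by positivity

lemma valSeq_le (hβ : 1 < β) (hx : ∀ i, x i ≤ m) : valSeq β x ≤ m / (β - 1) := by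
  have h0 : (0 : ℝ) < β := by linarith
  rw [← (hasSum_geometric_digit hβ (m : ℝ)).tsum_eq]
  refine (summable_digits hβ hx).tsum_le_tsum (fun i => ?_)
    (hasSum_geometric_digit hβ (m : ℝ)).summable
  have : (x i : ℝ) ≤ m := by exact_mod_cast hx i
  gcongr

lemma valSeq_eq_cons (hβ : 1 < β) (hx : ∀ i, x i ≤ m) :
    valSeq β x = (x 0 + valSeq β (shiftn 1 x)) / β := by
  have h0 : (0 : ℝ) < β := by linarith
  unfold valSeq
  rw [(summable_digits hβ hx).tsum_eq_zero_add, add_div, ← tsum_div_const]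
  congr 1
  · simp
  · refine tsum_congr fun i => ?_
    simp only [shiftn]
    rw [pow_succ, div_div]

lemma valSeq_sub_of_agree (hβ : 1 < β) (hx : ∀ i, x i ≤ m) (hy : ∀ i, y i ≤ m) {p : ℕ}
    (h : ∀ i < p, x i = y i) :
    valSeq β x - valSeq β y = (valSeq β (shiftn p x) - valSeq β (shiftn p y)) / β ^ p := by
  have h0 : (0 : ℝ) < β := by linarith
  induction p with
  | zero => simp [shiftn_zero]
  | succ p ih =>
    rw [ih fun i hi => h i (by omega), valSeq_eq_cons (x := shiftn p x) hβ fun i => hx _,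
      valSeq_eq_cons (x := shiftn p y) hβ fun i => hy _, shiftn_shiftn, shiftn_shiftn,
      add_comm 1 p]
    have : shiftn p x 0 = shiftn p y 0 := by simpa [shiftn] using h p (by omega)
    rw [this, pow_succ]
    field_simp
    ring

/-- The difference of two values, when the sequences agree on the first `p` digits. -/
lemma valSeq_sub_of_agree_digit (hβ : 1 < β) (hx : ∀ i, x i ≤ m) (hy : ∀ i, y i ≤ m) {p : ℕ}
    (h : ∀ i < p, x i = y i) :
    valSeq β x - valSeq β y =
      (x p - y p + valSeq β (shiftn (p + 1) x) - valSeq β (shiftn (p + 1) y)) / β ^ (p + 1) := by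
  have h0 : (0 : ℝ) < β := by linarith
  rw [valSeq_sub_of_agree hβ hx hy h, valSeq_eq_cons (x := shiftn p x) hβ fun i => hx _,
    valSeq_eq_cons (x := shiftn p y) hβ fun i => hy _, shiftn_shiftn, shiftn_shiftn,
    add_comm 1 p]
  simp only [shiftn, zero_add]
  rw [pow_succ]
  field_simp
  ring

/-- Digitwise reflection with respect to the alphabet `{0, …, m}`. -/
def refl (m : ℕ) (x : ℕ → ℕ) : ℕ → ℕ := fun i => m - x i

lemma refl_le (m : ℕ) (x : ℕ → ℕ) (i : ℕ) : refl m x i ≤ m := Nat.sub_le _ _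

lemma shiftn_refl (n m : ℕ) (x : ℕ → ℕ) : shiftn n (refl m x) = refl m (shiftn n x) := rfl

lemma valSeq_refl (hβ : 1 < β) (hx : ∀ i, x i ≤ m) :
    valSeq β (refl m x) = m / (β - 1) - valSeq β x := by
  rw [eq_sub_iff_add_eq, ← (hasSum_geometric_digit hβ (m : ℝ)).tsum_eq]
  unfold valSeq
  rw [← (summable_digits hβ (refl_le m x)).tsum_add (summable_digits hβ hx)]
  refine tsum_congr fun i => ?_
  simp only [refl, Nat.cast_sub (hx i)]
  ring

lemma valSeq_pos (hβ : 1 < β) (hx : ∀ i, x i ≤ m) {i : ℕ} (hi : 0 < x i) : 0 < valSeq β x := by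
  have h0 : (0 : ℝ) < β := by linarith
  exact (summable_digits hβ hx).tsum_pos (fun i => by positivity) i
    (by have : (0 : ℝ) < x i := by exact_mod_cast hi
        positivity)

/-- A sequence bounded above that expands wherever it is positive is nonpositive. -/
lemma nonpos_of_expanding (hβ : 1 < β) {d : ℕ → ℝ} {C : ℝ} (hC : ∀ i, d i ≤ C)
    (h : ∀ i, d i ≤ 0 ∨ ∃ p, 1 ≤ p ∧ d i ≤ d (i + p) / β ^ p) (i : ℕ) : d i ≤ 0 := by
  have h0 : (0 : ℝ) < β := by linarith
  have key : ∀ n i, d i ≤ max C 0 / β ^ n := by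
    intro n
    induction n with
    | zero => intro i; simpa using Or.inl (hC i)
    | succ n ih =>
      intro i
      rcases h i with h | ⟨p, hp, h⟩
      · exact h.trans (by positivity)
      · refine h.trans ?_
        rw [pow_succ, ← div_div]
        have : β ≤ β ^ p := le_self_pow₀ hβ.le (by omega)
        have := ih (i + p)
        gcongr
  exact ge_of_tendsto (Tendsto.const_div_atTop (tendsto_pow_atTop_atTop_of_one_lt hβ) _)
    (Eventually.of_forall fun n => key n i)

/-- A bounded orbit of `z ↦ β z - c` is the sequence of values of the shifts of `c`. -/
lemma valSeq_eq_of_orbit (hβ : 1 < β) (hx : ∀ i, x i ≤ m) {z : ℕ → ℝ} {C : ℝ}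
    (hz0 : ∀ i, 0 ≤ z i) (hzC : ∀ i, z i ≤ C) (hz : ∀ i, z (i + 1) = β * z i - x i) (i : ℕ) :
    valSeq β (shiftn i x) = z i := by
  have h0 : (0 : ℝ) < β := by linarith
  have hrec : ∀ i, valSeq β (shiftn i x) - z i =
      (valSeq β (shiftn (i + 1) x) - z (i + 1)) / β ^ 1 := by
    intro i
    rw [valSeq_eq_cons (x := shiftn i x) hβ fun j => hx _, shiftn_shiftn, hz, add_comm 1 i]
    simp only [shiftn, zero_add]
    field_simp
    ring
  have hle : ∀ i, valSeq β (shiftn i x) ≤ m / (β - 1) := fun i => valSeq_le hβ fun j => hx _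
  refine le_antisymm ?_ ?_
  · refine sub_nonpos.1 (nonpos_of_expanding hβ (d := fun i => valSeq β (shiftn i x) - z i)
      (C := m / (β - 1)) (fun i => ?_) (fun i => Or.inr ⟨1, le_rfl, (hrec i).le⟩) i)
    linarith [hle i, hz0 i]
  · refine sub_nonpos.1 (nonpos_of_expanding hβ (d := fun i => z i - valSeq β (shiftn i x))
      (C := C) (fun i => ?_) (fun i => Or.inr ⟨1, le_rfl, ?_⟩) i)
    · linarith [hzC i, valSeq_nonneg hβ (shiftn i x)]
    · have := hrec i
      rw [← neg_sub, this, ← neg_sub (valSeq β (shiftn (i + 1) x)), neg_div]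

/-- Every number in `[0, m / (β - 1)]` has an expansion with digits in `{0, …, m}`. -/
lemma exists_expansion (hβ : 1 < β) (hβm : β ≤ m + 1) {z : ℝ} (hz0 : 0 ≤ z)
    (hz : z ≤ m / (β - 1)) : ∃ x : ℕ → ℕ, (∀ i, x i ≤ m) ∧ valSeq β x = z := by
  have h0 : (0 : ℝ) < β := by linarith
  have h1 : 0 < β - 1 := by linarith
  let dig : ℝ → ℕ := fun u => min m ⌊β * u⌋₊
  let orb : ℕ → ℝ := fun i => (fun u => β * u - dig u)^[i] z
  have hsucc : ∀ i, orb (i + 1) = β * orb i - dig (orb i) := fun i =>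
    Function.iterate_succ_apply' _ _ _
  have hinv : ∀ i, 0 ≤ orb i ∧ orb i ≤ m / (β - 1) := by
    intro i
    induction i with
    | zero => exact ⟨hz0, hz⟩
    | succ i ih =>
      obtain ⟨hl, hu⟩ := ih
      have hb : 0 ≤ β * orb i := by positivity
      have hfl := Nat.floor_le hb
      have hlt := Nat.lt_floor_add_one (β * orb i)
      have h1m : 1 ≤ m / (β - 1) := by rw [le_div_iff₀ h1]; linarith
      rw [hsucc]
      rcases le_total m ⌊β * orb i⌋₊ with h | h
      · have hd : dig (orb i) = m := min_eq_left h
        have hm : (m : ℝ) ≤ ⌊β * orb i⌋₊ := by exact_mod_cast h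
        rw [hd]
        refine ⟨by linarith, ?_⟩
        rw [le_div_iff₀ h1] at hu ⊢
        nlinarith
      · have hd : dig (orb i) = ⌊β * orb i⌋₊ := min_eq_right h
        rw [hd]
        exact ⟨by linarith, by linarith⟩
  refine ⟨fun i => dig (orb i), fun i => min_le_left _ _, ?_⟩
  exact valSeq_eq_of_orbit hβ (m := m) (fun i => min_le_left _ _) (fun i => (hinv i).1)
    (fun i => (hinv i).2) hsucc 0

lemma valSeq_strictAnti {γ : ℝ} (hβ : 1 < β) (hβγ : β < γ) (hx : ∀ i, x i ≤ m) {i : ℕ}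
    (hi : 0 < x i) : valSeq γ x < valSeq β x := by
  have h0 : (0 : ℝ) < β := by linarith
  refine (summable_digits (hβ.trans hβγ) hx).tsum_lt_tsum (i := i) (fun j => ?_) ?_
    (summable_digits hβ hx)
  · gcongr
  · have : (0 : ℝ) < x i := by exact_mod_cast hi
    gcongr

lemma continuousOn_valSeq {a : ℝ} (ha : 1 < a) (hx : ∀ i, x i ≤ m) :
    ContinuousOn (fun β => valSeq β x) (Ici a) := by
  have h0 : (0 : ℝ) < a := by linarith
  unfold valSeq
  refine continuousOn_tsum (fun i => ?_) (summable_digits ha hx) fun i β hβ => ?_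
  · refine continuousOn_const.div (continuousOn_id.pow _) fun β hβ => ?_
    have : 0 < β := h0.trans_le hβ
    positivity
  · have hβ' : a ≤ β := hβ
    have : 0 < β := h0.trans_le hβ
    rw [Real.norm_of_nonneg (by positivity)]
    gcongr

/-- A bounded sequence with two nonzero digits is an expansion of `1` in some base. -/
lemma exists_base (hx : ∀ i, x i ≤ m) {p : ℕ} (hp : 0 < p) (h0 : 0 < x 0) (hxp : 0 < x p) :
    ∃ β : ℝ, 1 < β ∧ β ≤ m + 1 ∧ valSeq β x = 1 := by
  set a : ℝ := 2 ^ (1 / ((p : ℝ) + 1)) with ha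
  have hp1 : (0 : ℝ) < p + 1 := by positivity
  have ha1 : 1 < a := Real.one_lt_rpow (by norm_num) (by positivity)
  have ha0 : 0 < a := by linarith
  have hap : a ^ (p + 1) = 2 := by
    rw [ha, ← Real.rpow_natCast, ← Real.rpow_mul (by norm_num)]
    push_cast
    rw [one_div_mul_cancel hp1.ne', Real.rpow_one]
  have hm : (1 : ℝ) ≤ m := by exact_mod_cast h0.trans_le (hx 0)
  have ham : a ≤ m + 1 := by
    have : a ≤ a ^ (p + 1) := le_self_pow₀ ha1.le (by omega)
    linarith
  have hlow : valSeq (m + 1) x ≤ 1 := by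
    refine (valSeq_le (by linarith) hx).trans ?_
    simp [div_self (by linarith : (m : ℝ) ≠ 0)]
  have hhigh : 1 ≤ valSeq a x := by
    have hs := (summable_digits ha1 hx).sum_le_tsum {0, p} fun i _ => by positivity
    refine le_trans ?_ hs
    rw [Finset.sum_pair hp.ne]
    have e0 : (1 : ℝ) ≤ x 0 := by exact_mod_cast h0
    have ep : (1 : ℝ) ≤ x p := by exact_mod_cast hxp
    have e1 : (1 : ℝ) / 2 ≤ x 0 / a ^ (0 + 1) := by
      rw [← hap]
      have : a ^ (0 + 1) ≤ a ^ (p + 1) := pow_le_pow_right₀ ha1.le (by omega)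
      gcongr
    have e2 : (1 : ℝ) / 2 ≤ x p / a ^ (p + 1) := by
      rw [← hap]
      gcongr
    linarith
  obtain ⟨β, hβ, h⟩ := intermediate_value_Icc' ham
    ((continuousOn_valSeq ha1 hx).mono Icc_subset_Ici_self) ⟨hlow, hhigh⟩
  exact ⟨β, ha1.trans_le hβ.1, hβ.2, h⟩

end Values

/-! ### Lexicographic comparison of prefixes -/

/-- Lexicographic order `≼` of the prefixes of length `n`. -/
def PrefixLe (n : ℕ) (x y : ℕ → ℕ) : Prop := ∀ j < n, (∀ i < j, x i = y i) → x j ≤ y j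

/-- Lexicographic order `≺` of the prefixes of length `n`. -/
def PrefixLt (n : ℕ) (x y : ℕ → ℕ) : Prop := ∃ j < n, (∀ i < j, x i = y i) ∧ x j < y j

section Lex

variable {n m : ℕ} {x y z : ℕ → ℕ}

lemma PrefixLe.agree_or_lt (h : PrefixLe n x y) : (∀ i < n, x i = y i) ∨ PrefixLt n x y := by
  by_cases hxy : ∀ i < n, x i = y i
  · exact Or.inl hxy
  · right
    push Not at hxy
    classical
    have hlt := (Nat.find_spec hxy).1
    have hne := (Nat.find_spec hxy).2
    have heq : ∀ i < Nat.find hxy, x i = y i := by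
      intro i hi
      by_contra hc
      exact Nat.find_min hxy hi ⟨hi.trans hlt, hc⟩
    exact ⟨_, hlt, heq, lt_of_le_of_ne (h _ hlt heq) hne⟩

lemma PrefixLt.prefixLe (h : PrefixLt n x y) : PrefixLe n x y := by
  obtain ⟨j, hj, heq, hlt⟩ := h
  intro k hk hagree
  rcases lt_trichotomy k j with hkj | rfl | hkj
  · exact (heq k hkj).le
  · exact hlt.le
  · exact absurd (hagree j hkj) hlt.ne

lemma prefixLe_or_prefixLt (n : ℕ) (x y : ℕ → ℕ) : PrefixLe n x y ∨ PrefixLt n y x := by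
  by_cases h : PrefixLe n x y
  · exact Or.inl h
  · right
    unfold PrefixLe at h
    push Not at h
    obtain ⟨j, hj, heq, hlt⟩ := h
    exact ⟨j, hj, fun i hi => (heq i hi).symm, hlt⟩

lemma PrefixLe.trans_lt (h : PrefixLe n x y) (h' : PrefixLt n y z) : PrefixLt n x z := by
  obtain ⟨j, hj, heq, hlt⟩ := h'
  rcases h.agree_or_lt with hag | ⟨k, hk, heq', hlt'⟩
  · exact ⟨j, hj, fun i hi => (hag i (by omega)).trans (heq i hi), by rw [hag j hj]; exact hlt⟩
  · rcases lt_trichotomy j k with hjk | rfl | hjk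
    · exact ⟨j, hj, fun i hi => (heq' i (by omega)).trans (heq i hi), by rw [heq' j hjk]; exact hlt⟩
    · exact ⟨j, hj, fun i hi => (heq' i hi).trans (heq i hi), hlt'.trans hlt⟩
    · exact ⟨k, hk, fun i hi => (heq' i hi).trans (heq i (by omega)), by
        rw [← heq k hjk]; exact hlt'⟩

lemma PrefixLt.refl (hy : ∀ i, y i ≤ m) (h : PrefixLt n x y) :
    PrefixLt n (refl m y) (refl m x) := by
  obtain ⟨j, hj, heq, hlt⟩ := h
  refine ⟨j, hj, fun i hi => by simp [KomornikLoreti.refl, heq i hi], ?_⟩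
  have := hy j
  simp only [KomornikLoreti.refl]
  omega

lemma refl_refl (hx : ∀ i, x i ≤ m) : refl m (refl m x) = x := by
  funext i
  have := hx i
  simp only [refl]
  omega

end Lex

/-! ### The generalized Thue–Morse sequence -/

/-- The quasi-greedy expansion of `1` in the Komornik–Loreti base for `{0, …, m}`, given by
its doubling recursion. -/
def lam (m : ℕ) (j : ℕ) : ℕ :=
  if h : j = 0 then m / 2 + 1
  else m - lam m (j - 2 ^ Nat.log 2 j) + if j + 1 = 2 ^ (Nat.log 2 j + 1) then 1 else 0
termination_by j
decreasing_by
  have : 0 < 2 ^ Nat.log 2 j := by positivity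
  omega

section Lam

variable {m : ℕ}

lemma lam_zero (m : ℕ) : lam m 0 = m / 2 + 1 := by
  rw [lam]
  simp

lemma lam_pow_add (m : ℕ) {n i : ℕ} (hi : i < 2 ^ n) :
    lam m (2 ^ n + i) = m - lam m i + if i + 1 = 2 ^ n then 1 else 0 := by
  have hpos : 0 < 2 ^ n := by positivity
  have hlog : Nat.log 2 (2 ^ n + i) = n :=
    Nat.log_eq_of_pow_le_of_lt_pow (by omega) (by rw [pow_succ]; omega)
  rw [lam, dif_neg (by omega), hlog, Nat.add_sub_cancel_left, pow_succ]
  congr 1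
  split_ifs <;> first | rfl | omega

lemma lam_pow_add_of_lt (m : ℕ) {n i : ℕ} (hi : i + 1 < 2 ^ n) :
    lam m (2 ^ n + i) = m - lam m i := by
  rw [lam_pow_add m (by omega), if_neg (by omega), add_zero]

lemma lam_pow_add_of_eq (m : ℕ) {n i : ℕ} (hi : i + 1 = 2 ^ n) :
    lam m (2 ^ n + i) = m - lam m i + 1 := by
  rw [lam_pow_add m (by omega), if_pos hi]

lemma one_le_lam (m : ℕ) {n i : ℕ} (hi : i + 1 = 2 ^ n) : 1 ≤ lam m i := by
  cases n with
  | zero =>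
    obtain rfl : i = 0 := by simpa using hi
    rw [lam_zero]
    omega
  | succ n =>
    have h2 : 2 ^ (n + 1) = 2 ^ n + 2 ^ n := by ring
    have hpos : 0 < 2 ^ n := by positivity
    obtain ⟨k, rfl⟩ : ∃ k, i = 2 ^ n + k := ⟨i - 2 ^ n, by omega⟩
    rw [lam_pow_add_of_eq m (by omega)]
    omega

lemma lam_le (hm : 1 ≤ m) (i : ℕ) : lam m i ≤ m := by
  induction i using Nat.strong_induction_on with
  | _ i ih =>
    rcases Nat.eq_zero_or_pos i with rfl | hi
    · rw [lam_zero]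
      omega
    · have h1 := Nat.pow_log_le_self 2 hi.ne'
      have h2 := Nat.lt_pow_succ_log_self (b := 2) (by norm_num) i
      obtain ⟨k, hk⟩ : ∃ k, i = 2 ^ Nat.log 2 i + k := ⟨i - 2 ^ Nat.log 2 i, by omega⟩
      have hpos : 0 < 2 ^ Nat.log 2 i := by positivity
      rw [pow_succ] at h2
      rw [hk, lam_pow_add m (by omega)]
      split_ifs with hlast
      · have := one_le_lam m hlast
        have := ih k (by omega)
        omega
      · omega

/-- The comparison of the shifts of `lam` with `lam` and its reflection inside a prefix whose
length is a power of two. -/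
lemma lam_prefix_bounds (hm : 1 ≤ m) (n : ℕ) : ∀ i, 0 < i → i < 2 ^ n →
    PrefixLt (2 ^ n - i) (refl m (lam m)) (shiftn i (lam m)) ∧
      PrefixLe (2 ^ n - i) (shiftn i (lam m)) (lam m) := by
  induction n with
  | zero => intro i h0 h1; simp at h1; omega
  | succ n ih =>
    intro i hi0 hi
    have h2 : 2 ^ (n + 1) = 2 ^ n + 2 ^ n := by ring
    rw [h2] at hi ⊢
    have hle := lam_le hm
    generalize hN : 2 ^ n = N at *
    have hrec_lt : ∀ k, k + 1 < N → lam m (N + k) = m - lam m k := by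
      intro k hk; rw [← hN]; exact lam_pow_add_of_lt m (by omega)
    have hrec_eq : ∀ k, k + 1 = N → lam m (N + k) = m - lam m k + 1 := by
      intro k hk; rw [← hN]; exact lam_pow_add_of_eq m (by omega)
    rcases lt_trichotomy i N with hiN | rfl | hiN
    · constructor
      · obtain ⟨⟨j, hj, h⟩, -⟩ := ih i hi0 hiN
        exact ⟨j, by omega, h⟩
      · intro j hj hagree
        by_cases hjN : j < N - i
        · exact (ih i hi0 hiN).2 j hjN hagree
        · obtain ⟨⟨k, hk, heq, hlt⟩, -⟩ := ih (N - i) (by omega) (by omega)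
          have hshift : ∀ q, q < i → shiftn i (lam m) (q + (N - i)) = m - lam m q := by
            intro q hq
            have : q + (N - i) + i = N + q := by omega
            simp only [shiftn, this]
            exact hrec_lt q (by omega)
          simp only [refl, shiftn] at heq hlt
          rcases lt_trichotomy (j - (N - i)) k with hjk | hjk | hjk
          · have e := hshift (j - (N - i)) (by omega)
            rw [show j - (N - i) + (N - i) = j by omega] at e
            rw [e, heq _ hjk, show j - (N - i) + (N - i) = j by omega]
          · have e := hshift k (by omega)
            rw [show k + (N - i) = j by omega] at e hlt
            rw [e]
            exact hlt.le
          · have e := hshift k (by omega)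
            rw [hagree _ (by omega)] at e
            omega
    · have hrec0 := lam_zero m
      constructor
      · refine ⟨i - 1, by omega, fun k hk => ?_, ?_⟩
        · have := hrec_lt k (by omega)
          simp only [refl, shiftn, add_comm k i, this]
        · have := hrec_eq (i - 1) (by omega)
          simp only [refl, shiftn, add_comm (i - 1) i, this]
          omega
      · intro j hj hagree
        rcases Nat.eq_zero_or_pos j with rfl | hj0
        · simp only [shiftn, zero_add]
          by_cases hi1 : i = 1
          · have := hrec_eq 0 (by omega)
            simp only [add_zero] at this
            omega
          · have := hrec_lt 0 (by omega)
            simp only [add_zero] at this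
            omega
        · have e := hagree 0 hj0
          simp only [shiftn, zero_add] at e
          have := hrec_lt 0 (by omega)
          simp only [add_zero] at this
          omega
    · obtain ⟨k, rfl⟩ : ∃ k, i = N + k := ⟨i - N, by omega⟩
      obtain ⟨⟨j, hj, heq, hlt⟩, hup⟩ := ih k (by omega) (by omega)
      simp only [refl, shiftn] at heq hlt
      have hsh : ∀ q, q + k + 1 < N → lam m (q + (N + k)) = m - lam m (q + k) := by
        intro q hq
        rw [show q + (N + k) = N + (q + k) by omega]
        exact hrec_lt _ hq
      have hsh_eq : ∀ q, q + k + 1 = N → lam m (q + (N + k)) = m - lam m (q + k) + 1 := by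
        intro q hq
        rw [show q + (N + k) = N + (q + k) by omega]
        exact hrec_eq _ hq
      constructor
      · rcases hup.agree_or_lt with hag | ⟨q, hq, hag, hqlt⟩
        · refine ⟨N - k - 1, by omega, fun r hr => ?_, ?_⟩
          · have := hag r (by omega)
            simp only [refl, shiftn] at this ⊢
            rw [hsh r (by omega), this]
          · have := hag (N - k - 1) (by omega)
            simp only [refl, shiftn] at this ⊢
            rw [hsh_eq _ (by omega), this]
            omega
        · refine ⟨q, by omega, fun r hr => ?_, ?_⟩
          · have := hag r hr
            simp only [refl, shiftn] at this ⊢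
            rw [hsh r (by omega), this]
          · simp only [refl, shiftn] at hqlt ⊢
            have := hle q
            by_cases hqe : q + k + 1 = N
            · rw [hsh_eq _ hqe]
              omega
            · rw [hsh _ (by omega)]
              omega
      · intro q hq hagree
        simp only [shiftn] at hagree ⊢
        have h1 := hle j
        have h2 := hle (j + k)
        rcases lt_trichotomy q j with hqj | rfl | hqj
        · have e := heq q hqj
          have := hle q
          rw [hsh _ (by omega)]
          omega
        · by_cases hqe : q + k + 1 = N
          · rw [hsh_eq _ hqe]
            omega
          · rw [hsh _ (by omega)]
            omega
        · have e := hagree j hqj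
          rw [hsh _ (by omega)] at e
          omega

lemma shiftn_lam_prefixLe (hm : 1 ≤ m) (i n : ℕ) : PrefixLe n (shiftn i (lam m)) (lam m) := by
  rcases Nat.eq_zero_or_pos i with rfl | hi
  · exact fun j _ _ => le_rfl
  · intro j hj h
    have hlt : i + j < 2 ^ (i + j) := Nat.lt_two_pow_self
    exact (lam_prefix_bounds hm (i + j) i hi (by omega)).2 j (by omega) h

lemma refl_lam_prefixLt (hm : 1 ≤ m) {i : ℕ} (hi : 0 < i) :
    ∃ n, PrefixLt n (refl m (lam m)) (shiftn i (lam m)) :=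
  ⟨_, (lam_prefix_bounds hm i i hi Nat.lt_two_pow_self).1⟩

lemma shiftn_lam_prefixLt (hm : 1 ≤ m) {i : ℕ} (hi : 0 < i) :
    ∃ n, PrefixLt n (shiftn i (lam m)) (lam m) := by
  have hlt : i < 2 ^ i := Nat.lt_two_pow_self
  refine ⟨2 ^ i, (shiftn_lam_prefixLe hm i _).agree_or_lt.resolve_left fun hag => ?_⟩
  obtain ⟨k, hk, -, hlt'⟩ := (lam_prefix_bounds hm i (2 ^ i - i) (by omega) (by omega)).1
  have e := hag (k + (2 ^ i - i)) (by omega)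
  have e' := lam_pow_add_of_lt m (n := i) (i := k) (by omega)
  simp only [shiftn, refl] at e hlt'
  rw [show k + (2 ^ i - i) + i = 2 ^ i + k by omega] at e
  omega

end Lam

/-! ### Sequences confined between `lam` and its reflection -/

section Confined

variable {m n : ℕ} {b : ℕ → ℕ}

lemma window_lam_succ
    (hup : ∀ i, PrefixLt (2 ^ (n + 1)) (shiftn i b) (lam m))
    (hlo : ∀ i, PrefixLt (2 ^ (n + 1)) (refl m (lam m)) (shiftn i b)) {i : ℕ}
    (hi : ∀ r < 2 ^ n, b (i + r) = lam m r) : ∀ r < 2 ^ n, b (i + 2 ^ n + r) = m - lam m r := by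
  have h2 : 2 ^ (n + 1) = 2 ^ n + 2 ^ n := by ring
  obtain ⟨j, hj, heq, hlt⟩ := hup i
  obtain ⟨k, hk, heq', hlt'⟩ := hlo (i + 2 ^ n)
  simp only [shiftn, refl] at heq hlt heq' hlt'
  have hjN : 2 ^ n ≤ j := by
    by_contra hc
    have := hi j (by omega)
    rw [add_comm] at this
    omega
  obtain ⟨q, rfl⟩ := Nat.exists_eq_add_of_le hjN
  have hbk : ∀ r, b (2 ^ n + r + i) = b (r + (i + 2 ^ n)) := fun r => by congr 1; omega
  have hrec := lam_pow_add m (n := n) (i := q) (by omega)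
  rw [hbk, hrec] at hlt
  have hqk : ¬ k ≤ q := by
    intro hkq
    rcases hkq.lt_or_eq with hkq | rfl
    · have e := heq (2 ^ n + k) (by omega)
      rw [hbk, lam_pow_add_of_lt m (by omega)] at e
      omega
    · split_ifs at hlt <;> omega
  have e := heq' q (by omega)
  split_ifs at hlt with hq
  · intro r hr
    rw [heq' r (by omega)]
    congr 1
    omega
  · omega

lemma refl_bounds (hm : 1 ≤ m) {N : ℕ} (hb : ∀ i, b i ≤ m)
    (hup : ∀ i, PrefixLt N (shiftn i b) (lam m))
    (hlo : ∀ i, PrefixLt N (refl m (lam m)) (shiftn i b)) :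
    (∀ i, PrefixLt N (shiftn i (refl m b)) (lam m)) ∧
      ∀ i, PrefixLt N (refl m (lam m)) (shiftn i (refl m b)) := by
  constructor
  · intro i
    have := (hlo i).refl (m := m) fun j => hb _
    rwa [refl_refl (lam_le hm)] at this
  · intro i
    exact (hup i).refl (m := m) (lam_le hm)

lemma window_refl_succ (hm : 1 ≤ m) (hb : ∀ i, b i ≤ m)
    (hup : ∀ i, PrefixLt (2 ^ (n + 1)) (shiftn i b) (lam m))
    (hlo : ∀ i, PrefixLt (2 ^ (n + 1)) (refl m (lam m)) (shiftn i b)) {i : ℕ}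
    (hi : ∀ r < 2 ^ n, b (i + r) = m - lam m r) : ∀ r < 2 ^ n, b (i + 2 ^ n + r) = lam m r := by
  intro r hr
  obtain ⟨hup', hlo'⟩ := refl_bounds hm hb hup hlo
  have := window_lam_succ hup' hlo' (i := i) (fun r hr => by
    have := lam_le hm r
    simp only [refl, hi r hr]
    omega) r hr
  have h1 := lam_le hm r
  have h2 := hb (i + 2 ^ n + r)
  simp only [refl] at this
  omega

lemma periodic_of_window_lam (hm : 1 ≤ m) (hb : ∀ i, b i ≤ m)
    (hup : ∀ i, PrefixLt (2 ^ (n + 1)) (shiftn i b) (lam m))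
    (hlo : ∀ i, PrefixLt (2 ^ (n + 1)) (refl m (lam m)) (shiftn i b)) {i : ℕ}
    (hi : ∀ r < 2 ^ n, b (i + r) = lam m r) (j : ℕ) (hj : i ≤ j) :
    b (j + 2 ^ (n + 1)) = b j := by
  have h2 : 2 ^ (n + 1) = 2 ^ n + 2 ^ n := by ring
  have key : ∀ k, ∀ r < 2 ^ n, b (i + 2 ^ (n + 1) * k + r) = lam m r := by
    intro k
    induction k with
    | zero => simpa using hi
    | succ k ih =>
      have := window_refl_succ hm hb hup hlo (window_lam_succ hup hlo ih)
      rw [mul_add, mul_one]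
      intro r hr
      rw [← this r hr]
      congr 1
      omega
  have key' : ∀ k, ∀ r < 2 ^ n, b (i + 2 ^ (n + 1) * k + 2 ^ n + r) = m - lam m r :=
    fun k => window_lam_succ hup hlo (key k)
  set k := (j - i) / 2 ^ (n + 1) with hk
  set r := (j - i) % 2 ^ (n + 1) with hr
  have hdiv : 2 ^ (n + 1) * k + r = j - i := Nat.div_add_mod _ _
  have hrlt : r < 2 ^ (n + 1) := Nat.mod_lt _ (by positivity)
  have hmul : 2 ^ (n + 1) * (k + 1) = 2 ^ (n + 1) * k + 2 ^ (n + 1) := by ring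
  by_cases hrN : r < 2 ^ n
  · have e1 := key k r hrN
    have e2 := key (k + 1) r hrN
    rw [show i + 2 ^ (n + 1) * k + r = j by omega] at e1
    rw [show i + 2 ^ (n + 1) * (k + 1) + r = j + 2 ^ (n + 1) by omega] at e2
    rw [e1, e2]
  · have e1 := key' k (r - 2 ^ n) (by omega)
    have e2 := key' (k + 1) (r - 2 ^ n) (by omega)
    rw [show i + 2 ^ (n + 1) * k + 2 ^ n + (r - 2 ^ n) = j by omega] at e1
    rw [show i + 2 ^ (n + 1) * (k + 1) + 2 ^ n + (r - 2 ^ n) = j + 2 ^ (n + 1) by omega] at e2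
    rw [e1, e2]

/-- Eventual periodicity of a sequence. -/
def EventuallyPeriodic (b : ℕ → ℕ) : Prop := ∃ i p, 0 < p ∧ ∀ j, i ≤ j → b (j + p) = b j

/-- A sequence confined strictly between the reflected and the original digit of `lam` is
constant. -/
lemma eq_half_of_bounds_one (hup : ∀ i, PrefixLt 1 (shiftn i b) (lam m))
    (hlo : ∀ i, PrefixLt 1 (refl m (lam m)) (shiftn i b)) (i : ℕ) : b i = m / 2 := by
  obtain ⟨j, hj, -, hlt⟩ := hup i
  obtain ⟨k, hk, -, hlt'⟩ := hlo i
  obtain rfl : j = 0 := by omega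
  obtain rfl : k = 0 := by omega
  simp only [shiftn, refl, zero_add, lam_zero] at hlt hlt'
  omega

lemma eventuallyPeriodic_of_bounds (hm : 1 ≤ m) (hb : ∀ i, b i ≤ m) (n : ℕ)
    (hup : ∀ i, PrefixLt (2 ^ n) (shiftn i b) (lam m))
    (hlo : ∀ i, PrefixLt (2 ^ n) (refl m (lam m)) (shiftn i b)) : EventuallyPeriodic b := by
  induction n with
  | zero =>
    have h := eq_half_of_bounds_one hup hlo
    exact ⟨0, 1, one_pos, fun j _ => by rw [h, h]⟩
  | succ n ih =>
    have h2 : 2 ^ (n + 1) = 2 ^ n + 2 ^ n := by ring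
    by_cases hw : ∃ i, ∀ r < 2 ^ n, b (i + r) = lam m r
    · obtain ⟨i, hi⟩ := hw
      exact ⟨i, 2 ^ (n + 1), by positivity, periodic_of_window_lam hm hb hup hlo hi⟩
    by_cases hw' : ∃ i, ∀ r < 2 ^ n, b (i + r) = m - lam m r
    · obtain ⟨i, hi⟩ := hw'
      exact ⟨i + 2 ^ n, 2 ^ (n + 1), by positivity,
        periodic_of_window_lam hm hb hup hlo (window_refl_succ hm hb hup hlo hi)⟩
    push Not at hw hw'
    refine ih (fun i => ?_) (fun i => ?_)
    · obtain ⟨j, hj, heq, hlt⟩ := hup i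
      refine ⟨j, ?_, heq, hlt⟩
      by_contra hc
      obtain ⟨r, hr, hne⟩ := hw i
      exact hne (by rw [add_comm]; exact heq r (by omega))
    · obtain ⟨j, hj, heq, hlt⟩ := hlo i
      refine ⟨j, ?_, heq, hlt⟩
      by_contra hc
      obtain ⟨r, hr, hne⟩ := hw' i
      exact hne (by rw [add_comm]; exact (heq r (by omega)).symm)

/-- Prefixes of `lam` do not occur in a sequence lying below `lam` and strictly above the
reflected prefix. -/
lemma prefixLt_lam_of_prefixLe (hup : ∀ i n, PrefixLe n (shiftn i b) (lam m))
    (hlo : ∀ i, PrefixLt (2 ^ n) (refl m (lam m)) (shiftn i b)) (i : ℕ) :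
    PrefixLt (2 ^ n) (shiftn i b) (lam m) := by
  refine (hup i _).agree_or_lt.resolve_left fun hag => ?_
  have h2 : 2 ^ (n + 1) = 2 ^ n + 2 ^ n := by ring
  have hpos : 0 < 2 ^ n := by positivity
  simp only [shiftn] at hag
  obtain ⟨j, hj, heq, hlt⟩ := hlo (i + 2 ^ n)
  simp only [shiftn, refl] at heq hlt
  have hbi : ∀ r, b (2 ^ n + r + i) = b (r + (i + 2 ^ n)) := fun r => by congr 1; omega
  have hag' : ∀ r < 2 ^ n + j, b (r + i) = lam m r := by
    intro r hr
    by_cases hrN : r < 2 ^ n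
    · exact hag r hrN
    · obtain ⟨q, rfl⟩ := Nat.exists_eq_add_of_le (not_lt.1 hrN)
      rw [hbi, lam_pow_add_of_lt m (by omega), heq q (by omega)]
  have hle := hup i (2 ^ n + j + 1) (2 ^ n + j) (by omega) hag'
  simp only [shiftn] at hle
  rw [hbi, lam_pow_add m hj] at hle
  split_ifs at hle with hlast
  · have hag2 : ∀ r < 2 ^ (n + 1), b (r + i) = lam m r := by
      intro r hr
      rcases (show r < 2 ^ n + j ∨ r = 2 ^ n + j by omega) with hr' | rfl
      · exact hag' r hr'
      · rw [hbi, lam_pow_add m hj, if_pos hlast]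
        omega
    obtain ⟨k, hk, heq2, hlt2⟩ := hlo (i + 2 ^ (n + 1))
    simp only [shiftn, refl] at heq2 hlt2
    have hbi2 : ∀ r, b (2 ^ (n + 1) + r + i) = b (r + (i + 2 ^ (n + 1))) :=
      fun r => by congr 1; omega
    have hle2 := hup i (2 ^ (n + 1) + k + 1) (2 ^ (n + 1) + k) (by omega) (fun r hr => by
      simp only [shiftn]
      by_cases hrN : r < 2 ^ (n + 1)
      · exact hag2 r hrN
      · obtain ⟨q, rfl⟩ := Nat.exists_eq_add_of_le (not_lt.1 hrN)
        rw [hbi2, lam_pow_add_of_lt m (by omega), heq2 q (by omega)])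
    simp only [shiftn] at hle2
    rw [hbi2, lam_pow_add_of_lt m (by omega)] at hle2
    omega
  · omega

lemma countable_setOf_eventuallyPeriodic : {b | EventuallyPeriodic b}.Countable := by
  have : {b | EventuallyPeriodic b} ⊆
      range fun q : ℕ × ℕ × List ℕ => fun i : ℕ =>
        q.2.2.getD (if i < q.1 then i else q.1 + (i - q.1) % q.2.1) 0 := by
    rintro b ⟨i, p, hp, hb⟩
    refine ⟨(i, p, (List.range (i + p)).map b), ?_⟩
    have hper : ∀ k r, b (i + r + p * k) = b (i + r) := by
      intro k r
      induction k with
      | zero => simp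
      | succ k ih => rw [← ih, ← hb (i + r + p * k) (by omega)]; congr 1; ring
    funext j
    dsimp only
    have hget : ∀ k < i + p, ((List.range (i + p)).map b).getD k 0 = b k := by
      intro k hk
      simp [List.getD, hk]
    split_ifs with hj
    · exact hget j (by omega)
    · have hmod := Nat.mod_lt (j - i) hp
      have hdiv := Nat.mod_add_div (j - i) p
      rw [hget _ (by omega), ← hper ((j - i) / p)]
      congr 1
      omega
  exact (countable_range _).mono this

end Confined

/-! ### The base in which `lam` is an expansion of `1` -/

section Base

variable {m : ℕ} {β : ℝ}

lemma valSeq_sub_one_lt_of_prefixLt (hm : 1 ≤ m) (hβ : 1 < β) (hval : valSeq β (lam m) = 1)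
    {d : ℕ → ℕ} (hd : ∀ i, d i ≤ m) {n : ℕ} (h : PrefixLt n d (lam m)) :
    ∃ p, 1 ≤ p ∧ valSeq β d - 1 ≤
      (valSeq β (shiftn p d) - 1 - valSeq β (shiftn p (lam m))) / β ^ p := by
  obtain ⟨j, -, heq, hlt⟩ := h
  refine ⟨j + 1, by omega, ?_⟩
  have e := valSeq_sub_of_agree_digit hβ hd (lam_le hm) heq
  rw [hval] at e
  rw [e]
  have : (d j : ℝ) + 1 ≤ lam m j := by exact_mod_cast hlt
  have h0 : (0 : ℝ) < β := by linarith
  gcongr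
  linarith

lemma valSeq_shiftn_le_one (hm : 1 ≤ m) (hβ : 1 < β) (hval : valSeq β (lam m) = 1)
    {d : ℕ → ℕ} (hd : ∀ i, d i ≤ m) (h : ∀ i n, PrefixLe n (shiftn i d) (lam m)) (i : ℕ) :
    valSeq β (shiftn i d) ≤ 1 := by
  have h0 : (0 : ℝ) < β := by linarith
  refine sub_nonpos.1 (nonpos_of_expanding hβ (d := fun i => valSeq β (shiftn i d) - 1)
    (C := m / (β - 1)) (fun i => ?_) (fun i => ?_) i)
  · linarith [valSeq_le hβ (shiftn_le hd i)]
  · by_cases hlt : ∃ n, PrefixLt n (shiftn i d) (lam m)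
    · right
      obtain ⟨n, hn⟩ := hlt
      obtain ⟨p, hp, hle⟩ := valSeq_sub_one_lt_of_prefixLt hm hβ hval (shiftn_le hd i) hn
      refine ⟨p, hp, hle.trans ?_⟩
      rw [shiftn_shiftn, add_comm p i]
      have := valSeq_nonneg hβ (shiftn p (lam m))
      exact div_le_div_of_nonneg_right (by linarith) (by positivity)
    · left
      push Not at hlt
      have : shiftn i d = lam m := by
        funext k
        exact ((h i (k + 1)).agree_or_lt.resolve_right (hlt _)) k (by omega)
      simp only [this, hval, sub_self, le_refl]

lemma valSeq_shiftn_lam_le_one (hm : 1 ≤ m) (hβ : 1 < β) (hval : valSeq β (lam m) = 1) (i : ℕ) :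
    valSeq β (shiftn i (lam m)) ≤ 1 :=
  valSeq_shiftn_le_one hm hβ hval (lam_le hm) (shiftn_lam_prefixLe hm) i

lemma refl_shiftn_lam_prefixLt (hm : 1 ≤ m) (i : ℕ) :
    ∃ n, PrefixLt n (refl m (shiftn i (lam m))) (lam m) := by
  rcases Nat.eq_zero_or_pos i with rfl | hi
  · refine ⟨1, 0, one_pos, by simp, ?_⟩
    simp only [refl, shiftn_zero, lam_zero]
    omega
  · obtain ⟨n, hn⟩ := refl_lam_prefixLt hm hi
    have := hn.refl (m := m) (shiftn_le (lam_le hm) i)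
    rw [refl_refl (lam_le hm)] at this
    exact ⟨n, this⟩

lemma prefixLe_of_exists_prefixLt {x y : ℕ → ℕ} (h : ∃ n, PrefixLt n x y) (k : ℕ) :
    PrefixLe k x y := by
  obtain ⟨n, j, hj, h⟩ := h
  have : PrefixLt (max k (j + 1)) x y := ⟨j, by omega, h⟩
  exact fun i hi => this.prefixLe i (by omega)

lemma valSeq_refl_shiftn_lam_le_one (hm : 1 ≤ m) (hβ : 1 < β) (hval : valSeq β (lam m) = 1)
    (i : ℕ) : valSeq β (refl m (shiftn i (lam m))) ≤ 1 := by
  rw [← shiftn_refl]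
  exact valSeq_shiftn_le_one hm hβ hval (refl_le m _)
    (fun i => prefixLe_of_exists_prefixLt (refl_shiftn_lam_prefixLt hm i)) i

lemma critical_le_valSeq_shiftn_lam (hm : 1 ≤ m) (hβ : 1 < β) (hval : valSeq β (lam m) = 1)
    (i : ℕ) : m / (β - 1) - 1 ≤ valSeq β (shiftn i (lam m)) := by
  have h := valSeq_refl_shiftn_lam_le_one hm hβ hval i
  rw [valSeq_refl hβ (shiftn_le (lam_le hm) i)] at h
  linarith

lemma valSeq_refl_lam (hm : 1 ≤ m) (hβ : 1 < β) (hval : valSeq β (lam m) = 1) :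
    valSeq β (refl m (lam m)) = m / (β - 1) - 1 := by
  rw [valSeq_refl hβ (lam_le hm), hval]

lemma critical_pos (hm : 1 ≤ m) (hβ : 1 < β) (hval : valSeq β (lam m) = 1) :
    0 < m / (β - 1) - 1 := by
  rw [← valSeq_refl_lam hm hβ hval]
  refine valSeq_pos hβ (refl_le m _) (i := 2) ?_
  have h := lam_pow_add_of_lt m (n := 1) (i := 0) (by norm_num)
  have h0 := lam_zero m
  have h1 := lam_le hm 0
  norm_num at h
  simp only [refl]
  omega

lemma critical_le_valSeq_refl_shiftn_lam (hm : 1 ≤ m) (hβ : 1 < β) (hval : valSeq β (lam m) = 1)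
    (i : ℕ) : m / (β - 1) - 1 ≤ valSeq β (refl m (shiftn i (lam m))) := by
  rw [valSeq_refl hβ (shiftn_le (lam_le hm) i)]
  linarith [valSeq_shiftn_lam_le_one hm hβ hval i]

lemma valSeq_shiftn_lam_pos (hm : 1 ≤ m) (hβ : 1 < β) (hval : valSeq β (lam m) = 1) (i : ℕ) :
    0 < valSeq β (shiftn i (lam m)) :=
  (critical_pos hm hβ hval).trans_le (critical_le_valSeq_shiftn_lam hm hβ hval i)

lemma valSeq_lt_one_of_prefixLt (hm : 1 ≤ m) (hβ : 1 < β) (hval : valSeq β (lam m) = 1)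
    {d : ℕ → ℕ} (hd : ∀ i, d i ≤ m) (hle : ∀ p, valSeq β (shiftn p d) ≤ 1)
    (h : ∃ n, PrefixLt n d (lam m)) : valSeq β d < 1 := by
  obtain ⟨n, hn⟩ := h
  obtain ⟨p, -, hlt⟩ := valSeq_sub_one_lt_of_prefixLt hm hβ hval hd hn
  have h0 : (0 : ℝ) < β := by linarith
  have : (valSeq β (shiftn p d) - 1 - valSeq β (shiftn p (lam m))) / β ^ p < 0 :=
    div_neg_of_neg_of_pos
      (by linarith [hle p, valSeq_shiftn_lam_pos hm hβ hval p]) (by positivity)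
  linarith

lemma valSeq_shiftn_lam_lt_one (hm : 1 ≤ m) (hβ : 1 < β) (hval : valSeq β (lam m) = 1) {i : ℕ}
    (hi : 0 < i) : valSeq β (shiftn i (lam m)) < 1 :=
  valSeq_lt_one_of_prefixLt hm hβ hval (shiftn_le (lam_le hm) i)
    (fun p => by rw [shiftn_shiftn]; exact valSeq_shiftn_lam_le_one hm hβ hval _)
    (shiftn_lam_prefixLt hm hi)

lemma critical_lt_valSeq_shiftn_lam (hm : 1 ≤ m) (hβ : 1 < β) (hval : valSeq β (lam m) = 1)
    (i : ℕ) : m / (β - 1) - 1 < valSeq β (shiftn i (lam m)) := by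
  have h := valSeq_lt_one_of_prefixLt hm hβ hval (refl_le m (shiftn i (lam m)))
    (fun p => by
      rw [shiftn_refl, shiftn_shiftn]
      exact valSeq_refl_shiftn_lam_le_one hm hβ hval _)
    (refl_shiftn_lam_prefixLt hm i)
  rw [valSeq_refl hβ (shiftn_le (lam_le hm) i)] at h
  linarith

lemma exists_first_ne {x y : ℕ → ℕ} (h : x ≠ y) : ∃ j, (∀ i < j, x i = y i) ∧ x j ≠ y j := by
  classical
  have h' := Function.ne_iff.1 h
  exact ⟨Nat.find h', fun i hi => not_not.1 (Nat.find_min h' hi), Nat.find_spec h'⟩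

/-- `lam` is the only expansion of `1`. -/
lemma eq_lam_of_valSeq_eq_one (hm : 1 ≤ m) (hβ : 1 < β) (hval : valSeq β (lam m) = 1)
    {c : ℕ → ℕ} (hc : ∀ i, c i ≤ m) (hc1 : valSeq β c = 1) : c = lam m := by
  by_contra hne
  obtain ⟨j, heq, hj⟩ := exists_first_ne hne
  have h0 : (0 : ℝ) < β := by linarith
  have e := valSeq_sub_of_agree_digit hβ hc (lam_le hm) heq
  rw [hval, hc1, sub_self, eq_comm, div_eq_zero_iff] at e
  have e := e.resolve_right (by positivity)
  rcases Nat.lt_or_gt_of_ne hj with hlt | hlt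
  · have hlt' : (c j : ℝ) + 1 ≤ lam m j := by exact_mod_cast hlt
    linarith [valSeq_le hβ (shiftn_le hc (j + 1)),
      critical_lt_valSeq_shiftn_lam hm hβ hval (j + 1)]
  · have hlt' : (lam m j : ℝ) + 1 ≤ c j := by exact_mod_cast hlt
    linarith [valSeq_nonneg hβ (shiftn (j + 1) c),
      valSeq_shiftn_lam_lt_one hm hβ hval (show 0 < j + 1 by omega)]

/-- Changing the digit at position `k` of a unique expansion leads to a contradiction. -/
lemma digit_eq_of_unique {γ : ℝ} (hγ : 1 < γ) {c : ℕ → ℕ} (hc : ∀ i, c i ≤ m)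
    (huniq : ∀ c' : ℕ → ℕ, (∀ i, c' i ≤ m) → valSeq γ c' = valSeq γ c → c' = c)
    {k a : ℕ} (ha : a ≤ m) {e : ℕ → ℕ} (he : ∀ i, e i ≤ m)
    (hval : (a : ℝ) + valSeq γ e = c k + valSeq γ (shiftn (k + 1) c)) : a = c k := by
  have h0 : (0 : ℝ) < γ := by linarith
  let c' : ℕ → ℕ := fun i => if i < k then c i else if i = k then a else e (i - (k + 1))
  have hc' : ∀ i, c' i ≤ m := by
    intro i
    simp only [c']
    split_ifs
    exacts [hc i, ha, he _]
  have hk : c' k = a := by simp [c']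
  have hs : shiftn (k + 1) c' = e := by
    funext i
    simp only [shiftn, c']
    rw [if_neg (by omega), if_neg (by omega)]
    congr 1
    omega
  have hd := valSeq_sub_of_agree_digit hγ hc' hc (p := k) fun i hi => by simp [c', hi]
  rw [hs, hk] at hd
  have := huniq c' hc' (by
    rw [← sub_eq_zero, hd, div_eq_zero_iff]
    left
    linarith)
  rw [← hk, this]

lemma le_of_unique_expansion (hm : 1 ≤ m) (hβ : 1 < β) (hβm : β ≤ m + 1)
    (hval : valSeq β (lam m) = 1) {γ : ℝ} (hγ : 1 < γ) {c : ℕ → ℕ} (hc : ∀ i, c i ≤ m)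
    (hc1 : valSeq γ c = 1) (huniq : ∀ c' : ℕ → ℕ, (∀ i, c' i ≤ m) → valSeq γ c' = 1 → c' = c) :
    β ≤ γ := by
  by_contra! hγβ
  have h0 : (0 : ℝ) < γ := by linarith
  have hγ1 : 0 < γ - 1 := by linarith
  have huniq' : ∀ c' : ℕ → ℕ, (∀ i, c' i ≤ m) → valSeq γ c' = valSeq γ c → c' = c :=
    fun c' h h' => huniq c' h (h'.trans hc1)
  set v : ℕ → ℝ := fun i => valSeq γ (shiftn i c) with hv
  have hv0 : v 0 = 1 := hc1
  have hvle : ∀ i, v i ≤ m / (γ - 1) := fun i => valSeq_le hγ (shiftn_le hc i)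
  have hvnn : ∀ i, 0 ≤ v i := fun i => valSeq_nonneg hγ _
  have hrec : ∀ i, v (i + 1) = γ * v i - c i := by
    intro i
    have := valSeq_eq_cons hγ (shiftn_le hc i)
    rw [shiftn_shiftn, add_comm 1 i, eq_div_iff h0.ne'] at this
    simp only [shiftn, zero_add] at this
    simp only [hv]
    linarith
  have hup : ∀ i, c i < m → v (i + 1) < 1 := by
    intro i hi
    by_contra! hge
    obtain ⟨e, he, hev⟩ := exists_expansion (m := m) hγ (by linarith) (z := v (i + 1) - 1)
      (by linarith) (by linarith [hvle (i + 1)])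
    have := digit_eq_of_unique hγ hc huniq' (k := i) (a := c i + 1) hi he (by
      rw [hev]; push_cast; simp only [hv]; ring)
    omega
  have hlow : ∀ i, 0 < c i → m / (γ - 1) - 1 < v (i + 1) := by
    intro i hi
    by_contra! hge
    obtain ⟨e, he, hev⟩ := exists_expansion (m := m) hγ (by linarith) (z := v (i + 1) + 1)
      (by linarith [hvnn (i + 1)]) (by linarith)
    have := digit_eq_of_unique hγ hc huniq' (k := i) (a := c i - 1) (by have := hc i; omega) he (by
      rw [hev, Nat.cast_sub hi]; simp only [hv]; push_cast; ring)
    omega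
  have hlt_one : ∀ i, v i ≤ 1 ∧ v (i + 1) < 1 := by
    have step : ∀ i, v i ≤ 1 → v (i + 1) < 1 := by
      intro i hi
      rcases (hc i).lt_or_eq with h | h
      · exact hup i h
      · rw [hrec, h]
        nlinarith
    intro i
    induction i with
    | zero => exact ⟨hv0.le, step _ hv0.le⟩
    | succ i ih => exact ⟨ih.2.le, step _ ih.2.le⟩
  have hc0 : 0 < c 0 := by
    by_contra h
    have h00 : c 0 = 0 := by omega
    have := (hlt_one 0).2
    rw [hrec, h00, hv0] at this
    norm_num at this
    linarith
  have hr1 : m / (γ - 1) - 1 < 1 := (hlow 0 hc0).trans (hlt_one 0).2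
  have hgt : ∀ i, m / (γ - 1) - 1 < v i := by
    intro i
    induction i with
    | zero => rw [hv0]; exact hr1
    | succ i ih =>
      rcases Nat.eq_zero_or_pos (c i) with h | h
      · have hrr := hrec i
        rw [h] at hrr
        have := hvnn i
        push_cast at hrr
        nlinarith
      · exact hlow i h
  have hlexup : ∀ i n, PrefixLe n (shiftn i c) c := by
    intro i n j _ hag
    by_contra! hlt
    have hd := valSeq_sub_of_agree_digit hγ (shiftn_le hc i) hc hag
    rw [shiftn_shiftn, hc1] at hd
    have hlt' : (c j : ℝ) + 1 ≤ shiftn i c j := by exact_mod_cast hlt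
    have h1 := (hlt_one j).2
    have h2 := hvnn (j + 1 + i)
    have h3 := (hlt_one i).1
    simp only [hv] at h1 h2 h3
    have : 0 < (shiftn i c j - c j + valSeq γ (shiftn (j + 1 + i) c) -
        valSeq γ (shiftn (j + 1) c)) / γ ^ (j + 1) := div_pos (by linarith) (by positivity)
    linarith
  have hlexlo : ∀ i n, PrefixLe n (refl m (shiftn i c)) c := by
    intro i n j _ hag
    by_contra! hlt
    have hd := valSeq_sub_of_agree_digit hγ (refl_le m (shiftn i c)) hc hag
    rw [shiftn_refl, shiftn_shiftn, hc1, valSeq_refl hγ (shiftn_le hc i),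
      valSeq_refl hγ (shiftn_le hc (j + 1 + i))] at hd
    have hlt' : (c j : ℝ) + 1 ≤ refl m (shiftn i c) j := by exact_mod_cast hlt
    have h1 := (hlt_one j).2
    have h2 := hvle (j + 1 + i)
    have h3 := hgt i
    simp only [hv] at h1 h2 h3
    have : 0 < (refl m (shiftn i c) j - c j + (m / (γ - 1) - valSeq γ (shiftn (j + 1 + i) c)) -
        valSeq γ (shiftn (j + 1) c)) / γ ^ (j + 1) := div_pos (by linarith) (by positivity)
    linarith
  have hval_lt : valSeq β c < 1 := by
    rw [← hc1]
    exact valSeq_strictAnti hγ hγβ hc hc0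
  have hne : c ≠ lam m := by
    rintro rfl
    linarith
  obtain ⟨j, heq, hj⟩ := exists_first_ne hne
  have hjlt : c j < lam m j := by
    refine lt_of_le_of_ne ?_ hj
    by_contra! hlt
    have hd := valSeq_sub_of_agree_digit hβ hc (lam_le hm) heq
    have hlt' : (lam m j : ℝ) + 1 ≤ c j := by exact_mod_cast hlt
    have : 0 ≤ (c j - lam m j + valSeq β (shiftn (j + 1) c) -
        valSeq β (shiftn (j + 1) (lam m))) / β ^ (j + 1) :=
      div_nonneg (by linarith [valSeq_nonneg hβ (shiftn (j + 1) c),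
        valSeq_shiftn_lam_le_one hm hβ hval (j + 1)]) (by positivity)
    linarith
  have hltN : ∀ N, j < N → (∀ i, PrefixLt N (shiftn i c) (lam m)) ∧
      ∀ i, PrefixLt N (refl m (lam m)) (shiftn i c) := by
    intro N hN
    have hcl : PrefixLt N c (lam m) := ⟨j, hN, heq, hjlt⟩
    refine ⟨fun i => (hlexup i N).trans_lt hcl, fun i => ?_⟩
    have := ((hlexlo i N).trans_lt hcl).refl (m := m) (lam_le hm)
    rwa [refl_refl (shiftn_le hc i)] at this
  have hperiod : ∀ p, 0 < p → shiftn p c ≠ c := by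
    rintro (_ | p) hp h
    · omega
    · have h1 := (hlt_one p).2
      simp only [hv] at h1
      rw [h, hc1] at h1
      exact lt_irrefl _ h1
  rcases Nat.eq_zero_or_pos j with rfl | hjpos
  · obtain ⟨h1, h2⟩ := hltN 1 one_pos
    have h := eq_half_of_bounds_one h1 h2
    exact hperiod 1 one_pos (by funext i; rw [shiftn, h, h])
  · have hl1 := Nat.pow_log_le_self 2 hjpos.ne'
    have hl2 := Nat.lt_pow_succ_log_self (b := 2) (by norm_num) j
    obtain ⟨h1, h2⟩ := hltN _ hl2
    refine hperiod (2 ^ (Nat.log 2 j + 1)) (by positivity) ?_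
    funext i
    exact periodic_of_window_lam hm hc h1 h2 (i := 0)
      (fun r hr => by rw [zero_add]; exact heq r (by omega)) i (by omega)

lemma exists_base_lam (hm : 1 ≤ m) : ∃ β : ℝ, 1 < β ∧ β ≤ m + 1 ∧ valSeq β (lam m) = 1 :=
  exists_base (lam_le hm) one_pos (one_le_lam m (n := 0) rfl) (one_le_lam m (n := 1) rfl)

lemma klConst_spec (hm : 1 ≤ m) :
    1 < klConst m ∧ klConst m ≤ m + 1 ∧ valSeq (klConst m) (lam m) = 1 := by
  obtain ⟨β, hβ, hβm, hval⟩ := exists_base_lam hm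
  have hleast : IsLeast {β : ℝ | 1 < β ∧ ∃! c : ℕ → ℕ, (∀ i, c i ≤ m) ∧ valSeq β c = 1} β := by
    refine ⟨⟨hβ, lam m, ⟨lam_le hm, hval⟩, fun c hc =>
      eq_lam_of_valSeq_eq_one hm hβ hval hc.1 hc.2⟩, ?_⟩
    rintro γ ⟨hγ, c, ⟨hc, hc1⟩, huniq⟩
    exact le_of_unique_expansion hm hβ hβm hval hγ hc hc1 fun c' h h' => huniq c' ⟨h, h'⟩
  have : klConst m = β := hleast.csInf_eq
  rw [this]
  exact ⟨hβ, hβm, hval⟩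

end Base

/-! ### Words -/

section Words

/-- The prefix of length `n` of a sequence. -/
def word (n : ℕ) (f : ℕ → ℕ) : List ℕ := (List.range n).map f

variable {n k : ℕ} {f g h : ℕ → ℕ}

lemma length_word (n : ℕ) (f : ℕ → ℕ) : (word n f).length = n := by simp [word]

lemma getD_word {i : ℕ} (hi : i < n) : (word n f).getD i 0 = f i := by
  simp [word, List.getD, hi]

lemma word_congr (h : ∀ i < n, f i = g i) : word n f = word n g :=
  List.map_congr_left fun i hi => h i (List.mem_range.1 hi)

lemma word_succ (n : ℕ) (f : ℕ → ℕ) : word (n + 1) f = word n f ++ [f n] := by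
  simp [word, List.range_succ]

lemma word_append (hf : ∀ i < n, h i = f i) (hg : ∀ i < k, h (n + i) = g i) :
    word n f ++ word k g = word (n + k) h := by
  rw [word, word, word, List.range_add, List.map_append, List.map_map]
  exact congrArg₂ _ (word_congr hf).symm (word_congr (g := g) (n := k) hg).symm

lemma wplus_word (hn : 1 ≤ n) :
    wplus (word n f) = word n fun i => f i + if i + 1 = n then 1 else 0 := by
  obtain ⟨n, rfl⟩ : ∃ k, n = k + 1 := ⟨n - 1, by omega⟩
  rw [word_succ, word_succ, wplus, List.dropLast_concat]
  refine congrArg₂ _ (word_congr fun i hi => ?_) ?_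
  · rw [if_neg (by omega), add_zero]
  · simp [List.getLast!_eq_getLast?_getD]

lemma wminus_word (hn : 1 ≤ n) :
    wminus (word n f) = word n fun i => f i - if i + 1 = n then 1 else 0 := by
  obtain ⟨n, rfl⟩ : ∃ k, n = k + 1 := ⟨n - 1, by omega⟩
  rw [word_succ, word_succ, wminus, List.dropLast_concat]
  refine congrArg₂ _ (word_congr fun i hi => ?_) ?_
  · rw [if_neg (by omega), Nat.sub_zero]
  · simp [List.getLast!_eq_getLast?_getD]

lemma rotate_word (k : ℕ) : (word n f).rotate k = word n fun i => f ((i + k) % n) := by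
  refine List.ext_getElem (by simp [word]) fun i h1 h2 => ?_
  rw [List.getElem_rotate]
  simp [word]

lemma word_le_word (h : PrefixLe n f g) : word n f ≤ word n g := by
  induction n generalizing f g with
  | zero => simp [word]
  | succ n ih =>
    have e : ∀ f : ℕ → ℕ, word (n + 1) f = f 0 :: word n (fun i => f (i + 1)) := by
      intro f
      simp [word, List.range_succ_eq_map]
    rw [e, e]
    rcases (h 0 (by omega) (by simp)).lt_or_eq with h0 | h0
    · exact le_of_lt (List.Lex.rel h0)
    · have htail : word n (fun i => f (i + 1)) ≤ word n fun i => g (i + 1) := by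
        refine ih fun j hj hag => h (j + 1) (by omega) fun i hi => ?_
        rcases i with _ | i
        · exact h0
        · exact hag i (by omega)
      rw [h0]
      rcases htail.lt_or_eq with hlt | heq
      · exact le_of_lt (List.Lex.cons hlt)
      · rw [heq]

lemma foldl_max_le {l : List (List ℕ)} {a b : List ℕ} (hb : b ≤ a) (h : ∀ x ∈ l, x ≤ a) :
    l.foldl max b ≤ a := by
  induction l generalizing b with
  | nil => exact hb
  | cons x l ih =>
    exact ih (max_le hb (h x (by simp))) fun y hy => h y (by simp [hy])

lemma le_foldl_max {l : List (List ℕ)} {a b : List ℕ} (h : a ≤ b ∨ a ∈ l) :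
    a ≤ l.foldl max b := by
  induction l generalizing b with
  | nil => simpa using h
  | cons x l ih =>
    refine ih ?_
    rcases h with h | h
    · exact Or.inl (h.trans (le_max_left _ _))
    · rcases List.mem_cons.1 h with rfl | h
      · exact Or.inl (le_max_right _ _)
      · exact Or.inr h

lemma maxCyc_eq {w a : List ℕ} (hle : ∀ i, w.rotate i ≤ a) (hk : k < w.length)
    (ha : w.rotate k = a) : maxCyc w = a := by
  refine le_antisymm (foldl_max_le (not_lt.1 (List.not_lt_nil a)) ?_) (le_foldl_max (Or.inr ?_))
  · intro x hx
    obtain ⟨i, -, rfl⟩ := List.mem_map.1 hx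
    exact hle i
  · exact List.mem_map.2 ⟨k, List.mem_range.2 hk, ha⟩

lemma perSeq_word (hn : 1 ≤ n) (i : ℕ) : perSeq (word n f) i = f (i % n) := by
  rw [perSeq, length_word, getD_word (Nat.mod_lt _ hn)]

lemma shiftn_perSeq_word (hn : 1 ≤ n) : shiftn n (perSeq (word n f)) = perSeq (word n f) := by
  funext i
  rw [shiftn, perSeq_word hn, perSeq_word hn, Nat.add_mod_right]

lemma subst_zero_one (s : List ℕ) : subst s [0, 1] = wminus s ++ wplus (maxCyc s) := by
  simp [subst, phiAux, phiBlock]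

end Words

/-! ### The renormalization intervals containing the base -/

section Intervals

variable {m n : ℕ}

/-- The word `λ_N ⋯ λ_{2N-1}` with `N = 2 ^ n`. -/
def renormWord (m n : ℕ) : List ℕ := word (2 ^ n) fun i => lam m (2 ^ n + i)

/-- The word `(λ_0 ⋯ λ_{N-1})⁻` with `N = 2 ^ n`. -/
def renormMax (m n : ℕ) : List ℕ :=
  word (2 ^ n) fun i => lam m i - if i + 1 = 2 ^ n then 1 else 0

lemma lam_two_mul_pow_add (m : ℕ) {i : ℕ} (hi : i < 2 ^ n) :
    lam m (2 ^ (n + 1) + i) = m - lam m i :=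
  lam_pow_add_of_lt m (by have := Nat.one_le_two_pow (n := n); rw [pow_succ]; omega)

lemma lam_three_mul_pow_add (hm : 1 ≤ m) {i : ℕ} (hi : i < 2 ^ n) :
    lam m (2 ^ (n + 1) + (2 ^ n + i)) = lam m i := by
  have h1 := lam_pow_add m (n := n + 1) (i := 2 ^ n + i) (by rw [pow_succ]; omega)
  have h2 := lam_pow_add m hi
  have h3 := lam_le hm i
  by_cases h : i + 1 = 2 ^ n
  · have h4 := one_le_lam m h
    rw [if_pos (by rw [pow_succ]; omega)] at h1
    rw [if_pos h] at h2
    omega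
  · rw [if_neg (by rw [pow_succ]; omega)] at h1
    rw [if_neg h] at h2
    omega

lemma renormMax_rotate_le (hm : 1 ≤ m) (k : ℕ) : (renormMax m n).rotate k ≤ renormMax m n := by
  have hN : 1 ≤ 2 ^ n := Nat.one_le_two_pow
  have hlen : (renormMax m n).length = 2 ^ n := length_word _ _
  rw [← List.rotate_mod, hlen]
  have hkN := Nat.mod_lt k hN
  set r := k % 2 ^ n
  set N := 2 ^ n with hNdef
  rw [renormMax, ← hNdef, rotate_word]
  refine word_le_word fun j hj hag => ?_
  rcases Nat.eq_zero_or_pos r with h0 | h0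
  · rw [h0, add_zero, Nat.mod_eq_of_lt hj]
  have hag' : ∀ i < j, i + r + 1 < N → lam m (i + r) = lam m i := by
    intro i hi hir
    have := hag i hi
    rwa [Nat.mod_eq_of_lt (by omega), if_neg (by omega), if_neg (by omega)] at this
  rcases lt_trichotomy (j + r + 1) N with h | h | h
  · rw [Nat.mod_eq_of_lt (by omega), if_neg (by omega), if_neg (by omega)]
    exact shiftn_lam_prefixLe hm r (j + 1) j (by omega) fun i hi => hag' i hi (by omega)
  · have := shiftn_lam_prefixLe hm r (j + 1) j (by omega) fun i hi => hag' i hi (by omega)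
    rw [Nat.mod_eq_of_lt (by omega), if_pos (by omega), if_neg (by omega)]
    simp only [shiftn] at this
    omega
  · exfalso
    have hq : N - 1 - r + r = N - 1 := by omega
    have h1 := shiftn_lam_prefixLe hm r (N - 1 - r + 1) (N - 1 - r) (by omega)
      fun i hi => hag' i (by omega) (by omega)
    have h2 := hag (N - 1 - r) (by omega)
    have h3 : 1 ≤ lam m (N - 1) := one_le_lam m (n := n) (by omega)
    rw [hq, Nat.mod_eq_of_lt (by omega), if_pos (by omega), if_neg (by omega)] at h2
    simp only [shiftn, hq] at h1
    omega

lemma renormWord_eq_rotate (hm : 1 ≤ m) (hn : n = 0 → m % 2 = 0) :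
    renormWord m n = (renormMax m n).rotate (2 ^ (n - 1)) := by
  rcases n with _ | n
  · have h0 := lam_zero m
    have h1 := lam_pow_add_of_eq m (n := 0) (i := 0) (by norm_num)
    norm_num at h1
    have := hn rfl
    rw [renormWord, renormMax, rotate_word]
    refine word_congr fun i hi => ?_
    obtain rfl : i = 0 := by simpa using hi
    simp
    omega
  · rw [renormWord, renormMax, rotate_word, Nat.add_sub_cancel]
    have h2 : 2 ^ (n + 1) = 2 ^ n + 2 ^ n := by rw [pow_succ]; omega
    refine word_congr fun i hi => ?_
    by_cases h : i < 2 ^ n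
    · rw [lam_two_mul_pow_add m h, Nat.mod_eq_of_lt (by omega), add_comm i, lam_pow_add m h]
      split_ifs <;> omega
    · obtain ⟨r, rfl⟩ : ∃ r, i = 2 ^ n + r := ⟨i - 2 ^ n, by omega⟩
      rw [lam_three_mul_pow_add hm (by omega),
        show 2 ^ n + r + 2 ^ n = r + 2 ^ (n + 1) by omega, Nat.add_mod_right,
        Nat.mod_eq_of_lt (by omega), if_neg (by omega), Nat.sub_zero]

lemma maxCyc_renormWord (hm : 1 ≤ m) (hn : n = 0 → m % 2 = 0) :
    maxCyc (renormWord m n) = renormMax m n := by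
  have hN : 1 ≤ 2 ^ n := Nat.one_le_two_pow
  have hlen : (renormMax m n).length = 2 ^ n := length_word _ _
  rw [renormWord_eq_rotate hm hn]
  refine maxCyc_eq (k := 2 ^ n - 2 ^ (n - 1)) (fun i => ?_) ?_ ?_
  · rw [List.rotate_rotate]
    exact renormMax_rotate_le hm _
  · rw [List.length_rotate, hlen]
    have : 1 ≤ 2 ^ (n - 1) := Nat.one_le_two_pow
    omega
  · rw [List.rotate_rotate, Nat.add_sub_cancel' (Nat.pow_le_pow_right (by norm_num) (by omega)),
      ← hlen, List.rotate_length]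

lemma wplus_renormMax (m n : ℕ) : wplus (renormMax m n) = word (2 ^ n) (lam m) := by
  rw [renormMax, wplus_word Nat.one_le_two_pow]
  refine word_congr fun i hi => ?_
  split_ifs with h
  · have := one_le_lam m h
    omega
  · omega

lemma subst_renormWord (hm : 1 ≤ m) (hn : n = 0 → m % 2 = 0) :
    subst (renormWord m n) [0, 1] = renormWord m (n + 1) := by
  rw [subst_zero_one, maxCyc_renormWord hm hn, wplus_renormMax, renormWord,
    wminus_word Nat.one_le_two_pow, renormWord,
    show word (2 ^ (n + 1)) _ = word (2 ^ n + 2 ^ n) _ by rw [← two_mul, ← pow_succ']]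
  refine word_append (fun i hi => ?_) fun i hi => lam_three_mul_pow_add hm hi
  rw [lam_two_mul_pow_add m hi, lam_pow_add m hi]
  split_ifs <;> omega

lemma foldl_subst_renormWord (hm : 1 ≤ m) (hn : n = 0 → m % 2 = 0) (k : ℕ) :
    (List.replicate k [0, 1]).foldl subst (renormWord m n) = renormWord m (n + k) := by
  induction k generalizing n with
  | zero => rfl
  | succ k ih =>
    rw [List.replicate_succ, List.foldl_cons, subst_renormWord hm hn, ih (by omega)]
    congr 1
    omega

variable {β : ℝ}

lemma betaL_le (hm : 1 ≤ m) (hn : n = 0 → m % 2 = 0) (hβ : 1 < β)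
    (hval : valSeq β (lam m) = 1) : betaL (renormWord m n) ≤ β := by
  have h0 : (0 : ℝ) < β := by linarith
  have hN : 1 ≤ 2 ^ n := Nat.one_le_two_pow
  set N := 2 ^ n with hNdef
  set d := perSeq (renormMax m n) with hd
  have hdi : ∀ i, d i = lam m (i % N) - if i % N + 1 = N then 1 else 0 :=
    fun i => perSeq_word hN i
  have hdm : ∀ i, d i ≤ m := fun i => by
    rw [hdi]
    exact (Nat.sub_le _ _).trans (lam_le hm _)
  have hd0 : 0 < d 0 := by
    have h0 := lam_zero m
    rw [hdi, Nat.zero_mod]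
    split_ifs with h
    · have : n = 0 := by
        by_contra hne
        have := Nat.one_lt_two_pow hne
        omega
      have := hn this
      omega
    · omega
  have hshift : shiftn N d = d := shiftn_perSeq_word hN
  have hle : valSeq β d ≤ 1 := by
    have e := valSeq_sub_of_agree_digit hβ hdm (lam_le hm) (p := N - 1) fun i hi => by
      rw [hdi, Nat.mod_eq_of_lt (by omega), if_neg (by omega), Nat.sub_zero]
    have hlast : d (N - 1) + 1 = lam m (N - 1) := by
      have := one_le_lam m (n := n) (i := N - 1) (by omega)
      rw [hdi, Nat.mod_eq_of_lt (by omega), if_pos (by omega)]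
      omega
    have hlast' : (d (N - 1) : ℝ) + 1 = lam m (N - 1) := by exact_mod_cast hlast
    rw [Nat.sub_add_cancel hN, hshift, hval, ← hlast', eq_div_iff (by positivity)] at e
    have hx := valSeq_shiftn_lam_pos hm hβ hval N
    have hpow : 1 < β ^ N := one_lt_pow₀ hβ (by omega)
    nlinarith
  have hex : ∃ γ : ℝ, 1 < γ ∧ valSeq γ (perSeq (maxCyc (renormWord m n))) = 1 := by
    rw [maxCyc_renormWord hm hn]
    obtain ⟨γ, h1, -, h2⟩ := exists_base hdm (p := N) (by omega) hd0 (by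
      rw [hdi, Nat.mod_self]; rwa [hdi, Nat.zero_mod] at hd0)
    exact ⟨γ, h1, h2⟩
  have h2 : valSeq (betaL (renormWord m n)) (perSeq (maxCyc (renormWord m n))) = 1 :=
    (Classical.epsilon_spec hex).2
  rw [maxCyc_renormWord hm hn] at h2
  by_contra! hlt
  have := valSeq_strictAnti hβ hlt hdm hd0
  linarith

lemma le_betaR (hm : 1 ≤ m) (hn : n = 0 → m % 2 = 0) (hβ : 1 < β)
    (hval : valSeq β (lam m) = 1) : β ≤ betaR (renormWord m n) := by
  have h0 : (0 : ℝ) < β := by linarith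
  have hN : 1 ≤ 2 ^ n := Nat.one_le_two_pow
  have hN2 : 2 ^ (n + 1) = 2 ^ n + 2 ^ n := by rw [pow_succ]; omega
  set N := 2 ^ n with hNdef
  set p := perSeq (renormWord m n) with hp
  set e := wordSeq (wplus (renormMax m n)) p with he
  have hpi : ∀ i, p i = lam m (N + i % N) := fun i => perSeq_word hN i
  have hpm : ∀ i, p i ≤ m := fun i => by rw [hpi]; exact lam_le hm _
  have hshift : shiftn N p = p := shiftn_perSeq_word hN
  have hlen : (wplus (renormMax m n)).length = N := by rw [wplus_renormMax, length_word]
  have he1 : ∀ i < N, e i = lam m i := by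
    intro i hi
    rw [he, wordSeq, hlen, if_pos hi, wplus_renormMax, getD_word hi]
  have he2 : ∀ i, e (i + N) = p i := by
    intro i
    rw [he, wordSeq, hlen, if_neg (by omega), Nat.add_sub_cancel]
  have hem : ∀ i, e i ≤ m := by
    intro i
    by_cases hi : i < N
    · rw [he1 i hi]
      exact lam_le hm _
    · obtain ⟨r, rfl⟩ : ∃ r, i = r + N := ⟨i - N, by omega⟩
      rw [he2]
      exact hpm _
  have hes : shiftn N e = p := funext he2
  have hv1 := valSeq_sub_of_agree hβ hem (lam_le hm) he1
  rw [hes, hval] at hv1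
  have hv2 := valSeq_sub_of_agree hβ hpm (shiftn_le (lam_le hm) N) (p := N) fun i hi => by
    rw [hpi, Nat.mod_eq_of_lt hi, shiftn, add_comm]
  rw [hshift, shiftn_shiftn] at hv2
  have hv3 := valSeq_sub_of_agree_digit hβ hpm (shiftn_le (lam_le hm) (N + N)) (p := N - 1)
    fun i hi => by
      rw [hpi, Nat.mod_eq_of_lt (by omega), shiftn, add_comm i, ← hN2,
        lam_two_mul_pow_add m (by omega), lam_pow_add_of_lt m (by omega)]
  have hlast : (p (N - 1) : ℝ) = shiftn (N + N) (lam m) (N - 1) + 1 := by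
    rw [hpi, Nat.mod_eq_of_lt (by omega), shiftn, add_comm (N - 1), ← hN2,
      lam_two_mul_pow_add m (by omega), lam_pow_add_of_eq m (by omega)]
    push_cast
    ring
  rw [Nat.sub_add_cancel hN, hshift, shiftn_shiftn, hlast] at hv3
  have hx := valSeq_shiftn_lam_le_one hm hβ hval (N + (N + N))
  have hpn := valSeq_nonneg hβ p
  have hge : 1 ≤ valSeq β e := by
    have h3 : 0 ≤ valSeq β p - valSeq β (shiftn (N + N) (lam m)) := by
      rw [hv3]
      exact div_nonneg (by linarith) (by positivity)
    have h2 : 0 ≤ valSeq β p - valSeq β (shiftn N (lam m)) := by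
      rw [hv2]
      positivity
    have h1 : 0 ≤ valSeq β e - 1 := by
      rw [hv1]
      positivity
    linarith
  have he0 : 0 < e 0 := by
    rw [he1 0 (by omega), lam_zero]
    omega
  have hex : ∃ γ : ℝ, 1 < γ ∧
      valSeq γ (wordSeq (wplus (maxCyc (renormWord m n))) (perSeq (renormWord m n))) = 1 := by
    rw [maxCyc_renormWord hm hn]
    obtain ⟨γ, h1, -, h2⟩ := exists_base hem (p := N - 1 + N) (by omega) he0 (by
      rw [he2, hpi, Nat.mod_eq_of_lt (by omega)]
      exact one_le_lam m (n := n + 1) (by omega))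
    exact ⟨γ, h1, h2⟩
  obtain ⟨h1, h2⟩ : 1 < betaR (renormWord m n) ∧ valSeq (betaR (renormWord m n))
      (wordSeq (wplus (maxCyc (renormWord m n))) (perSeq (renormWord m n))) = 1 :=
    Classical.epsilon_spec hex
  rw [maxCyc_renormWord hm hn] at h2
  by_contra! hlt
  have := valSeq_strictAnti h1 hlt hem he0
  linarith

lemma mem_Jint_renormWord (hm : 1 ≤ m) (hn : n = 0 → m % 2 = 0) (hβ : 1 < β)
    (hval : valSeq β (lam m) = 1) : β ∈ Jint (renormWord m n) :=
  ⟨betaL_le hm hn hβ hval, le_betaR hm hn hβ hval⟩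

end Intervals

/-! ### Coding -/

section Coding

variable {m : ℕ} {s₁ : List ℕ}

lemma zero_one_mem_FareySet : [0, 1] ∈ FareySet :=
  ⟨⟨1, by simp [fareyLevel, fareyInsert]⟩, by simp, by simp⟩

lemma theta_iterate (k : ℕ) (w : List ℕ) : theta^[k] w = w.map (· + k) := by
  induction k with
  | zero => simp
  | succ k ih =>
    rw [Function.iterate_succ_apply', ih, theta, List.map_map]
    rfl

lemma coding_mem_FareyExt (hm : 1 ≤ m)
    (hs₁ : s₁ = if m % 2 = 1 then [(m + 1) / 2 - 1, (m + 1) / 2] else [m / 2]) :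
    s₁ ∈ FareyExt := by
  split_ifs at hs₁ with h
  · refine ⟨[0, 1], Or.inl zero_one_mem_FareySet, (m + 1) / 2 - 1, ?_⟩
    rw [theta_iterate, hs₁]
    simp
    omega
  · refine ⟨[1], Or.inr rfl, m / 2 - 1, ?_⟩
    rw [theta_iterate, hs₁]
    simp
    omega

lemma coding_eq_renormWord (hm : 1 ≤ m)
    (hs₁ : s₁ = if m % 2 = 1 then [(m + 1) / 2 - 1, (m + 1) / 2] else [m / 2]) :
    s₁ = renormWord m (m % 2) := by
  have h0 := lam_zero m
  have h1 := lam_pow_add_of_eq m (n := 0) (i := 0) rfl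
  have h2 := lam_pow_add_of_lt m (n := 1) (i := 0) (by norm_num)
  have h3 := lam_pow_add_of_eq m (n := 1) (i := 1) (by norm_num)
  norm_num at h1 h2 h3
  split_ifs at hs₁ with h
  · rw [h, hs₁]
    simp [renormWord, word, List.range_succ]
    omega
  · have h : m % 2 = 0 := by omega
    rw [h, hs₁]
    simp [renormWord, word]
    omega

lemma mem_Jint_coding (hm : 1 ≤ m)
    (hs₁ : s₁ = if m % 2 = 1 then [(m + 1) / 2 - 1, (m + 1) / 2] else [m / 2]) (k : ℕ) :
    klConst m ∈ Jint ((List.replicate k [0, 1]).foldl subst s₁) := by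
  obtain ⟨hβ, -, hval⟩ := klConst_spec hm
  rw [coding_eq_renormWord hm hs₁, foldl_subst_renormWord hm id]
  exact mem_Jint_renormWord hm (by omega) hβ hval

lemma klConst_mem_Einf (hm : 1 ≤ m)
    (hs₁ : s₁ = if m % 2 = 1 then [(m + 1) / 2 - 1, (m + 1) / 2] else [m / 2]) :
    klConst m ∈ Einf := by
  refine mem_iInter₂.2 fun k _ => mem_iUnion₂.2
    ⟨_, ⟨s₁, coding_mem_FareyExt hm hs₁, List.replicate (k - 1) [0, 1], by simp, ?_, rfl⟩,
      mem_Jint_coding hm hs₁ (k - 1)⟩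
  intro r hr
  rw [List.eq_of_mem_replicate hr]
  exact zero_one_mem_FareySet

end Coding

/-! ### Survivor sets above the critical value -/

section Upper

variable {m : ℕ} {β t : ℝ}

lemma exists_two_pow_div_lt (hβ : 1 < β) {ε : ℝ} (hε : 0 < ε) :
    ∃ n : ℕ, 1 / β ^ 2 ^ n < ε := by
  obtain ⟨n, hn⟩ := exists_pow_lt_of_lt_one hε (inv_lt_one_of_one_lt₀ hβ)
  refine ⟨n, lt_of_le_of_lt ?_ hn⟩
  rw [inv_pow, ← one_div]
  have h0 : (0 : ℝ) < β := by linarith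
  have : n ≤ 2 ^ n := Nat.lt_two_pow_self.le
  gcongr
  exact hβ.le

/-- Greedy digits of a surviving point. -/
lemma exists_digits_of_mem_survivor (hβ : 1 < β) (hβm : β ≤ m + 1) {x : ℝ}
    (hx : x ∈ survivor β t) : ∃ b : ℕ → ℕ, (∀ i, b i ≤ m) ∧ valSeq β b = x ∧
      ∀ i, t ≤ valSeq β (shiftn i b) ∧ valSeq β (shiftn i b) < 1 := by
  obtain ⟨hx01, hxt⟩ := hx
  have h0 : (0 : ℝ) < β := by linarith
  set z : ℕ → ℝ := fun i => (Tbeta β)^[i] x with hz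
  have hzs : ∀ i, z (i + 1) = Int.fract (β * z i) := fun i =>
    Function.iterate_succ_apply' _ _ _
  have hz01 : ∀ i, 0 ≤ z i ∧ z i < 1 := by
    rintro (_ | i)
    · exact hx01
    · rw [hzs]
      exact ⟨Int.fract_nonneg _, Int.fract_lt_one _⟩
  have hnn : ∀ i, 0 ≤ β * z i := fun i => mul_nonneg h0.le (hz01 i).1
  have hbm : ∀ i, ⌊β * z i⌋₊ ≤ m := by
    intro i
    rw [← Nat.lt_add_one_iff, Nat.floor_lt (hnn i)]
    have := (hz01 i).2
    push_cast
    nlinarith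
  have hval := valSeq_eq_of_orbit hβ hbm (z := z) (fun i => (hz01 i).1) (fun i => (hz01 i).2.le)
    fun i => by rw [hzs, Int.fract, natCast_floor_eq_intCast_floor (hnn i)]
  refine ⟨fun i => ⌊β * z i⌋₊, hbm, hval 0, fun i => ?_⟩
  rw [hval]
  exact ⟨hxt i, (hz01 i).2⟩

lemma eventuallyPeriodic_of_critical_lt (hm : 1 ≤ m) (hβ : 1 < β) (hval : valSeq β (lam m) = 1)
    (ht : m / (β - 1) - 1 < t) {b : ℕ → ℕ} (hb : ∀ i, b i ≤ m)
    (hbt : ∀ i, t ≤ valSeq β (shiftn i b) ∧ valSeq β (shiftn i b) < 1) :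
    EventuallyPeriodic b := by
  have h0 : (0 : ℝ) < β := by linarith
  obtain ⟨n, hn⟩ := exists_two_pow_div_lt hβ (sub_pos.2 ht)
  have hup : ∀ i k, PrefixLe k (shiftn i b) (lam m) := by
    intro i k j _ hag
    by_contra! hlt
    have hd := valSeq_sub_of_agree_digit hβ (shiftn_le hb i) (lam_le hm) hag
    rw [hval] at hd
    have hlt' : (lam m j : ℝ) + 1 ≤ shiftn i b j := by exact_mod_cast hlt
    have : 0 ≤ (shiftn i b j - lam m j + valSeq β (shiftn (j + 1) (shiftn i b)) -
        valSeq β (shiftn (j + 1) (lam m))) / β ^ (j + 1) :=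
      div_nonneg (by linarith [valSeq_nonneg hβ (shiftn (j + 1) (shiftn i b)),
        valSeq_shiftn_lam_le_one hm hβ hval (j + 1)]) (by positivity)
    linarith [(hbt i).2]
  have hlo : ∀ i, PrefixLt (2 ^ n) (refl m (lam m)) (shiftn i b) := by
    intro i
    refine (prefixLe_or_prefixLt _ _ _).resolve_left fun hle => ?_
    have hti := (hbt i).1
    rcases hle.agree_or_lt with hag | ⟨j, -, hag, hlt⟩
    · have hd := valSeq_sub_of_agree hβ (shiftn_le hb i) (refl_le m (lam m)) hag
      rw [valSeq_refl_lam hm hβ hval, shiftn_shiftn] at hd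
      have h1 := (hbt (2 ^ n + i)).2
      have h2 := valSeq_nonneg hβ (shiftn (2 ^ n) (refl m (lam m)))
      have : (valSeq β (shiftn (2 ^ n + i) b) - valSeq β (shiftn (2 ^ n) (refl m (lam m)))) /
          β ^ 2 ^ n ≤ 1 / β ^ 2 ^ n :=
        div_le_div_of_nonneg_right (by linarith) (by positivity)
      linarith
    · have hd := valSeq_sub_of_agree_digit hβ (shiftn_le hb i) (refl_le m (lam m)) hag
      rw [valSeq_refl_lam hm hβ hval, shiftn_shiftn] at hd
      have hlt' : (shiftn i b j : ℝ) + 1 ≤ refl m (lam m) j := by exact_mod_cast hlt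
      have h1 := (hbt (j + 1 + i)).2
      have h2 := valSeq_nonneg hβ (shiftn (j + 1) (refl m (lam m)))
      have : (shiftn i b j - refl m (lam m) j + valSeq β (shiftn (j + 1 + i) b) -
          valSeq β (shiftn (j + 1) (refl m (lam m)))) / β ^ (j + 1) ≤ 0 :=
        div_nonpos_of_nonpos_of_nonneg (by linarith) (by positivity)
      linarith
  exact eventuallyPeriodic_of_bounds hm hb n (prefixLt_lam_of_prefixLe hup hlo) hlo

lemma dimH_survivor_eq_zero (hm : 1 ≤ m) (hβ : 1 < β) (hβm : β ≤ m + 1)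
    (hval : valSeq β (lam m) = 1) (ht : m / (β - 1) - 1 < t) : dimH (survivor β t) = 0 := by
  refine (countable_setOf_eventuallyPeriodic.image (valSeq β)).mono ?_ |>.dimH_zero
  intro x hx
  obtain ⟨b, hb, hbx, hbt⟩ := exists_digits_of_mem_survivor hβ hβm hx
  exact ⟨b, eventuallyPeriodic_of_critical_lt hm hβ hval ht hb hbt, hbx⟩

end Upper

/-! ### Positive dimension from separated codings -/

section Dimension

lemma holderOnWith_of_abs_sub_le {f : ℝ → ℝ} {s : Set ℝ} {C r : NNReal}
    (h : ∀ x ∈ s, ∀ y ∈ s, |f x - f y| ≤ C * |x - y| ^ (r : ℝ)) : HolderOnWith C r f s := by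
  intro x hx y hy
  rw [edist_dist, edist_dist, Real.dist_eq, Real.dist_eq,
    ENNReal.ofReal_rpow_of_nonneg (abs_nonneg _) r.coe_nonneg, ← ENNReal.ofReal_coe_nnreal,
    ← ENNReal.ofReal_mul C.coe_nonneg]
  exact ENNReal.ofReal_le_ofReal (h x hx y hy)

lemma dimH_pos_of_separated {h : (ℕ → Fin 2) → ℝ} {K : Set ℝ} (hK : ∀ c, h c ∈ K) {δ B : ℝ}
    (hδ : 0 < δ) (hB : 1 < B) (hsep : ∀ c c' q, (∀ i < q, c i = c' i) → c q ≠ c' q →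
      δ / B ^ q ≤ |h c - h c'|) : 0 < dimH K := by
  have hB0 : 0 < B := by linarith
  have hsep' : ∀ c c', c ≠ c' → ∃ q, (∀ i < q, c i = c' i) ∧ δ / B ^ q ≤ |h c - h c'| := by
    intro c c' hne
    classical
    have hex := Function.ne_iff.1 hne
    have hmin : ∀ i < Nat.find hex, c i = c' i := fun i hi => not_not.1 (Nat.find_min hex hi)
    exact ⟨_, hmin, hsep c c' _ hmin (Nat.find_spec hex)⟩
  have hinj : Function.Injective h := by
    intro c c' heq
    by_contra hne
    obtain ⟨q, -, hq⟩ := hsep' c c' hne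
    rw [heq, sub_self, abs_zero] at hq
    exact absurd hq (not_le.2 (by positivity))
  have hr0 : 0 < Real.logb B 2 := Real.logb_pos hB (by norm_num)
  set r : NNReal := ⟨Real.logb B 2, hr0.le⟩
  have hrpos : 0 < r := hr0
  have hBr : B ^ (r : ℝ) = 2 := Real.rpow_logb hB0 hB.ne' (by norm_num)
  set C : NNReal := ⟨(δ ^ (r : ℝ))⁻¹, by positivity⟩
  set f : ℝ → ℝ := fun x => Real.ofDigits (Function.invFun h x) with hf
  have hfh : ∀ c, f (h c) = Real.ofDigits c := fun c => by
    rw [hf]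
    simp only [Function.leftInverse_invFun hinj c]
  have hhol : HolderOnWith C r f (range h) := by
    refine holderOnWith_of_abs_sub_le ?_
    rintro _ ⟨c, rfl⟩ _ ⟨c', rfl⟩
    rw [hfh, hfh]
    by_cases hne : c = c'
    · rw [hne, sub_self, abs_zero]
      positivity
    obtain ⟨q, hag, hq⟩ := hsep' c c' hne
    refine (Real.abs_ofDigits_sub_ofDigits_le hag).trans ?_
    have h1 := Real.rpow_le_rpow (by positivity) hq r.coe_nonneg
    have h2 : (B ^ q) ^ (r : ℝ) = 2 ^ q := by
      rw [← Real.rpow_natCast_mul hB0.le, mul_comm, Real.rpow_mul_natCast hB0.le, hBr]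
    rw [Real.div_rpow hδ.le (by positivity), h2] at h1
    have h3 : (0 : ℝ) < δ ^ (r : ℝ) := by positivity
    calc (((2 : ℕ) : ℝ) ^ q)⁻¹ = (δ ^ (r : ℝ))⁻¹ * (δ ^ (r : ℝ) / 2 ^ q) := by
          push_cast
          field_simp
      _ ≤ C * |h c - h c'| ^ (r : ℝ) := by
          have hCr : (C : ℝ) = (δ ^ (r : ℝ))⁻¹ := rfl
          rw [hCr]
          gcongr
  have himage : Icc (0 : ℝ) 1 ⊆ f '' range h := by
    intro y hy
    obtain ⟨c, -, hc⟩ := Real.ofDigits_SurjOn (b := 2) (by norm_num) hy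
    exact ⟨h c, ⟨c, rfl⟩, by rw [hfh, hc]⟩
  have hone : dimH (Icc (0 : ℝ) 1) = 1 := by
    rw [Real.dimH_of_nonempty_interior (by rw [interior_Icc]; exact ⟨1 / 2, by norm_num⟩)]
    simp
  have hle := (hone.symm.le.trans (dimH_mono himage)).trans (hhol.dimH_image_le hrpos)
  have hpos : dimH (range h) ≠ 0 := by
    intro h0
    rw [h0, ENNReal.zero_div] at hle
    exact absurd hle (by simp)
  exact (pos_iff_ne_zero.2 hpos).trans_le (dimH_mono (range_subset_iff.2 hK))

end Dimension

/-! ### Survivor sets below the critical value -/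

section Lower

variable {m n : ℕ} {β t : ℝ} {c c' : ℕ → Fin 2}

/-- With `N = 2 ^ n`, the concatenation over `q` of the blocks `(λ_0 ⋯ λ_{2N-1})⁻` if `c q ≠ 0`
and `(λ_0 ⋯ λ_{N-1})⁻ (λ_0 ⋯ λ_{N-1})⁻` if `c q = 0`. -/
def blockSeq (m n : ℕ) (c : ℕ → Fin 2) (i : ℕ) : ℕ :=
  if c (i / 2 ^ (n + 1)) = 0 then
    lam m (i % 2 ^ n) - if i % 2 ^ n + 1 = 2 ^ n then 1 else 0
  else lam m (i % 2 ^ (n + 1)) - if i % 2 ^ (n + 1) + 1 = 2 ^ (n + 1) then 1 else 0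

lemma blockSeq_le (hm : 1 ≤ m) (i : ℕ) : blockSeq m n c i ≤ m := by
  have := lam_le hm
  unfold blockSeq
  split_ifs <;> exact (Nat.sub_le _ _).trans (this _)

lemma blockSeq_of_eq_zero {q a r : ℕ} (hq : c q = 0) (ha : a < 2) (hr : r < 2 ^ n) :
    blockSeq m n c (2 ^ n * (2 * q + a) + r) = lam m r - if r + 1 = 2 ^ n then 1 else 0 := by
  have hdiv : (2 ^ n * (2 * q + a) + r) / 2 ^ (n + 1) = q := by
    rw [pow_succ, ← Nat.div_div_eq_div_mul, Nat.mul_add_div (by positivity),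
      Nat.div_eq_of_lt hr]
    omega
  rw [blockSeq, hdiv, if_pos hq, Nat.mul_add_mod, Nat.mod_eq_of_lt hr]

lemma blockSeq_of_ne_zero {q r : ℕ} (hq : c q ≠ 0) (hr : r < 2 ^ (n + 1)) :
    blockSeq m n c (2 ^ (n + 1) * q + r) =
      lam m r - if r + 1 = 2 ^ (n + 1) then 1 else 0 := by
  rw [blockSeq, Nat.mul_add_div (by positivity), Nat.div_eq_of_lt hr, add_zero, if_neg hq,
    Nat.mul_add_mod, Nat.mod_eq_of_lt hr]

lemma blockSeq_of_lt {q r : ℕ} (hr : r + 1 < 2 ^ n) :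
    blockSeq m n c (2 ^ (n + 1) * q + r) = lam m r := by
  have h2 : 2 ^ (n + 1) = 2 ^ n * 2 := pow_succ _ _
  by_cases hq : c q = 0
  · have := blockSeq_of_eq_zero (m := m) hq (a := 0) (by norm_num) (show r < 2 ^ n by omega)
    rw [if_neg (by omega), add_zero, ← mul_assoc, ← h2] at this
    exact this
  · rw [blockSeq_of_ne_zero hq (by omega), if_neg (by omega), Nat.sub_zero]

/-- Every position lies inside some block, followed by another block. -/
lemma exists_block (m n : ℕ) (c : ℕ → Fin 2) (i : ℕ) : ∃ k s p, 1 ≤ p ∧ s + p = 2 ^ k ∧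
    (∀ j < p, blockSeq m n c (i + j) = lam m (s + j) - if s + j + 1 = 2 ^ k then 1 else 0) ∧
    ∀ j, j + 1 < 2 ^ n → blockSeq m n c (i + p + j) = lam m j := by
  have h2 : 2 ^ (n + 1) = 2 ^ n * 2 := pow_succ _ _
  have hmod : i % 2 ^ (n + 1) < 2 ^ (n + 1) := Nat.mod_lt _ (by positivity)
  have hi := Nat.div_add_mod i (2 ^ (n + 1))
  generalize i / 2 ^ (n + 1) = q at hi
  generalize i % 2 ^ (n + 1) = r at hi hmod
  have hnext : ∀ p, r + p = 2 ^ (n + 1) → ∀ j, j + 1 < 2 ^ n →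
      blockSeq m n c (i + p + j) = lam m j := by
    intro p hp j hj
    rw [← hi, show 2 ^ (n + 1) * q + r + p + j = 2 ^ (n + 1) * (q + 1) + j by
      rw [mul_add, ← hp]; ring]
    exact blockSeq_of_lt hj
  by_cases hq : c q = 0
  · have hpos : ∀ a r, 2 ^ n * (2 * q + a) + r = 2 ^ (n + 1) * q + (2 ^ n * a + r) := by
      intro a r
      rw [h2]
      ring
    by_cases hr : r < 2 ^ n
    · refine ⟨n, r, 2 ^ n - r, by omega, by omega, fun j hj => ?_, fun j hj => ?_⟩
      · rw [← blockSeq_of_eq_zero hq (a := 0) (by norm_num) (by omega), hpos]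
        congr 1
        omega
      · have := blockSeq_of_eq_zero (m := m) hq (a := 1) (by norm_num) (show j < 2 ^ n by omega)
        rw [if_neg (by omega), Nat.sub_zero, hpos] at this
        rw [← this]
        congr 1
        omega
    · refine ⟨n, r - 2 ^ n, 2 ^ (n + 1) - r, by omega, by omega, fun j hj => ?_,
        hnext _ (by omega)⟩
      rw [← blockSeq_of_eq_zero hq (a := 1) (by norm_num) (by omega), hpos]
      congr 1
      omega
  · refine ⟨n + 1, r, 2 ^ (n + 1) - r, by omega, by omega, fun j hj => ?_, hnext _ (by omega)⟩
    rw [← blockSeq_of_ne_zero hq (by omega)]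
    congr 1
    omega

lemma valSeq_blockSeq_sub_lam (hm : 1 ≤ m) (hβ : 1 < β) {i k s p : ℕ} (hp : 1 ≤ p)
    (hsp : s + p = 2 ^ k) (hb : ∀ j < p, blockSeq m n c (i + j) =
      lam m (s + j) - if s + j + 1 = 2 ^ k then 1 else 0) :
    valSeq β (shiftn i (blockSeq m n c)) - valSeq β (shiftn s (lam m)) =
      (valSeq β (shiftn (i + p) (blockSeq m n c)) - 1 - valSeq β (shiftn (2 ^ k) (lam m))) /
        β ^ p := by
  have e := valSeq_sub_of_agree_digit hβ (shiftn_le (blockSeq_le (n := n) (c := c) hm) i)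
    (shiftn_le (lam_le hm) s) (p := p - 1) fun j hj => by
      rw [shiftn, shiftn, add_comm j i, hb j (by omega), if_neg (by omega), Nat.sub_zero, add_comm]
  have hlast : shiftn i (blockSeq m n c) (p - 1) + 1 = shiftn s (lam m) (p - 1) := by
    have := one_le_lam m (n := k) (i := s + (p - 1)) (by omega)
    rw [shiftn, shiftn, add_comm (p - 1) i, hb _ (by omega), if_pos (by omega),
      add_comm (p - 1) s]
    omega
  have hlast' : (shiftn i (blockSeq m n c) (p - 1) : ℝ) + 1 = shiftn s (lam m) (p - 1) := by
    exact_mod_cast hlast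
  rw [Nat.sub_add_cancel hp, shiftn_shiftn, shiftn_shiftn, ← hlast', add_comm p i, add_comm p s,
    hsp] at e
  rw [e]
  ring

lemma valSeq_blockSeq_sub_refl (hm : 1 ≤ m) (hβ : 1 < β) {i k s p : ℕ}
    (hsp : s + p = 2 ^ k) (hb : ∀ j < p, blockSeq m n c (i + j) =
      lam m (s + j) - if s + j + 1 = 2 ^ k then 1 else 0) :
    valSeq β (shiftn i (blockSeq m n c)) - valSeq β (refl m (shiftn (2 ^ k + s) (lam m))) =
      (valSeq β (shiftn (i + p) (blockSeq m n c)) -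
        valSeq β (refl m (shiftn (p + (2 ^ k + s)) (lam m)))) / β ^ p := by
  have e := valSeq_sub_of_agree hβ (shiftn_le (blockSeq_le (n := n) (c := c) hm) i)
    (refl_le m (shiftn (2 ^ k + s) (lam m))) (p := p) fun j hj => by
      have hlam := lam_pow_add m (n := k) (i := s + j) (by omega)
      have hle := lam_le hm (s + j)
      rw [shiftn, add_comm j i, hb j hj, refl, shiftn, show j + (2 ^ k + s) = 2 ^ k + (s + j) by
        omega, hlam]
      split_ifs <;> omega
  rwa [shiftn_refl, shiftn_shiftn, shiftn_shiftn, add_comm p i] at e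

lemma valSeq_blockSeq_le_one (hm : 1 ≤ m) (hβ : 1 < β) (hval : valSeq β (lam m) = 1) (i : ℕ) :
    valSeq β (shiftn i (blockSeq m n c)) ≤ 1 := by
  refine sub_nonpos.1 (nonpos_of_expanding hβ
    (d := fun i => valSeq β (shiftn i (blockSeq m n c)) - 1)
    (C := m / (β - 1)) (fun i => ?_) (fun i => Or.inr ?_) i)
  · linarith [valSeq_le hβ (shiftn_le (blockSeq_le (n := n) (c := c) hm) i)]
  · obtain ⟨k, s, p, hp, hsp, hb, -⟩ := exists_block m n c i
    have e := valSeq_blockSeq_sub_lam hm hβ hp hsp hb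
    refine ⟨p, hp, ?_⟩
    have hs := valSeq_shiftn_lam_le_one hm hβ hval s
    have hk := valSeq_nonneg hβ (shiftn (2 ^ k) (lam m))
    have h0 : (0 : ℝ) < β := by linarith
    have : (valSeq β (shiftn (i + p) (blockSeq m n c)) - 1 -
        valSeq β (shiftn (2 ^ k) (lam m))) / β ^ p ≤
        (valSeq β (shiftn (i + p) (blockSeq m n c)) - 1) / β ^ p :=
      div_le_div_of_nonneg_right (by linarith) (by positivity)
    linarith

lemma valSeq_blockSeq_lt_one (hm : 1 ≤ m) (hβ : 1 < β) (hval : valSeq β (lam m) = 1) (i : ℕ) :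
    valSeq β (shiftn i (blockSeq m n c)) < 1 := by
  obtain ⟨k, s, p, hp, hsp, hb, -⟩ := exists_block m n c i
  have e := valSeq_blockSeq_sub_lam hm hβ hp hsp hb
  have hs := valSeq_shiftn_lam_le_one hm hβ hval s
  have hk := valSeq_shiftn_lam_pos hm hβ hval (2 ^ k)
  have hip := valSeq_blockSeq_le_one (n := n) (c := c) hm hβ hval (i + p)
  have h0 : (0 : ℝ) < β := by linarith
  have : (valSeq β (shiftn (i + p) (blockSeq m n c)) - 1 -
      valSeq β (shiftn (2 ^ k) (lam m))) / β ^ p < 0 :=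
    div_neg_of_neg_of_pos (by linarith) (by positivity)
  linarith

lemma critical_sub_le_valSeq_blockSeq (hm : 1 ≤ m) (hβ : 1 < β) (hval : valSeq β (lam m) = 1)
    (i : ℕ) : m / (β - 1) - 1 - 1 / β ^ 2 ^ n ≤ valSeq β (shiftn i (blockSeq m n c)) := by
  obtain ⟨k, s, p, hp, hsp, hb, hnext⟩ := exists_block m n c i
  have h0 : (0 : ℝ) < β := by linarith
  have hN : 1 ≤ 2 ^ n := Nat.one_le_two_pow
  have hbm := blockSeq_le (n := n) (c := c) hm
  have e1 := valSeq_blockSeq_sub_refl hm hβ hsp hb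
  have e2 := valSeq_sub_of_agree hβ (shiftn_le hbm (i + p)) (lam_le hm) (p := 2 ^ n - 1)
    fun j hj => by rw [shiftn, add_comm, hnext j (by omega)]
  rw [hval] at e2
  have h1 := critical_le_valSeq_refl_shiftn_lam hm hβ hval (2 ^ k + s)
  have h2 := valSeq_refl_shiftn_lam_le_one hm hβ hval (p + (2 ^ k + s))
  have h3 := valSeq_nonneg hβ (shiftn (2 ^ n - 1) (shiftn (i + p) (blockSeq m n c)))
  have h4 := valSeq_shiftn_lam_le_one hm hβ hval (2 ^ n - 1)
  have h5 : -1 / β ^ (2 ^ n - 1) ≤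
      (valSeq β (shiftn (2 ^ n - 1) (shiftn (i + p) (blockSeq m n c))) -
        valSeq β (shiftn (2 ^ n - 1) (lam m))) / β ^ (2 ^ n - 1) :=
    div_le_div_of_nonneg_right (by linarith) (by positivity)
  have h6 : -1 / β ^ (2 ^ n - 1) / β ^ p ≤ (valSeq β (shiftn (i + p) (blockSeq m n c)) -
      valSeq β (refl m (shiftn (p + (2 ^ k + s)) (lam m)))) / β ^ p :=
    div_le_div_of_nonneg_right (by linarith) (by positivity)
  have h7 : 1 / β ^ (2 ^ n - 1 + p) ≤ 1 / β ^ 2 ^ n := by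
    have : 2 ^ n ≤ 2 ^ n - 1 + p := by omega
    gcongr
    exact hβ.le
  rw [div_div, ← pow_add, neg_div] at h6
  linarith

lemma valSeq_mem_survivor (hβ : 1 < β) {b : ℕ → ℕ} (hb : ∀ i, b i ≤ m)
    (hbt : ∀ i, t ≤ valSeq β (shiftn i b) ∧ valSeq β (shiftn i b) < 1) :
    valSeq β b ∈ survivor β t := by
  have h0 : (0 : ℝ) < β := by linarith
  refine ⟨⟨valSeq_nonneg hβ b, (hbt 0).2⟩, fun i => ?_⟩
  have : (Tbeta β)^[i] (valSeq β b) = valSeq β (shiftn i b) := by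
    induction i with
    | zero => rfl
    | succ i ih =>
      rw [Function.iterate_succ_apply', ih, Tbeta, Int.fract_eq_iff]
      refine ⟨valSeq_nonneg hβ _, (hbt _).2, b i, ?_⟩
      rw [valSeq_eq_cons hβ (shiftn_le hb i), shiftn_shiftn, add_comm 1 i]
      simp only [shiftn, zero_add]
      field_simp
      push_cast
      ring
  rw [this]
  exact (hbt i).1

lemma le_valSeq_blockSeq_sub (hm : 1 ≤ m) (hβ : 1 < β) (hval : valSeq β (lam m) = 1)
    (ht : ∀ c : ℕ → Fin 2, ∀ i, t ≤ valSeq β (shiftn i (blockSeq m n c))) {q : ℕ}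
    (hag : ∀ i < q, c i = c' i) (hq : c q ≠ 0) (hq' : c' q = 0) :
    t / β ^ 2 ^ n / (β ^ 2 ^ (n + 1)) ^ q ≤
      valSeq β (blockSeq m n c) - valSeq β (blockSeq m n c') := by
  have h0 : (0 : ℝ) < β := by linarith
  have hN : 1 ≤ 2 ^ n := Nat.one_le_two_pow
  have h2 : 2 ^ (n + 1) = 2 ^ n * 2 := pow_succ _ _
  have hlast : blockSeq m n c (2 ^ (n + 1) * q + (2 ^ n - 1)) =
      blockSeq m n c' (2 ^ (n + 1) * q + (2 ^ n - 1)) + 1 := by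
    have h := blockSeq_of_eq_zero (m := m) hq' (a := 0) (by norm_num)
      (show 2 ^ n - 1 < 2 ^ n by omega)
    have hl := one_le_lam m (n := n) (i := 2 ^ n - 1) (by omega)
    rw [if_pos (by omega), add_zero, ← mul_assoc, ← h2] at h
    rw [h, blockSeq_of_ne_zero hq (by omega), if_neg (by omega)]
    omega
  have e := valSeq_sub_of_agree_digit hβ (blockSeq_le (n := n) (c := c) hm)
    (blockSeq_le (n := n) (c := c') hm) (p := 2 ^ (n + 1) * q + (2 ^ n - 1)) fun i hi => by
      by_cases hlt : i < 2 ^ (n + 1) * q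
      · rw [blockSeq, blockSeq, hag _ (Nat.div_lt_of_lt_mul hlt)]
      · obtain ⟨r, rfl⟩ : ∃ r, i = 2 ^ (n + 1) * q + r := ⟨i - 2 ^ (n + 1) * q, by omega⟩
        rw [blockSeq_of_lt (by omega), blockSeq_of_lt (by omega)]
  rw [hlast, show 2 ^ (n + 1) * q + (2 ^ n - 1) + 1 = 2 ^ n + 2 ^ (n + 1) * q by omega] at e
  rw [e, div_div, ← pow_mul, ← pow_add]
  have h3 := ht c (2 ^ n + 2 ^ (n + 1) * q)
  have h4 := valSeq_blockSeq_le_one (n := n) (c := c') hm hβ hval (2 ^ n + 2 ^ (n + 1) * q)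
  push_cast
  exact div_le_div_of_nonneg_right (by linarith) (by positivity)

lemma dimH_survivor_pos (hm : 1 ≤ m) (hβ : 1 < β) (hval : valSeq β (lam m) = 1) (ht0 : 0 < t)
    (ht : t < m / (β - 1) - 1) : 0 < dimH (survivor β t) := by
  have h0 : (0 : ℝ) < β := by linarith
  obtain ⟨n, hn⟩ := exists_two_pow_div_lt hβ (sub_pos.2 ht)
  have htb : ∀ c : ℕ → Fin 2, ∀ i, t ≤ valSeq β (shiftn i (blockSeq m n c)) := fun c i => by
    linarith [critical_sub_le_valSeq_blockSeq (n := n) (c := c) hm hβ hval i]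
  refine dimH_pos_of_separated (h := fun c => valSeq β (blockSeq m n c))
    (δ := t / β ^ 2 ^ n) (B := β ^ 2 ^ (n + 1)) (fun c => ?_) (by positivity)
    (one_lt_pow₀ hβ (by positivity)) fun c c' q hag hne => ?_
  · exact valSeq_mem_survivor hβ (blockSeq_le hm) fun i =>
      ⟨htb c i, valSeq_blockSeq_lt_one hm hβ hval i⟩
  · by_cases hq : c q = 0
    · rw [abs_sub_comm]
      exact (le_valSeq_blockSeq_sub hm hβ hval htb (fun i hi => (hag i hi).symm)
        (fun h => hne (hq.trans h.symm)) hq).trans (le_abs_self _)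
    · have hq' : c' q = 0 := by
        generalize c q = a at *
        generalize c' q = b at *
        omega
      exact (le_valSeq_blockSeq_sub hm hβ hval htb hag hq hq').trans (le_abs_self _)

lemma tau_eq (hm : 1 ≤ m) (hβ : 1 < β) (hβm : β ≤ m + 1) (hval : valSeq β (lam m) = 1) :
    tau β = m / (β - 1) - 1 := by
  have hpos := critical_pos hm hβ hval
  refine csInf_eq_of_forall_ge_of_forall_gt_exists_lt
    ⟨m / (β - 1), by linarith, dimH_survivor_eq_zero hm hβ hβm hval (by linarith)⟩ ?_ ?_
  · rintro t ⟨ht0, ht⟩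
    by_contra! hlt
    exact (dimH_survivor_pos hm hβ hval ht0 hlt).ne' ht
  · intro w hw
    obtain ⟨t, ht, htw⟩ := exists_between hw
    exact ⟨t, ⟨hpos.trans ht, dimH_survivor_eq_zero hm hβ hβm hval ht⟩, htw⟩

end Lower

end KomornikLoreti

/-- For each `m ≥ 1`, the Komornik–Loreti constant `β_m` belongs to
`E_∞` with coding `(s₁, 01, 01, …)`, where `s₁ = (k-1)k` if `m = 2k-1` and `s₁ = k` if
`m = 2k`, and `τ(β_m) = m/(β_m - 1) - 1 = (m + 1 - β_m)/(β_m - 1)`. -/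
theorem komornik_loreti_in_Einf (m : ℕ) (hm : 1 ≤ m) (s₁ : List ℕ)
    (hs₁ : s₁ = if m % 2 = 1 then [(m + 1) / 2 - 1, (m + 1) / 2] else [m / 2]) :
    klConst m ∈ Einf ∧
    (∀ k : ℕ, klConst m ∈ Jint ((List.replicate k [0, 1]).foldl subst s₁)) ∧
    tau (klConst m) = (m : ℝ) / (klConst m - 1) - 1 ∧
    (m : ℝ) / (klConst m - 1) - 1 = ((m : ℝ) + 1 - klConst m) / (klConst m - 1) := by
  obtain ⟨hβ, hβm, hval⟩ := KomornikLoreti.klConst_spec hm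
  have h1 : klConst m - 1 ≠ 0 := (sub_pos.2 hβ).ne'
  refine ⟨KomornikLoreti.klConst_mem_Einf hm hs₁, KomornikLoreti.mem_Jint_coding hm hs₁,
    KomornikLoreti.tau_eq hm hβ hβm hval, ?_⟩
  field_simp
  ring
end

section
/- Let S ∈ Λ_e and let M ∈ ℕ be such that J^S ⊆ [M, M+1). Then the set Γ(S) := {z ∈ {0,1,…,M}^ℕ : S^∞ ≼ σ^n(z) ≼ L(S)^∞ for all n ≥ 0} is countable, where σ is the left shift and ≼ denotes the lexicographic order. -/
open Set Filter MeasureTheory Topology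

/-- The `n`-fold left shift of an integer sequence. -/
def sh (n : ℕ) (z : ℕ → ℤ) : ℕ → ℤ := fun i => z (i + n)

/-- Strict lexicographic order on integer sequences. -/
def LexLt (x y : ℕ → ℤ) : Prop := ∃ n, (∀ i < n, x i = y i) ∧ x n < y n

theorem lexLt_iff_toLex {x y : ℕ → ℤ} : LexLt x y ↔ toLex x < toLex y := Iff.rfl

theorem LexLt.trans {x y z : ℕ → ℤ} (h : LexLt x y) (h' : LexLt y z) : LexLt x z := by
  rw [lexLt_iff_toLex] at *; exact lt_trans h h'

theorem LexLt.asymm {x y : ℕ → ℤ} (h : LexLt x y) : ¬ LexLt y x := by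
  rw [lexLt_iff_toLex] at *; exact lt_asymm h

theorem lexLt_irrefl (x : ℕ → ℤ) : ¬ LexLt x x := by
  rw [lexLt_iff_toLex]; exact lt_irrefl _

theorem lexLt_trichotomy (x y : ℕ → ℤ) : LexLt x y ∨ x = y ∨ LexLt y x := by
  simp only [lexLt_iff_toLex]
  rcases lt_trichotomy (toLex x) (toLex y) with h | h | h
  · exact Or.inl h
  · exact Or.inr (Or.inl (toLex.injective h))
  · exact Or.inr (Or.inr h)

theorem LexLt.trans_not {x y z : ℕ → ℤ} (h : LexLt x y) (h' : ¬ LexLt z y) : LexLt x z := by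
  rcases lexLt_trichotomy y z with h1 | h1 | h1
  · exact h.trans h1
  · exact h1 ▸ h
  · exact absurd h1 h'

theorem LexLt.not_trans {x y z : ℕ → ℤ} (h : ¬ LexLt y x) (h' : LexLt y z) : LexLt x z := by
  rcases lexLt_trichotomy x y with h1 | h1 | h1
  · exact h1.trans h'
  · exact h1 ▸ h'
  · exact absurd h1 h

theorem eq_of_not_lexLt {x y : ℕ → ℤ} (h : ¬ LexLt x y) (h' : ¬ LexLt y x) : x = y := by
  rcases lexLt_trichotomy x y with h1 | h1 | h1
  · exact absurd h1 h
  · exact h1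
  · exact absurd h1 h'

theorem lexLt_const_sub (c : ℤ) {x y : ℕ → ℤ} :
    LexLt (fun i => c - x i) (fun i => c - y i) ↔ LexLt y x := by
  unfold LexLt
  refine exists_congr fun n => and_congr (forall₂_congr fun i _ => ?_) ?_
  · constructor <;> intro h <;> linarith
  · constructor <;> intro h <;> linarith

/-- A lexicographic inequality of shifts extends over a common prefix. -/
theorem LexLt.of_sh {x y : ℕ → ℤ} {n : ℕ} (hp : ∀ i < n, x i = y i)
    (h : LexLt (sh n x) (sh n y)) : LexLt x y := by
  obtain ⟨k, hk, hlt⟩ := h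
  refine ⟨k + n, fun i hi => ?_, hlt⟩
  rcases lt_or_ge i n with h1 | h1
  · exact hp i h1
  · have := hk (i - n) (by omega)
    simpa [sh, Nat.sub_add_cancel h1] using this

theorem LexLt.sh_of_prefix {x y : ℕ → ℤ} {n : ℕ} (hp : ∀ i < n, x i = y i)
    (h : LexLt x y) : LexLt (sh n x) (sh n y) := by
  obtain ⟨k, hk, hlt⟩ := h
  have hnk : n ≤ k := by
    by_contra hc
    have := hp k (by omega)
    omega
  refine ⟨k - n, fun i hi => hk _ (by omega), ?_⟩
  simpa [sh, Nat.sub_add_cancel hnk] using hlt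

theorem sh_sh (a b : ℕ) (z : ℕ → ℤ) : sh a (sh b z) = sh (a + b) z := by
  funext i; simp [sh, add_assoc]

theorem sh_zero (z : ℕ → ℤ) : sh 0 z = z := rfl

/-- If `U ≼ A` and `T` exceeds `A` first at the index `n`, then any sequence dominated by `U` up to
the index `n` is smaller than `T`. -/
theorem lexLt_of_bump {n : ℕ} {U U' A T : ℕ → ℤ} (hT : ∀ j < n, T j = A j)
    (hTn : A n < T n) (hU : ¬ LexLt A U) (hj : ∀ j < n, U' j = U j)
    (hn : U' n ≤ U n) : LexLt U' T := by
  rcases lexLt_trichotomy U A with h | h | h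
  · obtain ⟨k, hk, hlt⟩ := h
    rcases lt_or_ge k n with h1 | h1
    · exact ⟨k, fun i hi => by rw [hj i (by omega), hk i hi, hT i (by omega)],
        by rw [hj k h1, hT k h1]; exact hlt⟩
    · refine ⟨n, fun i hi => by rw [hj i (by omega), hk i (by omega), hT i (by omega)], ?_⟩
      have : U n ≤ A n := by
        rcases h1.lt_or_eq with h2 | h2
        · exact (hk n h2).le
        · rw [h2]; exact hlt.le
      omega
  · subst h
    exact ⟨n, fun i hi => by rw [hj i hi, hT i hi], by omega⟩
  · exact absurd h hU

/-- A sequence between two sequences which first differ by one, at the index `n`, agrees with one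
of the two up to `n`. -/
theorem squeeze {n : ℕ} {U V z : ℕ → ℤ} (hUV : ∀ j < n, U j = V j) (hn : U n + 1 = V n)
    (hU : ¬ LexLt z U) (hV : ¬ LexLt V z) :
    (∀ j < n, z j = V j) ∧ ((z n = V n ∧ ¬ LexLt (sh (n + 1) V) (sh (n + 1) z)) ∨
      (z n = U n ∧ ¬ LexLt (sh (n + 1) z) (sh (n + 1) U))) := by
  have hpre : ∀ j, j ≤ n → ∀ i < j, z i = V i := by
    intro j
    induction j with
    | zero => intro _ i hi; omega
    | succ j ih =>
      intro hj i hi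
      have ih' := ih (by omega)
      rcases Nat.lt_succ_iff_lt_or_eq.1 hi with h | rfl
      · exact ih' i h
      · rcases lt_trichotomy (z i) (V i) with h | h | h
        · exact absurd ⟨i, fun l hl => by rw [ih' l hl, hUV l (by omega)],
            by rw [hUV i (by omega)]; exact h⟩ hU
        · exact h
        · exact absurd ⟨i, fun l hl => (ih' l hl).symm, h⟩ hV
  have hz := hpre n le_rfl
  refine ⟨hz, ?_⟩
  have h1 : ¬ z n < U n := fun h => hU ⟨n, fun l hl => by rw [hz l hl, hUV l hl], h⟩
  have h2 : ¬ V n < z n := fun h => hV ⟨n, fun l hl => (hz l hl).symm, h⟩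
  have : z n = V n ∨ z n = U n := by omega
  rcases this with h | h
  · refine Or.inl ⟨h, fun hc => hV (hc.of_sh fun i hi => ?_)⟩
    rcases Nat.lt_succ_iff_lt_or_eq.1 hi with hij | rfl
    · exact (hz i hij).symm
    · exact h.symm
  · refine Or.inr ⟨h, fun hc => hU (hc.of_sh fun i hi => ?_)⟩
    rcases Nat.lt_succ_iff_lt_or_eq.1 hi with hij | rfl
    · rw [hz i hij, hUV i hij]
    · exact h

/-- The sequences all of whose shifts lie lexicographically between `X` and `A`. -/
def GammaSet (X A : ℕ → ℤ) : Set (ℕ → ℤ) :=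
  {z | ∀ n, ¬ LexLt (sh n z) X ∧ ¬ LexLt A (sh n z)}

theorem countable_sh_preimage {C : Set (ℕ → ℤ)} (hC : C.Countable) (n : ℕ) :
    {z | sh n z ∈ C}.Countable := by
  have hinj : Function.Injective
      (fun z : ℕ → ℤ => ((fun i : Fin n => z i, sh n z) : (Fin n → ℤ) × (ℕ → ℤ))) := by
    intro z z' h
    simp only [Prod.mk.injEq] at h
    funext i
    rcases lt_or_ge i n with hi | hi
    · exact congrFun h.1 ⟨i, hi⟩
    · have := congrFun h.2 (i - n)
      simpa [sh, Nat.sub_add_cancel hi] using this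
  refine (((Set.countable_univ (α := Fin n → ℤ)).prod hC).preimage hinj).mono ?_
  intro z hz
  exact ⟨trivial, hz⟩

/-- `X` and `A` are the strictly smallest and the strictly largest shift of a sequence with minimal
period `m`. -/
structure ExtremalPair (m : ℕ) (X A : ℕ → ℤ) : Prop where
  pos : 0 < m
  perX : ∀ i, X (i + m) = X i
  perA : ∀ i, A (i + m) = A i
  conj : ∃ k, A = sh k X
  ltX : ∀ i, ¬ m ∣ i → LexLt X (sh i X)
  ltA : ∀ i, ¬ m ∣ i → LexLt (sh i A) A

theorem periodic_mul {m : ℕ} {X : ℕ → ℤ} (h : ∀ i, X (i + m) = X i) (q i : ℕ) :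
    X (i + m * q) = X i := by
  induction q with
  | zero => simp
  | succ q ih => rw [Nat.mul_succ, ← add_assoc, h, ih]

theorem sh_of_dvd {m : ℕ} {X : ℕ → ℤ} (h : ∀ i, X (i + m) = X i) {i : ℕ} (hi : m ∣ i) :
    sh i X = X := by
  obtain ⟨q, rfl⟩ := hi
  funext j
  exact periodic_mul h q j

theorem sh_const_sub (c : ℤ) (n : ℕ) (x : ℕ → ℤ) :
    sh n (fun i => c - x i) = fun i => c - sh n x i := rfl

namespace ExtremalPair

variable {m : ℕ} {X A : ℕ → ℤ}

theorem conj_symm (h : ExtremalPair m X A) : ∃ k, X = sh k A := by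
  obtain ⟨k, rfl⟩ := h.conj
  refine ⟨m * k - k, ?_⟩
  rw [sh_sh, Nat.sub_add_cancel (Nat.le_mul_of_pos_left k h.pos)]
  exact (sh_of_dvd h.perX (Dvd.intro k rfl)).symm

theorem dual (h : ExtremalPair m X A) (c : ℤ) :
    ExtremalPair m (fun i => c - A i) (fun i => c - X i) where
  pos := h.pos
  perX i := by simp [h.perA]
  perA i := by simp [h.perX]
  conj := by
    obtain ⟨k, hk⟩ := h.conj_symm
    exact ⟨k, by rw [sh_const_sub, ← hk]⟩
  ltX i hi := by rw [sh_const_sub, lexLt_const_sub]; exact h.ltA i hi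
  ltA i hi := by rw [sh_const_sub, lexLt_const_sub]; exact h.ltX i hi

theorem not_lt_shA (h : ExtremalPair m X A) (i : ℕ) : ¬ LexLt A (sh i A) := by
  by_cases hi : m ∣ i
  · rw [sh_of_dvd h.perA hi]; exact lexLt_irrefl _
  · exact (h.ltA i hi).asymm

theorem not_lt_shX (h : ExtremalPair m X A) (i : ℕ) : ¬ LexLt A (sh i X) := by
  obtain ⟨k, hk⟩ := h.conj_symm
  rw [hk, sh_sh]
  exact h.not_lt_shA _

theorem not_shA_lt (h : ExtremalPair m X A) (i : ℕ) : ¬ LexLt (sh i A) X := by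
  have := (h.dual 0).not_lt_shX i
  rwa [sh_const_sub, lexLt_const_sub] at this

/-- A proper suffix of the period block of the largest shift is smaller than the prefix of the same
length. -/
theorem suffix_lt (h : ExtremalPair m X A) {i : ℕ} (h0 : 0 < i) (hi : i < m) :
    ∃ j < m - i, (∀ l < j, A (l + i) = A l) ∧ A (j + i) < A j := by
  obtain ⟨n, hn, hlt⟩ := h.ltA i (Nat.not_dvd_of_pos_of_lt h0 hi)
  rcases lt_or_ge n (m - i) with h1 | h1
  · exact ⟨n, h1, hn, hlt⟩
  · exfalso
    have h2 : LexLt (sh (m - i) (sh i A)) (sh (m - i) A) :=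
      LexLt.sh_of_prefix (fun l hl => hn l (by omega)) ⟨n, hn, hlt⟩
    rw [sh_sh, Nat.sub_add_cancel hi.le, sh_of_dvd h.perA dvd_rfl] at h2
    exact h2.asymm (h.ltA _ (Nat.not_dvd_of_pos_of_lt (by omega) (by omega)))

end ExtremalPair

section Christoffel

/-- The relation between the smallest shift `R` and the largest shift `sh k R` of a Christoffel
sequence of period `N`: they differ only in the first and the last letter of each period. -/
structure ChristoffelSeq (N k : ℕ) (R : ℕ → ℤ) : Prop where
  pos : 0 < N
  per : ∀ i, R (i + N) = R i
  swap : ∀ i, R (i + k) = R i + (if N ∣ i then 1 else 0) - (if N ∣ i + 1 then 1 else 0)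

namespace ChristoffelSeq

variable {N k : ℕ} {R : ℕ → ℤ}

theorem sum_swap (h : ChristoffelSeq N k R) (i n : ℕ) :
    R (i + n * k) = R i + (∑ l ∈ Finset.range n, if N ∣ i + l * k then (1 : ℤ) else 0) -
      ∑ l ∈ Finset.range n, if N ∣ i + 1 + l * k then (1 : ℤ) else 0 := by
  induction n with
  | zero => simp
  | succ n ih =>
    rw [Finset.sum_range_succ, Finset.sum_range_succ, Nat.succ_mul, ← add_assoc, h.swap, ih,
      show i + n * k + 1 = i + 1 + n * k by ring]
    ring

theorem coprime (h : ChristoffelSeq N k R) : Nat.Coprime N k := by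
  have key : (∑ l ∈ Finset.range N, if N ∣ 0 + l * k then (1 : ℤ) else 0) =
      ∑ l ∈ Finset.range N, if N ∣ 0 + 1 + l * k then (1 : ℤ) else 0 := by
    have := h.sum_swap 0 N
    rw [periodic_mul h.per] at this
    linarith
  have hpos : 0 < ∑ l ∈ Finset.range N, if N ∣ 0 + l * k then (1 : ℤ) else 0 := by
    refine Finset.sum_pos' (fun l _ => by split_ifs <;> norm_num) ⟨0, by simp [h.pos], by simp⟩
  rw [key] at hpos
  obtain ⟨l, -, hl⟩ := Finset.exists_ne_zero_of_sum_ne_zero hpos.ne'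
  have hd : N ∣ 0 + 1 + l * k := by
    by_contra hc
    simp [hc] at hl
  rw [Nat.coprime_iff_gcd_eq_one, ← Nat.dvd_one]
  have h1 : Nat.gcd N k ∣ l * k := (Nat.gcd_dvd_right N k).mul_left l
  have h2 : Nat.gcd N k ∣ 0 + 1 + l * k := (Nat.gcd_dvd_left N k).trans hd
  simpa using (Nat.dvd_add_left h1).1 h2

/-- Consecutive shifts by multiples of `k` first differ, by one, at some index `n`. -/
theorem exists_swap (h : ChristoffelSeq N k R) {j : ℕ} (hj : ¬ N ∣ j) :
    ∃ n, N ∣ n + 1 + j * k ∧ (∀ i < n, R (i + (j + 1) * k) = R (i + j * k)) ∧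
      R (n + (j + 1) * k) + 1 = R (n + j * k) := by
  have hex : ∃ n, N ∣ n + 1 + j * k := by
    refine ⟨(N - 1) * (1 + j * k), 1 + j * k, ?_⟩
    obtain ⟨M, rfl⟩ : ∃ M, N = M + 1 := ⟨N - 1, by have := h.pos; omega⟩
    simp; ring
  classical
  have hjk : ¬ N ∣ j * k := fun hc => hj (h.coprime.dvd_of_dvd_mul_right hc)
  have hno : ∀ i ≤ Nat.find hex, ¬ N ∣ i + j * k := by
    intro i hi hd
    rcases i with _ | i
    · exact hjk (by simpa using hd)
    · exact Nat.find_min hex (by omega) hd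
  refine ⟨Nat.find hex, Nat.find_spec hex, fun i hi => ?_, ?_⟩
  · have h1 : ¬ N ∣ i + j * k + 1 := by
      have := Nat.find_min hex hi
      rwa [show i + 1 + j * k = i + j * k + 1 by ring] at this
    rw [Nat.succ_mul, ← add_assoc, h.swap, if_neg (hno i hi.le), if_neg h1]
    ring
  · have h1 : N ∣ Nat.find hex + j * k + 1 := by
      have := Nat.find_spec hex
      rwa [show Nat.find hex + 1 + j * k = Nat.find hex + j * k + 1 by ring] at this
    rw [Nat.succ_mul, ← add_assoc, h.swap, if_neg (hno _ le_rfl), if_pos h1]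
    ring

theorem sh_lt_sh (h : ChristoffelSeq N k R) {a b : ℕ} (ha : 0 < a) (hab : a < b) (hb : b ≤ N) :
    LexLt (sh (b * k) R) (sh (a * k) R) := by
  induction b with
  | zero => omega
  | succ b ih =>
    have hstep : LexLt (sh ((b + 1) * k) R) (sh (b * k) R) := by
      obtain ⟨n, -, hn, hlt⟩ := h.exists_swap (Nat.not_dvd_of_pos_of_lt (m := N) (n := b)
        (by omega) (by omega))
      exact ⟨n, hn, by simp only [sh]; omega⟩
    rcases Nat.lt_succ_iff_lt_or_eq.1 hab with h1 | rfl
    · exact hstep.trans (ih h1 (by omega))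
    · exact hstep

theorem exists_sh_eq (h : ChristoffelSeq N k R) (i : ℕ) :
    ∃ l, l < N ∧ sh i R = sh (l * k) R ∧ (N ∣ i ↔ l = 0) := by
  obtain ⟨l, hlN, hl⟩ : ∃ l < N, l * k ≡ i [MOD N] := by
    have hN := h.pos
    obtain ⟨u, hu⟩ := Nat.exists_mul_mod_eq_of_coprime (n := k) (k := N) i h.coprime.symm h.pos.ne'
    refine ⟨u % N, Nat.mod_lt _ hN, ?_⟩
    have : u % N * k ≡ u * k [MOD N] := (Nat.mod_modEq u N).mul_right k
    refine this.trans ?_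
    rw [mul_comm]; exact hu.2
  refine ⟨l, hlN, ?_, ?_⟩
  · funext j
    have hmod : ∀ a b : ℕ, a ≡ b [MOD N] → R a = R b := by
      intro a b hab
      rw [← Nat.mod_add_div a N, ← Nat.mod_add_div b N, periodic_mul h.per, periodic_mul h.per,
        hab]
    exact hmod _ _ (Nat.ModEq.add_left j hl.symm)
  · rw [← hl.dvd_iff dvd_rfl]
    constructor
    · intro hd
      exact Nat.eq_zero_of_dvd_of_lt (h.coprime.dvd_of_dvd_mul_right hd) hlN
    · rintro rfl; simp

theorem sh_mul_period (h : ChristoffelSeq N k R) (n : ℕ) : sh (N * n) R = R :=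
  sh_of_dvd h.per (Dvd.intro n rfl)

theorem extremalPair (h : ChristoffelSeq N k R) : ExtremalPair N R (sh k R) where
  pos := h.pos
  perX := h.per
  perA i := by simp only [sh]; rw [show i + N + k = i + k + N by ring, h.per]
  conj := ⟨k, rfl⟩
  ltX i hi := by
    obtain ⟨l, hl, he, hz⟩ := h.exists_sh_eq i
    have := h.sh_lt_sh (a := l) (b := N) (by rw [hz] at hi; omega) hl le_rfl
    rwa [h.sh_mul_period, ← he] at this
  ltA i hi := by
    obtain ⟨l, hl, he, hz⟩ := h.exists_sh_eq i
    have := h.sh_lt_sh (a := 1) (b := l + 1) one_pos (by rw [hz] at hi; omega) hl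
    rwa [Nat.succ_mul, add_comm, ← sh_sh, ← he, one_mul, sh_sh, add_comm, ← sh_sh] at this

theorem gammaSet_subset (h : ChristoffelSeq N k R) :
    GammaSet R (sh k R) ⊆ Set.range fun j => sh (j * k) R := by
  intro z hz
  by_contra hc
  have hne : ∀ j, z ≠ sh (j * k) R := fun j hj => hc ⟨j, hj.symm⟩
  have key : ∀ j, 0 < j → j ≤ N → ¬ LexLt (sh (j * k) R) z := by
    intro j hj0
    induction j, hj0 using Nat.le_induction with
    | base => intro _; simpa [sh_zero] using (hz 0).2
    | succ j hj ih =>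
      intro hjN hlt
      obtain ⟨n, hd, hn, hs⟩ := h.exists_swap (Nat.not_dvd_of_pos_of_lt (m := N) (n := j)
        (by omega) (by omega))
      obtain ⟨hpre, ⟨hzn, hle⟩ | ⟨hzn, hle⟩⟩ := squeeze (U := sh ((j + 1) * k) R)
        (V := sh (j * k) R) hn hs hlt.asymm (ih (by omega))
      · rw [sh_sh, sh_of_dvd h.per hd] at hle
        have heq := eq_of_not_lexLt hle (hz (n + 1)).1
        refine hne j (funext fun i => ?_)
        rcases lt_trichotomy i n with hi | rfl | hi
        · exact hpre i hi
        · exact hzn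
        · have h1 := congrFun heq (i - (n + 1))
          have h2 := congrFun (sh_of_dvd h.per hd) (i - (n + 1))
          simp only [sh] at h1 h2 ⊢
          rw [Nat.sub_add_cancel hi] at h1
          rw [← h1, ← h2]
          congr 1; omega
      · have hsh : sh (n + 1) (sh ((j + 1) * k) R) = sh k R := by
          rw [sh_sh, show n + 1 + (j + 1) * k = k + (n + 1 + j * k) by ring, ← sh_sh,
            sh_of_dvd h.per hd]
        rw [hsh] at hle
        have heq := eq_of_not_lexLt hle (hz (n + 1)).2
        refine hne (j + 1) (funext fun i => ?_)
        rcases lt_trichotomy i n with hi | rfl | hi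
        · rw [hpre i hi]; exact (hn i hi).symm
        · exact hzn
        · have h1 := congrFun heq (i - (n + 1))
          have h2 := congrFun hsh (i - (n + 1))
          rw [h1.symm.trans rfl] at h2
          simp only [sh] at h2 ⊢
          rw [Nat.sub_add_cancel hi] at h2
          exact h2.symm
  have hR := key N h.pos le_rfl
  rw [h.sh_mul_period] at hR
  exact hne 0 (by simpa [sh_zero] using eq_of_not_lexLt (hz 0).1 hR)

theorem gammaSet_countable (h : ChristoffelSeq N k R) : (GammaSet R (sh k R)).Countable :=
  (Set.countable_range _).mono h.gammaSet_subset

end ChristoffelSeq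

end Christoffel

section Substitution

/-- The block substitution with blocks `X`, `A` of length `m`, driven by a `{0,1}`-sequence `Y`
whose zeroth letter plays the role of the digit preceding the substituted sequence. -/
def phi (m : ℕ) (X A Y : ℕ → ℤ) (i : ℕ) : ℤ :=
  (if Y (i / m) = 0 then A i else X i) + if m ∣ i + 1 then Y (i / m + 1) - Y (i / m) else 0

/-- Sequences with letters in `{0,1}`. -/
def Binary (Y : ℕ → ℤ) : Prop := ∀ i, Y i = 0 ∨ Y i = 1

theorem Binary.sh {Y : ℕ → ℤ} (h : Binary Y) (n : ℕ) : Binary (sh n Y) := fun i => h (i + n)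

theorem Binary.dual {Y : ℕ → ℤ} (h : Binary Y) : Binary fun i => 1 - Y i := fun i => by
  rcases h i with h | h <;> simp [h]

variable {m : ℕ} {X A Y Y' : ℕ → ℤ}

theorem phi_dual (hY : Binary Y) :
    phi m (fun i => 0 - A i) (fun i => 0 - X i) (fun i => 1 - Y i) =
      fun i => 0 - phi m X A Y i := by
  funext i
  unfold phi
  rcases hY (i / m) with h | h <;> simp only [h] <;> split_ifs <;> simp_all <;> ring

theorem sh_phi (h : ExtremalPair m X A) (q : ℕ) : sh (m * q) (phi m X A Y) = phi m X A (sh q Y) := by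
  funext i
  have hd : m ∣ i + m * q + 1 ↔ m ∣ i + 1 := by
    rw [show i + m * q + 1 = i + 1 + m * q by ring]
    exact Nat.dvd_add_left (Dvd.intro q rfl)
  have h1 : i / m + q + 1 = i / m + 1 + q := by ring
  simp only [sh, phi, Nat.add_mul_div_left _ _ h.pos, hd, periodic_mul h.perX,
    periodic_mul h.perA, h1]
  congr

theorem dvd_succ_iff {j : ℕ} (hj : j < m) : m ∣ j + 1 ↔ j = m - 1 := by
  constructor
  · intro hd
    have := Nat.le_of_dvd (by omega) hd
    omega
  · rintro rfl
    rw [Nat.sub_add_cancel (by omega)]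

theorem phi_of_lt {j : ℕ} (hj : j < m) :
    phi m X A Y j = (if Y 0 = 0 then A j else X j) + if j = m - 1 then Y 1 - Y 0 else 0 := by
  simp only [phi, Nat.div_eq_of_lt hj, dvd_succ_iff hj, zero_add]

theorem phi_of_lt_pred {j : ℕ} (hj : j < m - 1) :
    phi m X A Y j = if Y 0 = 0 then A j else X j := by
  rw [phi_of_lt (by omega), if_neg (by omega : ¬ j = m - 1), add_zero]

theorem phi_pred (hm : 0 < m) :
    phi m X A Y (m - 1) = (if Y 0 = 0 then A (m - 1) else X (m - 1)) + (Y 1 - Y 0) := by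
  rw [phi_of_lt (by omega), if_pos rfl]

theorem phi_second_block (h : ExtremalPair m X A) {j : ℕ} (h1 : m ≤ j) (hj : j + 1 < 2 * m) :
    phi m X A Y j = if Y 1 = 0 then A j else X j := by
  have h2 := congrFun (sh_phi (Y := Y) h 1) (j - m)
  rw [phi_of_lt_pred (by omega)] at h2
  simp only [sh, mul_one, Nat.sub_add_cancel h1, zero_add] at h2
  rw [h2, ← h.perA (j - m), ← h.perX (j - m), Nat.sub_add_cancel h1]

theorem phi_lt_phi (hm : 0 < m) (h0 : Y 0 = Y' 0) (hlt : LexLt Y Y') :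
    LexLt (phi m X A Y) (phi m X A Y') := by
  obtain ⟨n, hn, hlt⟩ := hlt
  rcases n with _ | n
  · omega
  have hdiv : (m * n + (m - 1)) / m = n := by
    rw [Nat.mul_add_div hm, Nat.div_eq_of_lt (by omega), add_zero]
  have hdvd : m ∣ m * n + (m - 1) + 1 := ⟨n + 1, by rw [Nat.mul_succ]; omega⟩
  refine ⟨m * n + (m - 1), fun i hi => ?_, ?_⟩
  · have h1 : i / m ≤ n := by
      rw [← hdiv]; exact Nat.div_le_div_right hi.le
    unfold phi
    rw [hn _ (by omega)]
    congr 1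
    split_ifs with hd
    · rw [hn (i / m + 1) ?_]
      obtain ⟨c, hc⟩ := hd
      have h2 : i / m < n := by
        have hc' : c ≤ n := by
          by_contra hcn
          have : m * (n + 1) ≤ m * c := Nat.mul_le_mul_left m (by omega)
          rw [Nat.mul_succ] at this
          omega
        have : i < m * n := by
          have := Nat.mul_le_mul_left m hc'
          omega
        exact Nat.div_lt_of_lt_mul this
      omega
    · rfl
  · simp only [phi, hdiv, if_pos hdvd, hn n (by omega)]
    linarith

theorem phi_not_lt_phi (hm : 0 < m) (h0 : Y 0 = Y' 0) (hlt : ¬ LexLt Y' Y) :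
    ¬ LexLt (phi m X A Y') (phi m X A Y) := by
  rcases lexLt_trichotomy Y Y' with h | h | h
  · exact (phi_lt_phi hm h0 h).asymm
  · rw [h]; exact lexLt_irrefl _
  · exact absurd h hlt

theorem phi_lt_phi_of_start (h : ExtremalPair m X A) (hY : Binary Y) (h0 : Y 0 = 1)
    (h0' : Y' 0 = 0) (h1' : Y' 1 = 1) : LexLt (phi m X A Y) (phi m X A Y') := by
  refine lexLt_of_bump (n := m - 1) (U := X) (A := A) (fun j hj => ?_) ?_ ?_ (fun j hj => ?_) ?_
  · rw [phi_of_lt_pred hj, if_pos h0']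
  · rw [phi_pred h.pos, if_pos h0']; omega
  · exact h.not_lt_shX 0
  · rw [phi_of_lt_pred hj, if_neg (by omega)]
  · rw [phi_pred h.pos, if_neg (by omega)]
    rcases hY 1 with h | h <;> omega

/-- Shifts of a substituted sequence which are not aligned with its blocks are smaller than
substituted sequences starting with the largest block. -/
theorem sh_phi_lt_of_lt (h : ExtremalPair m X A) (hY : Binary Y) (h0' : Y' 0 = 0) (h1' : Y' 1 = 1)
    {i : ℕ} (hi0 : 0 < i) (hi : i < m) : LexLt (sh i (phi m X A Y)) (phi m X A Y') := by
  have hT : ∀ j < m - 1, phi m X A Y' j = A j := fun j hj => by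
    rw [phi_of_lt_pred hj, if_pos h0']
  have hTn : A (m - 1) < phi m X A Y' (m - 1) := by
    rw [phi_pred h.pos, if_pos h0']; omega
  have of_lt : LexLt (sh i (phi m X A Y)) A → LexLt (sh i (phi m X A Y)) (phi m X A Y') :=
    fun hc => lexLt_of_bump hT hTn hc.asymm (fun _ _ => rfl) le_rfl
  have first : ∀ j < m - i, sh i (phi m X A Y) j =
      (if Y 0 = 0 then A (j + i) else X (j + i)) + if j + i = m - 1 then Y 1 - Y 0 else 0 :=
    fun j hj => phi_of_lt (by omega)
  have second : ∀ j, m - i ≤ j → j < m → sh i (phi m X A Y) j =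
      if Y 1 = 0 then A (j + i) else X (j + i) :=
    fun j h1 h2 => phi_second_block h (by omega) (by omega)
  rcases hY 0 with p | p <;> rcases hY 1 with d | d
  · obtain ⟨j, hj, hpre, hlt⟩ := h.suffix_lt hi0 hi
    refine of_lt ⟨j, fun l hl => ?_, ?_⟩
    · rw [first l (by omega)]; simp [p, d, hpre l hl]
    · rw [first j hj]; simpa [p, d] using hlt
  · obtain ⟨j, hj, hpre, hlt⟩ := h.suffix_lt hi0 hi
    have hpre' : ∀ l < j, sh i (phi m X A Y) l = A l := fun l hl => by
      rw [first l (by omega), if_pos p, if_neg (by omega), add_zero, hpre l hl]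
    have hval : sh i (phi m X A Y) j = A (j + i) + if j + i = m - 1 then 1 else 0 := by
      rw [first j hj, if_pos p, p, d, sub_zero]
    by_cases hs : sh i (phi m X A Y) j < A j
    · exact of_lt ⟨j, hpre', hs⟩
    · have hlast : j + i = m - 1 := by
        by_contra hc
        rw [if_neg hc] at hval
        omega
      rw [if_pos hlast] at hval
      have heq : sh i (phi m X A Y) j = A j := by omega
      have hagree : ∀ l < m - i, sh i (phi m X A Y) l = A l := fun l hl => by
        rcases (show l ≤ j by omega).lt_or_eq with h1 | h1
        · exact hpre' l h1
        · rw [h1, heq]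
      let U : ℕ → ℤ := fun l => if l < m - i then A l else X (l + i)
      have hU : ¬ LexLt A U := by
        intro hc
        have h1 := hc.sh_of_prefix (n := m - i) fun l hl => by simp [U, hl]
        refine h.not_shA_lt (m - i) ?_
        convert h1 using 1
        funext l
        simp only [sh, U, if_neg (show ¬ l + (m - i) < m - i by omega)]
        rw [show l + (m - i) + i = l + m by omega, h.perX]
      have hVU : ∀ l < m, sh i (phi m X A Y) l = U l := fun l hl => by
        by_cases hl' : l < m - i
        · simp only [U, if_pos hl', hagree l hl']
        · rw [second l (by omega) hl, if_neg (by omega)]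
          simp only [U, if_neg hl']
      exact lexLt_of_bump hT hTn hU (fun l hl => hVU l (by omega)) (hVU _ (by omega)).le
  · refine of_lt (LexLt.trans_not (y := sh i X) ⟨m - i - 1, fun l hl => ?_, ?_⟩ (h.not_lt_shX i))
    · rw [first l (by omega), if_neg (by omega), if_neg (by omega), add_zero]; rfl
    · rw [first _ (by omega), if_neg (by omega), if_pos (by omega), p, d]
      simp [sh]
  · have hVU : ∀ l < m, sh i (phi m X A Y) l = sh i X l := fun l hl => by
      by_cases hl' : l < m - i
      · rw [first l hl', if_neg (by omega), p, d]; simp [sh]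
      · rw [second l (by omega) hl, if_neg (by omega)]; rfl
    exact lexLt_of_bump hT hTn (h.not_lt_shX i) (fun l hl => hVU l (by omega))
      (hVU _ (by omega)).le

theorem sh_phi_lt_of_not_dvd (h : ExtremalPair m X A) (hY : Binary Y) (h0' : Y' 0 = 0)
    (h1' : Y' 1 = 1) {i : ℕ} (hi : ¬ m ∣ i) : LexLt (sh i (phi m X A Y)) (phi m X A Y') := by
  have hmod : 0 < i % m := Nat.pos_of_ne_zero fun hc => hi (Nat.dvd_of_mod_eq_zero hc)
  have := sh_phi_lt_of_lt h (hY.sh (i / m)) h0' h1' hmod (Nat.mod_lt _ h.pos)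
  rwa [← sh_phi h, sh_sh, Nat.mod_add_div] at this

/-- An extremal pair of `{0,1}`-sequences whose period blocks are `0w1` and `1v0`. -/
structure BinaryPair (N : ℕ) (R B : ℕ → ℤ) : Prop extends ExtremalPair N R B where
  binR : Binary R
  binB : Binary B
  headR : R 0 = 0
  headB : B 0 = 1
  lastR : R (N - 1) = 1
  lastB : B (N - 1) = 0

variable {N : ℕ} {R B : ℕ → ℤ}

theorem BinaryPair.dual (h : BinaryPair N R B) :
    BinaryPair N (fun i => 1 - B i) (fun i => 1 - R i) where
  toExtremalPair := h.toExtremalPair.dual 1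
  binR := h.binB.dual
  binB := h.binR.dual
  headR := by simp [h.headB]
  headB := by simp [h.headR]
  lastR := by simp [h.lastB]
  lastB := by simp [h.lastR]

theorem sh_phi_lt (h : ExtremalPair m X A) (hB : BinaryPair N R B) {i : ℕ} (hi : ¬ m * N ∣ i) :
    LexLt (sh i (phi m X A (sh (N - 1) B))) (phi m X A (sh (N - 1) B)) := by
  have hN := hB.pos
  have h0 : sh (N - 1) B 0 = 0 := by simpa [sh] using hB.lastB
  have h1 : sh (N - 1) B 1 = 1 := by
    have := hB.perA 0
    simp only [sh]
    rw [show 1 + (N - 1) = 0 + N by omega, this, hB.headB]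
  by_cases hm : m ∣ i
  · obtain ⟨q, rfl⟩ := hm
    rw [sh_phi h]
    rcases (hB.binB.sh (N - 1)).sh q 0 with hp | hp
    · refine phi_lt_phi h.pos (by rw [hp, h0]) (LexLt.of_sh (n := 1) (fun j hj => ?_) ?_)
      · obtain rfl : j = 0 := by omega
        rw [hp, h0]
      · have hq : ¬ N ∣ q := fun hc => hi (Nat.mul_dvd_mul_left m hc)
        have e : ∀ a, sh 1 (sh a (sh (N - 1) B)) = sh a B := fun a => by
          rw [sh_sh, sh_sh, show 1 + a + (N - 1) = a + N by omega, ← sh_sh,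
            sh_of_dvd hB.perA dvd_rfl]
        have e0 := e 0
        rw [sh_zero, sh_zero] at e0
        rw [e, e0]
        exact hB.ltA q hq
    · exact phi_lt_phi_of_start h ((hB.binB.sh _).sh _) hp h0 h1
  · exact sh_phi_lt_of_not_dvd h (hB.binB.sh _) h0 h1 hm

/-- Substitution of a binary pair into an extremal pair produces an extremal pair. -/
theorem extremalPair_phi (h : ExtremalPair m X A) (hB : BinaryPair N R B) :
    ExtremalPair (m * N) (phi m X A (sh (N - 1) R)) (phi m X A (sh (N - 1) B)) where
  pos := Nat.mul_pos h.pos hB.pos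
  perX i := by
    have := congrFun (sh_phi (Y := sh (N - 1) R) h N) i
    rwa [sh_sh, add_comm, ← sh_sh, sh_of_dvd hB.perX dvd_rfl] at this
  perA i := by
    have := congrFun (sh_phi (Y := sh (N - 1) B) h N) i
    rwa [sh_sh, add_comm, ← sh_sh, sh_of_dvd hB.perA dvd_rfl] at this
  conj := by
    obtain ⟨k, hk⟩ := hB.conj
    exact ⟨m * k, by rw [sh_phi h, hk, sh_sh, sh_sh, add_comm]⟩
  ltA i hi := sh_phi_lt h hB hi
  ltX i hi := by
    have := sh_phi_lt (h.dual 0) hB.dual hi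
    rwa [sh_const_sub, phi_dual (hB.binR.sh _), sh_const_sub, lexLt_const_sub] at this

/-- `z` can be continued by a substituted sequence whose preceding digit is `p`. -/
def Follows (X A : ℕ → ℤ) (p : ℤ) (z : ℕ → ℤ) : Prop :=
  if p = 0 then ¬ LexLt z A else ¬ LexLt X z

theorem follows_step (h : ExtremalPair m X A) {z : ℕ → ℤ} {p : ℤ} (hp : p = 0 ∨ p = 1)
    (hlo : ¬ LexLt z (phi m X A fun i => if i = 0 then 1 else 0))
    (hhi : ¬ LexLt (phi m X A fun i => if i = 0 then 0 else 1) z) (hz : Follows X A p z) :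
    ∃ d : ℤ, (d = 0 ∨ d = 1) ∧ Follows X A d (sh m z) ∧
      ∀ j < m, z j = (if p = 0 then A j else X j) + if j = m - 1 then d - p else 0 := by
  have hm := h.pos
  have hm1 : m - 1 + 1 = m := by omega
  have hconst : ∀ c : ℤ, phi m X A (fun _ => c) = if c = 0 then A else X := fun c => by
    funext i
    unfold phi
    split_ifs <;> simp
  rcases hp with rfl | rfl
  · have hz' : ¬ LexLt z A := by simpa [Follows] using hz
    obtain ⟨hpre, hcase⟩ := squeeze (n := m - 1) (fun j hj => by simp [phi_of_lt_pred hj])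
      (by simp [phi_pred hm]) hz' hhi
    have hpre' : ∀ j < m - 1, z j = A j := fun j hj => by
      rw [hpre j hj, phi_of_lt_pred hj]; simp
    rw [hm1] at hcase
    rcases hcase with ⟨hn, hle⟩ | ⟨hn, hle⟩
    · refine ⟨1, Or.inr rfl, ?_, fun j hj => ?_⟩
      · have e := sh_phi (Y := fun i => if i = 0 then 0 else 1) h 1
        rw [mul_one] at e
        rw [e, show sh 1 (fun i => if i = 0 then (0 : ℤ) else 1) = fun _ => 1 from by
          funext i; simp [sh], hconst] at hle
        simpa [Follows] using hle
      · rcases (show j ≤ m - 1 by omega).lt_or_eq with h1 | rfl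
        · simp [hpre' j h1, h1.ne]
        · rw [hn, phi_pred hm]; simp
    · refine ⟨0, Or.inl rfl, ?_, fun j hj => ?_⟩
      · rw [sh_of_dvd h.perA dvd_rfl] at hle
        simpa [Follows] using hle
      · rcases (show j ≤ m - 1 by omega).lt_or_eq with h1 | rfl
        · simp [hpre' j h1, h1.ne]
        · rw [hn]; simp
  · have hz' : ¬ LexLt X z := by simpa [Follows] using hz
    obtain ⟨hpre, hcase⟩ := squeeze (n := m - 1) (fun j hj => by simp [phi_of_lt_pred hj])
      (by simp [phi_pred hm]) hlo hz'
    rw [hm1] at hcase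
    rcases hcase with ⟨hn, hle⟩ | ⟨hn, hle⟩
    · refine ⟨1, Or.inr rfl, ?_, fun j hj => ?_⟩
      · rw [sh_of_dvd h.perX dvd_rfl] at hle
        simpa [Follows] using hle
      · rcases (show j ≤ m - 1 by omega).lt_or_eq with h1 | rfl
        · simp [hpre j h1, h1.ne]
        · rw [hn]; simp
    · refine ⟨0, Or.inl rfl, ?_, fun j hj => ?_⟩
      · have e := sh_phi (Y := fun i => if i = 0 then 1 else 0) h 1
        rw [mul_one] at e
        rw [e, show sh 1 (fun i => if i = 0 then (1 : ℤ) else 0) = fun _ => 0 from by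
          funext i; simp [sh], hconst] at hle
        simpa [Follows] using hle
      · rcases (show j ≤ m - 1 by omega).lt_or_eq with h1 | rfl
        · simp [hpre j h1, h1.ne]
        · rw [hn, phi_pred hm]; simp

theorem exists_eq_phi (h : ExtremalPair m X A) {z : ℕ → ℤ} {p : ℤ} (hp : p = 0 ∨ p = 1)
    (hlo : ∀ n, ¬ LexLt (sh n z) (phi m X A fun i => if i = 0 then 1 else 0))
    (hhi : ∀ n, ¬ LexLt (phi m X A fun i => if i = 0 then 0 else 1) (sh n z))
    (hz : Follows X A p z) : ∃ Y, Binary Y ∧ Y 0 = p ∧ z = phi m X A Y := by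
  have hm := h.pos
  have step : ∀ (q : ℕ) (p : ℤ), (p = 0 ∨ p = 1) ∧ Follows X A p (sh (m * q) z) →
      ∃ d : ℤ, ((d = 0 ∨ d = 1) ∧ Follows X A d (sh (m * (q + 1)) z)) ∧
        ∀ j < m, sh (m * q) z j =
          (if p = 0 then A j else X j) + if j = m - 1 then d - p else 0 := by
    intro q p hp
    obtain ⟨d, hd, hf, hj⟩ := follows_step h hp.1 (hlo _) (hhi _) hp.2
    rw [sh_sh, show m + m * q = m * (q + 1) by ring] at hf
    exact ⟨d, ⟨hd, hf⟩, hj⟩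
  choose! f hf hfj using step
  let Y : ℕ → ℤ := fun n => Nat.rec p (fun q y => f q y) n
  have hY : ∀ q, (Y q = 0 ∨ Y q = 1) ∧ Follows X A (Y q) (sh (m * q) z) := by
    intro q
    induction q with
    | zero => exact ⟨hp, by rw [mul_zero, sh_zero]; exact hz⟩
    | succ q ih => exact hf q (Y q) ih
  refine ⟨Y, fun q => (hY q).1, rfl, funext fun i => ?_⟩
  have h1 := hfj (i / m) (Y (i / m)) (hY _) (i % m) (Nat.mod_lt _ hm)
  have h2 := congrFun (sh_phi (Y := Y) h (i / m)) (i % m)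
  have e0 : sh (i / m) Y 0 = Y (i / m) := by simp [sh]
  have e1 : sh (i / m) Y 1 = f (i / m) (Y (i / m)) := by simp [sh, add_comm 1, Y]
  rw [phi_of_lt (Nat.mod_lt _ hm), e0, e1, ← h1] at h2
  simp only [sh, Nat.mod_add_div] at h2
  exact h2.symm

theorem not_sh_one_lt (hY : Binary Y) (h0 : Y 0 = 0) : ¬ LexLt (sh 1 Y) Y := by
  rintro ⟨n, hn, hlt⟩
  have hzero : ∀ i ≤ n, Y i = 0 := fun i => by
    induction i with
    | zero => exact fun _ => h0
    | succ i ih => exact fun hi => (hn i (by omega)).trans (ih (by omega))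
  rw [hzero n le_rfl] at hlt
  have : sh 1 Y n = 0 ∨ sh 1 Y n = 1 := hY (n + 1)
  omega

/-- In a substituted sequence bounded below by the substituted sequence of `R`, the driving sequence
is bounded below by `R`. -/
theorem not_sh_lt_of_phi (h : ExtremalPair m X A) (hB : BinaryPair N R B) (hY : Binary Y)
    (h01 : Y 0 ≠ Y 1) (hz : ∀ n, ¬ LexLt (sh n (phi m X A Y)) (phi m X A (sh (N - 1) R))) (q : ℕ) :
    ¬ LexLt (sh q (sh 1 Y)) R := by
  have hN := hB.pos
  induction q with
  | zero =>
    intro hc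
    rcases hY 0 with h0 | h0
    · have h1 : Y 1 = 1 := by rcases hY 1 with h1 | h1 <;> omega
      have hgt : LexLt R (sh 0 (sh 1 Y)) :=
        ⟨0, fun i hi => by omega, by simp [sh, hB.headR, h1]⟩
      exact hgt.asymm hc
    · refine hz 0 (phi_lt_phi h.pos ?_ (LexLt.of_sh (n := 1) (fun j hj => ?_) ?_))
      · rw [h0]; simp [sh, hB.lastR]
      · obtain rfl : j = 0 := by omega
        rw [h0]; simp [sh, hB.lastR]
      · rw [sh_sh 1 (N - 1) R, show 1 + (N - 1) = N by omega, sh_of_dvd hB.perX dvd_rfl]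
        exact hc
  | succ q ih =>
    intro hc
    rcases hY (q + 1) with h0 | h0
    · refine ih (LexLt.not_trans (not_sh_one_lt ((hY.sh 1).sh q) (by simpa [sh] using h0)) ?_)
      rwa [sh_sh, add_comm]
    · refine hz (m * (q + 1)) ?_
      rw [sh_phi h]
      refine phi_lt_phi h.pos ?_ (LexLt.of_sh (n := 1) (fun j hj => ?_) ?_)
      · simp [sh, hB.lastR, h0]
      · obtain rfl : j = 0 := by omega
        simp [sh, hB.lastR, h0]
      · rw [sh_sh 1 (N - 1) R, show 1 + (N - 1) = N by omega, sh_of_dvd hB.perX dvd_rfl]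
        rw [sh_sh] at hc ⊢
        rwa [add_comm 1]

theorem not_lt_sh_of_phi (h : ExtremalPair m X A) (hB : BinaryPair N R B) (hY : Binary Y)
    (h01 : Y 0 ≠ Y 1) (hz : ∀ n, ¬ LexLt (phi m X A (sh (N - 1) B)) (sh n (phi m X A Y))) (q : ℕ) :
    ¬ LexLt B (sh q (sh 1 Y)) := by
  have := not_sh_lt_of_phi (h.dual 0) hB.dual hY.dual (fun hc => h01 (by linarith))
    (fun n => by
      rw [sh_const_sub, phi_dual (hB.binB.sh _), phi_dual hY, sh_const_sub, lexLt_const_sub]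
      exact hz n) q
  rwa [sh_const_sub, sh_const_sub, lexLt_const_sub] at this

theorem exists_change (hne : ∃ q, Y q ≠ Y 0) : ∃ q, Y q ≠ Y (q + 1) := by
  by_contra! hc
  obtain ⟨q, hq⟩ := hne
  exact hq (Nat.rec rfl (fun n ih => (hc n).symm.trans ih) q)

theorem phi_const (p : ℤ) (hY : ∀ q, Y q = p) : phi m X A Y = if p = 0 then A else X := by
  funext i
  simp only [phi, hY]
  split_ifs <;> simp

theorem gammaSet_phi_subset (h : ExtremalPair m X A) (hB : BinaryPair N R B) :
    GammaSet (phi m X A (sh (N - 1) R)) (phi m X A (sh (N - 1) B)) ⊆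
      GammaSet X A ∪ ⋃ n, {z | sh n z ∈ phi m X A '' {Y | sh 1 Y ∈ GammaSet R B}} := by
  intro z hz
  by_cases hmem : z ∈ GammaSet X A
  · exact Or.inl hmem
  right
  have hlo : ∀ n, ¬ LexLt (sh n z) (phi m X A fun i => if i = 0 then 1 else 0) := fun n hc => by
    refine (hz n).1 (hc.trans_not (phi_not_lt_phi h.pos (by simp [sh, hB.lastR]) ?_))
    rintro ⟨k, hk, hlt⟩
    have h1 : sh (N - 1) R k = 0 ∨ sh (N - 1) R k = 1 := hB.binR _
    rcases k with _ | k
    · simp [sh, hB.lastR] at hlt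
    · simp at hlt; omega
  have hhi : ∀ n, ¬ LexLt (phi m X A fun i => if i = 0 then 0 else 1) (sh n z) := fun n hc => by
    refine (hz n).2 (LexLt.not_trans (phi_not_lt_phi h.pos (by simp [sh, hB.lastB]) ?_) hc)
    rintro ⟨k, hk, hlt⟩
    have h1 : sh (N - 1) B k = 0 ∨ sh (N - 1) B k = 1 := hB.binB _
    rcases k with _ | k
    · simp [sh, hB.lastB] at hlt
    · simp at hlt; omega
  have hdec : ∃ n Y, Binary Y ∧ sh n z = phi m X A Y ∧ ∃ q, Y q ≠ Y 0 := by
    have hgen : ∀ n p, (p = 0 ∨ p = 1) → Follows X A p (sh n z) →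
        sh n z ≠ (if p = 0 then A else X) →
        ∃ n Y, Binary Y ∧ sh n z = phi m X A Y ∧ ∃ q, Y q ≠ Y 0 := by
      intro n p hp hf hne
      obtain ⟨Y, hY, h0, he⟩ := exists_eq_phi h hp (z := sh n z)
        (fun k => by rw [sh_sh]; exact hlo _) (fun k => by rw [sh_sh]; exact hhi _) hf
      refine ⟨n, Y, hY, he, ?_⟩
      by_contra! hc
      exact hne (he.trans (phi_const p fun q => (hc q).trans h0))
    simp only [GammaSet, Set.mem_ofPred_eq, not_forall, not_and_or, not_not] at hmem
    obtain ⟨n, hn | hn⟩ := hmem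
    · refine hgen n 1 (Or.inr rfl) (by simpa [Follows] using hn.asymm) fun he => ?_
      rw [if_neg one_ne_zero] at he
      rw [he] at hn
      exact lexLt_irrefl _ hn
    · refine hgen n 0 (Or.inl rfl) (by simpa [Follows] using hn.asymm) fun he => ?_
      rw [if_pos rfl] at he
      rw [he] at hn
      exact lexLt_irrefl _ hn
  obtain ⟨n, Y, hY, he, hne⟩ := hdec
  obtain ⟨q, hq⟩ := exists_change hne
  have heq : sh (m * q + n) z = phi m X A (sh q Y) := by rw [← sh_sh, he, sh_phi h]
  have h01 : sh q Y 0 ≠ sh q Y 1 := by simpa [sh, add_comm 1] using hq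
  have hsh : ∀ k, sh k (phi m X A (sh q Y)) = sh (k + (m * q + n)) z := fun k => by
    rw [← heq, sh_sh]
  refine Set.mem_iUnion.2 ⟨m * q + n, sh q Y, fun k => ⟨?_, ?_⟩, heq.symm⟩
  · exact not_sh_lt_of_phi h hB (hY.sh q) h01 (fun k => by rw [hsh]; exact (hz _).1) k
  · exact not_lt_sh_of_phi h hB (hY.sh q) h01 (fun k => by rw [hsh]; exact (hz _).2) k

theorem gammaSet_phi_countable (h : ExtremalPair m X A) (hB : BinaryPair N R B)
    (hc : (GammaSet X A).Countable) (hcB : (GammaSet R B).Countable) :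
    (GammaSet (phi m X A (sh (N - 1) R)) (phi m X A (sh (N - 1) B))).Countable :=
  (hc.union (Set.countable_iUnion fun n =>
    countable_sh_preimage ((countable_sh_preimage hcB 1).image _) n)).mono
    (gammaSet_phi_subset h hB)

end Substitution

section Words

/-- The periodic integer sequence with period block `w`. -/
def ps (w : List ℕ) (i : ℕ) : ℤ := perSeq w i

theorem ps_add_length (w : List ℕ) (i : ℕ) : ps w (i + w.length) = ps w i := by
  simp [ps, perSeq]

theorem ps_of_lt {w : List ℕ} {i : ℕ} (hi : i < w.length) : ps w i = (w[i] : ℤ) := by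
  simp [ps, perSeq, Nat.mod_eq_of_lt hi, hi]

theorem ps_mod (w : List ℕ) (i : ℕ) : ps w (i % w.length) = ps w i := by
  simp [ps, perSeq]

theorem ps_rotate (w : List ℕ) (k : ℕ) : ps (w.rotate k) = sh k (ps w) := by
  rcases eq_or_ne w [] with rfl | hw
  · funext i; simp [ps, perSeq, sh]
  have hpos := List.length_pos_of_ne_nil hw
  funext i
  rw [← ps_mod, List.length_rotate, ps_of_lt (by simpa using Nat.mod_lt _ hpos),
    List.getElem_rotate, ← ps_of_lt (Nat.mod_lt _ hpos), ps_mod]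
  simp only [sh]
  rw [← ps_mod w (i + k), ← Nat.mod_add_mod, ps_mod]

theorem lt_of_lexLt_ps {v w : List ℕ} (hl : v.length = w.length) (h : LexLt (ps v) (ps w)) :
    v < w := by
  obtain ⟨n, hn, hlt⟩ := h
  have hpos : 0 < w.length := by
    rcases w.length.eq_zero_or_pos with h0 | h0
    · rw [List.length_eq_zero_iff] at h0
      rw [h0, List.length_nil, List.length_eq_zero_iff] at hl
      rw [hl, h0] at hlt
      exact absurd hlt (lt_irrefl _)
    · exact h0
  have hnl : n < w.length := by
    by_contra hc
    have := hn (n % w.length) ((Nat.mod_lt _ hpos).trans_le (by omega))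
    rw [ps_mod, ← hl, ps_mod] at this
    omega
  rw [List.lt_iff_exists]
  refine Or.inr ⟨n, by omega, hnl, fun j hj => ?_, ?_⟩
  · have := hn j hj
    rw [ps_of_lt (by omega), ps_of_lt (by omega)] at this
    exact_mod_cast this
  · rw [ps_of_lt (by omega), ps_of_lt hnl] at hlt
    exact_mod_cast hlt

theorem foldl_max_spec (l : List (List ℕ)) (a : List ℕ) :
    (l.foldl max a = a ∨ l.foldl max a ∈ l) ∧ a ≤ l.foldl max a ∧ ∀ x ∈ l, x ≤ l.foldl max a := by
  induction l generalizing a with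
  | nil => simp
  | cons b l ih =>
    obtain ⟨h1, h2, h3⟩ := ih (max a b)
    simp only [List.foldl_cons, List.mem_cons]
    refine ⟨?_, (le_max_left a b).trans h2, ?_⟩
    · rcases h1 with h1 | h1
      · rcases max_choice a b with h | h
        · exact Or.inl (h1.trans h)
        · exact Or.inr (Or.inl (h1.trans h))
      · exact Or.inr (Or.inr h1)
    · rintro x (rfl | hx)
      · exact (le_max_right a x).trans h2
      · exact h3 x hx

theorem maxCyc_spec {w : List ℕ} (hw : w ≠ []) :
    (∃ k, maxCyc w = w.rotate k) ∧ ∀ k < w.length, w.rotate k ≤ maxCyc w := by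
  obtain ⟨h1, -, h3⟩ := foldl_max_spec ((List.range w.length).map w.rotate) []
  have hpos := List.length_pos_of_ne_nil hw
  have hle : ∀ k < w.length, w.rotate k ≤ maxCyc w := fun k hk =>
    h3 _ (List.mem_map.2 ⟨k, List.mem_range.2 hk, rfl⟩)
  refine ⟨?_, hle⟩
  rcases h1 with h1 | h1
  · exfalso
    have h0 := hle 0 hpos
    rw [maxCyc, h1, List.rotate_zero] at h0
    obtain ⟨a, l, rfl⟩ := List.exists_cons_of_ne_nil hw
    exact absurd (List.nil_lt_cons a l) (not_lt.2 h0)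
  · obtain ⟨k, -, hk⟩ := List.mem_map.1 h1
    exact ⟨k, hk.symm⟩

theorem length_maxCyc {w : List ℕ} (hw : w ≠ []) : (maxCyc w).length = w.length := by
  obtain ⟨⟨k, hk⟩, -⟩ := maxCyc_spec hw
  rw [hk, List.length_rotate]

/-- The largest shift of `w^∞` is the periodic sequence of `L(w)`. -/
theorem ps_maxCyc {w : List ℕ} (hw : w ≠ []) {A : ℕ → ℤ}
    (h : ExtremalPair w.length (ps w) A) : ps (maxCyc w) = A := by
  obtain ⟨⟨k, hk⟩, hmax⟩ := maxCyc_spec hw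
  refine eq_of_not_lexLt (fun hlt => ?_) ?_
  · obtain ⟨l, hl⟩ := h.conj
    have hl' : A = ps (w.rotate (l % w.length)) := by rw [List.rotate_mod, ps_rotate, hl]
    rw [hl'] at hlt
    exact absurd (lt_of_lexLt_ps (by simp [length_maxCyc hw]) hlt)
      (not_lt.2 (hmax _ (Nat.mod_lt _ h.pos)))
  · rw [hk, ps_rotate]
    exact h.not_lt_shX k

theorem length_wplus {w : List ℕ} (hw : w ≠ []) : (wplus w).length = w.length := by
  have := List.length_pos_of_ne_nil hw
  simp [wplus]; omega

theorem length_wminus {w : List ℕ} (hw : w ≠ []) : (wminus w).length = w.length := by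
  have := List.length_pos_of_ne_nil hw
  simp [wminus]; omega

theorem getD_concat (l : List ℕ) (a b : ℕ) {j : ℕ} (hj : j < l.length + 1) :
    (l ++ [b]).getD j 0 = if j = l.length then b else (l ++ [a]).getD j 0 := by
  split_ifs with h
  · subst h; simp
  · have : j < l.length := by omega
    rw [List.getD_append _ _ _ _ this, List.getD_append _ _ _ _ this]

theorem getD_wplus {w : List ℕ} (hw : w ≠ []) {j : ℕ} (hj : j < w.length) :
    ((wplus w).getD j 0 : ℤ) = ps w j + if j = w.length - 1 then 1 else 0 := by
  obtain ⟨l, a, rfl⟩ := (List.eq_nil_or_concat' w).resolve_left hw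
  rw [ps_of_lt hj]
  simp only [List.length_append, List.length_singleton] at hj
  rw [wplus, List.dropLast_concat, getD_concat l a _ hj]
  split_ifs with h1 h2 h2
  · subst h1; simp [List.getLast!_eq_getLast?_getD]
  · simp at h2; omega
  · simp at h2; omega
  · simp [List.getElem?_eq_getElem (l := l ++ [a]) (i := j) (by simpa using hj)]

theorem getD_wminus {w : List ℕ} (hw : w ≠ []) (hpos : 1 ≤ ps w (w.length - 1)) {j : ℕ}
    (hj : j < w.length) :
    ((wminus w).getD j 0 : ℤ) = ps w j + if j = w.length - 1 then -1 else 0 := by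
  obtain ⟨l, a, rfl⟩ := (List.eq_nil_or_concat' w).resolve_left hw
  rw [ps_of_lt (by simp)] at hpos
  rw [ps_of_lt hj]
  simp only [List.length_append, List.length_singleton] at hj
  rw [wminus, List.dropLast_concat, getD_concat l a _ hj]
  split_ifs with h1 h2 h2
  · subst h1
    simp [List.getLast!_eq_getLast?_getD] at hpos ⊢
    omega
  · simp at h2; omega
  · simp at h2; omega
  · simp [List.getElem?_eq_getElem (l := l ++ [a]) (i := j) (by simpa using hj)]

theorem getD_eq_ps {w : List ℕ} {j : ℕ} (hj : j < w.length) : (w.getD j 0 : ℤ) = ps w j := by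
  simp [ps, perSeq, Nat.mod_eq_of_lt hj]

variable {s : List ℕ}

theorem length_phiBlock (hs : s ≠ []) (p d : ℕ) : (phiBlock s p d).length = s.length := by
  have hm : maxCyc s ≠ [] := by
    rw [← List.length_pos_iff, length_maxCyc hs, List.length_pos_iff]; exact hs
  unfold phiBlock
  split_ifs <;> simp [length_wplus, length_wminus, length_maxCyc, hs, hm]

theorem getD_phiBlock (hs : s ≠ []) (hpos : 1 ≤ ps s (s.length - 1)) {p d : ℕ}
    (hp : p ≤ 1) (hd : d ≤ 1) {j : ℕ} (hj : j < s.length) :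
    ((phiBlock s p d).getD j 0 : ℤ) = (if (p : ℤ) = 0 then ps (maxCyc s) j else ps s j) +
      if j = s.length - 1 then (d : ℤ) - p else 0 := by
  have hl := length_maxCyc hs
  have hm : maxCyc s ≠ [] := by
    rw [← List.length_pos_iff, hl, List.length_pos_iff]; exact hs
  unfold phiBlock
  obtain rfl | rfl : p = 0 ∨ p = 1 := by omega
  all_goals obtain rfl | rfl : d = 0 ∨ d = 1 := by omega
  · simpa using getD_eq_ps (hl ▸ hj)
  · simpa [hl] using getD_wplus hm (hl ▸ hj)
  · simpa using getD_wminus hs hpos hj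
  · simpa using getD_eq_ps hj

theorem length_phiAux (hs : s ≠ []) (p : ℕ) (l : List ℕ) :
    (phiAux s p l).length = s.length * l.length := by
  induction l generalizing p with
  | nil => simp [phiAux]
  | cons d l ih => simp [phiAux, length_phiBlock hs, ih]; ring

theorem getD_phiAux (hs : s ≠ []) (p : ℕ) (l : List ℕ) {i : ℕ} (hi : i < s.length * l.length) :
    (phiAux s p l).getD i 0 =
      (phiBlock s ((p :: l).getD (i / s.length) 0) (l.getD (i / s.length) 0)).getD
        (i % s.length) 0 := by
  have hpos := List.length_pos_of_ne_nil hs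
  induction l generalizing p i with
  | nil => simp at hi
  | cons d l ih =>
    rw [phiAux]
    rcases lt_or_ge i s.length with h | h
    · rw [List.getD_append _ _ _ _ (by rwa [length_phiBlock hs]), Nat.div_eq_of_lt h,
        Nat.mod_eq_of_lt h]
      rfl
    · rw [List.getD_append_right _ _ _ _ (by rwa [length_phiBlock hs]), length_phiBlock hs, ih d
        (by rw [List.length_cons, Nat.mul_succ] at hi; omega)]
      obtain ⟨c, rfl⟩ := Nat.exists_eq_add_of_le h
      rw [Nat.add_sub_cancel_left, Nat.add_div_left _ hpos, Nat.add_mod_left]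
      rfl

/-- The substitution of a word which starts with `0` and ends with `1`, as a periodic sequence. -/
theorem ps_subst (hs : s ≠ []) (hpos : 1 ≤ ps s (s.length - 1))
    (h : ExtremalPair s.length (ps s) (ps (maxCyc s))) {r : List ℕ} (hr : r ≠ [])
    (hbin : ∀ d ∈ r, d ≤ 1) (hhead : ps r 0 = 0) (hlast : ps r (r.length - 1) = 1) :
    (subst s r).length = s.length * r.length ∧
      ps (subst s r) = phi s.length (ps s) (ps (maxCyc s)) (sh (r.length - 1) (ps r)) := by
  have hN := List.length_pos_of_ne_nil hr
  have hsub : subst s r = phiAux s 1 r := by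
    obtain ⟨d, l, rfl⟩ := List.exists_cons_of_ne_nil hr
    rw [ps_of_lt hN] at hhead
    have : d = 0 := by simpa using hhead
    subst this
    rfl
  have hlen : (subst s r).length = s.length * r.length := by rw [hsub, length_phiAux hs]
  refine ⟨hlen, funext fun i => ?_⟩
  have hd1 : ∀ q, r.getD q 0 ≤ 1 := fun q => by
    rcases lt_or_ge q r.length with hq | hq
    · simpa [List.getElem?_eq_getElem hq] using hbin _ (List.getElem_mem hq)
    · simp [List.getElem?_eq_none hq]
  have hp1 : ∀ q, (1 :: r).getD q 0 ≤ 1 := fun q => by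
    rcases q with _ | q
    · simp
    · exact hd1 q
  have hlt : i % (s.length * r.length) < s.length * r.length := Nat.mod_lt _ (Nat.mul_pos h.pos hN)
  have hq : i / s.length % r.length < r.length := Nat.mod_lt _ hN
  have e := congrFun (sh_phi (Y := sh (r.length - 1) (ps r)) h (i / s.length)) (i % s.length)
  rw [phi_of_lt (Nat.mod_lt _ h.pos)] at e
  have e0 : sh (i / s.length) (sh (r.length - 1) (ps r)) 0 =
      ((1 :: r).getD (i / s.length % r.length) 0 : ℕ) := by
    simp only [sh, zero_add]
    rw [← ps_mod, ← Nat.mod_add_mod]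
    rcases hc : i / s.length % r.length with _ | q
    · rw [zero_add, ps_mod, hlast]; simp
    · rw [show q + 1 + (r.length - 1) = q + r.length by omega, ps_mod, ps_add_length,
        ← getD_eq_ps (by omega)]
      rfl
  have e1 : sh (i / s.length) (sh (r.length - 1) (ps r)) 1 =
      (r.getD (i / s.length % r.length) 0 : ℕ) := by
    simp only [sh]
    rw [show 1 + i / s.length + (r.length - 1) = i / s.length + r.length by omega, ps_add_length,
      ← ps_mod, getD_eq_ps hq]
  rw [e0, e1, ← getD_phiBlock hs hpos (hp1 _) (hd1 _) (Nat.mod_lt _ h.pos)] at e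
  simp only [sh, Nat.mod_add_div] at e
  rw [e, ← ps_mod, hlen, ← getD_eq_ps (by rwa [hlen]), hsub, getD_phiAux hs 1 r hlt,
    Nat.mod_mul_right_div_self, Nat.mod_mul_right_mod]

/-- The words whose periodic sequence and largest shift form an extremal pair bounding only
countably many sequences. -/
structure Admissible (s : List ℕ) : Prop where
  ne_nil : s ≠ []
  last_pos : 1 ≤ ps s (s.length - 1)
  pair : ExtremalPair s.length (ps s) (ps (maxCyc s))
  countable : (GammaSet (ps s) (ps (maxCyc s))).Countable

theorem Admissible.subst (h : Admissible s) {r : List ℕ} (hr : Admissible r)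
    (hbin : ∀ d ∈ r, d ≤ 1) (hB : BinaryPair r.length (ps r) (ps (maxCyc r))) :
    Admissible (subst s r) := by
  obtain ⟨hlen, hps⟩ := ps_subst h.ne_nil h.last_pos h.pair hr.ne_nil hbin hB.headR hB.lastR
  have hpair := extremalPair_phi h.pair hB
  have hc := gammaSet_phi_countable h.pair hB h.countable hr.countable
  rw [← hps, ← hlen] at hpair
  have hne : _root_.subst s r ≠ [] := List.length_pos_iff.1 hpair.pos
  have hmax := ps_maxCyc hne hpair
  rw [← hps, ← hmax] at hc
  refine ⟨hne, ?_, hmax ▸ hpair, hc⟩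
  have hm := h.pair.pos
  have hN := hB.pos
  have e := congrFun (sh_phi (Y := sh (r.length - 1) (ps r)) h.pair (r.length - 1)) (s.length - 1)
  have hidx : s.length - 1 + s.length * (r.length - 1) = s.length * r.length - 1 := by
    obtain ⟨M, hM⟩ : ∃ M, r.length = M + 1 := ⟨r.length - 1, by omega⟩
    rw [hM, Nat.mul_succ, Nat.add_sub_cancel]
    omega
  rw [phi_pred hm, sh] at e
  have e1 : sh (r.length - 1) (sh (r.length - 1) (ps r)) 1 = 1 := by
    simp only [sh]
    rw [show 1 + (r.length - 1) + (r.length - 1) = r.length - 1 + r.length by omega,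
      ps_add_length, hB.lastR]
  rw [hlen, hps, ← hidx, e, e1]
  have hA : 0 ≤ ps (maxCyc s) (s.length - 1) := by simp [ps]
  have := h.last_pos
  rcases (hB.binR.sh (r.length - 1)).sh (r.length - 1) 0 with h0 | h0
  · rw [if_pos h0, h0]; omega
  · rw [if_neg (by omega), h0]; omega

theorem ps_map_add {w : List ℕ} (hw : w ≠ []) (c i : ℕ) :
    ps (w.map (· + c)) i = ps w i + c := by
  have hN := List.length_pos_of_ne_nil hw
  rw [← ps_mod, ← ps_mod w, List.length_map, ps_of_lt (by simpa using Nat.mod_lt _ hN),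
    ps_of_lt (Nat.mod_lt _ hN)]
  simp

theorem iterate_theta (k : ℕ) (w : List ℕ) : theta^[k] w = w.map (· + k) := by
  induction k with
  | zero => simp
  | succ k ih =>
    rw [Function.iterate_succ_apply', ih, theta, List.map_map]
    rfl

theorem length_cons_concat (w : List ℕ) (a b : ℕ) : (a :: w ++ [b]).length = w.length + 2 := by
  simp

theorem ps_last (w : List ℕ) : ps (0 :: w ++ [1]) ((0 :: w ++ [1]).length - 1) = 1 := by
  rw [ps_of_lt (by simp)]
  simp

theorem ps_swap_ends (w : List ℕ) (i : ℕ) :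
    ps (1 :: w ++ [0]) i = ps (0 :: w ++ [1]) i + (if w.length + 2 ∣ i then 1 else 0) -
      (if w.length + 2 ∣ i + 1 then 1 else 0) := by
  have hmod := Nat.mod_lt i (show 0 < w.length + 2 by omega)
  have hd1 : w.length + 2 ∣ i + 1 ↔ i % (w.length + 2) = w.length + 1 := by
    rw [Nat.dvd_iff_mod_eq_zero, ← Nat.mod_add_mod, ← Nat.dvd_iff_mod_eq_zero, dvd_succ_iff hmod]
    omega
  have hd0 : w.length + 2 ∣ i ↔ i % (w.length + 2) = 0 := Nat.dvd_iff_mod_eq_zero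
  have e0 := ps_mod (0 :: w ++ [1]) i
  have e1 := ps_mod (1 :: w ++ [0]) i
  simp only [hd0, hd1]
  rw [length_cons_concat] at e0 e1
  rw [← e0, ← e1]
  generalize i % (w.length + 2) = j at hmod
  rw [ps_of_lt (by rwa [length_cons_concat]), ps_of_lt (by rwa [length_cons_concat])]
  rcases j with _ | j
  · simp
  · rcases (show j ≤ w.length by omega).lt_or_eq with h1 | rfl
    · simp [List.getElem_append_left h1, h1.ne]
    · simp

/-- `0yx1 = x01y`: the conjugates `0yx1` and `1yx0` differ only in their first and last letters. -/
theorem christoffelSeq_of_word {x y : List ℕ} (h : 0 :: (y ++ x) ++ [1] = x ++ [0, 1] ++ y) (c : ℕ) :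
    ChristoffelSeq (0 :: (y ++ x) ++ [1]).length (x.length + 1)
      (ps ((0 :: (y ++ x) ++ [1]).map (· + c))) where
  pos := by simp
  per i := by
    have := ps_add_length ((0 :: (y ++ x) ++ [1]).map (· + c)) i
    rwa [List.length_map] at this
  swap i := by
    rw [ps_map_add (by simp), ps_map_add (by simp)]
    have hrot : (0 :: (y ++ x) ++ [1]).rotate (x.length + 1) = 1 :: (y ++ x) ++ [0] := by
      rw [h, show x ++ [0, 1] ++ y = (x ++ [0]) ++ ([1] ++ y) by simp,
        show x.length + 1 = (x ++ [0]).length by simp, List.rotate_append_length_eq]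
      simp
    have e := congrFun (ps_rotate (0 :: (y ++ x) ++ [1]) (x.length + 1)) i
    rw [hrot, ps_swap_ends, sh] at e
    rw [← e, length_cons_concat]
    ring

/-- The standard factorisation property of a pair of neighbouring Farey words. -/
def FareyNeighbors (u v : List ℕ) : Prop :=
  ∃ x y, u = 0 :: y ∧ v = x ++ [1] ∧ 0 :: (y ++ x) ++ [1] = x ++ [0, 1] ++ y ∧
    (∀ d ∈ x, d ≤ 1) ∧ ∀ d ∈ y, d ≤ 1

theorem FareyNeighbors.left {u v : List ℕ} (h : FareyNeighbors u v) : FareyNeighbors u (u ++ v) := by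
  obtain ⟨x, y, rfl, rfl, he, hx, hy⟩ := h
  refine ⟨0 :: y ++ x, y, rfl, by simp, ?_, ?_, hy⟩
  · simpa using he
  · intro d hd
    simp only [List.cons_append, List.mem_cons, List.mem_append] at hd
    rcases hd with rfl | hd | hd
    · exact zero_le_one
    · exact hy d hd
    · exact hx d hd

theorem FareyNeighbors.right {u v : List ℕ} (h : FareyNeighbors u v) :
    FareyNeighbors (u ++ v) v := by
  obtain ⟨x, y, rfl, rfl, he, hx, hy⟩ := h
  refine ⟨x, y ++ x ++ [1], by simp, rfl, ?_, hx, ?_⟩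
  · have := congrArg (· ++ (x ++ [1])) he
    simpa using this
  · intro d hd
    simp only [List.mem_append, List.mem_singleton] at hd
    rcases hd with (hd | hd) | rfl
    · exact hy d hd
    · exact hx d hd
    · exact le_rfl

theorem isChain_fareyInsert {l : List (List ℕ)} (h : l.IsChain FareyNeighbors) :
    (fareyInsert l).IsChain FareyNeighbors := by
  induction l using fareyInsert.induct with
  | case1 => simp [fareyInsert]
  | case2 w => simp [fareyInsert]
  | case3 w v rest ih =>
    rw [List.isChain_cons_cons] at h
    have := ih h.2
    rw [fareyInsert, List.isChain_cons_cons]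
    refine ⟨h.1.left, ?_⟩
    rcases rest with _ | ⟨a, rest⟩
    · simpa [fareyInsert] using h.1.right
    · rw [fareyInsert, List.isChain_cons_cons]
      exact ⟨h.1.right, by simpa [fareyInsert] using this⟩

theorem mem_fareyInsert {l : List (List ℕ)} (h : l.IsChain FareyNeighbors) {r : List ℕ}
    (hr : r ∈ fareyInsert l) : r ∈ l ∨ ∃ u v, FareyNeighbors u v ∧ r = u ++ v := by
  induction l using fareyInsert.induct with
  | case1 => simp [fareyInsert] at hr
  | case2 w => exact Or.inl (by simpa [fareyInsert] using hr)
  | case3 w v rest ih =>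
    rw [List.isChain_cons_cons] at h
    rw [fareyInsert, List.mem_cons, List.mem_cons] at hr
    rcases hr with rfl | rfl | hr
    · exact Or.inl (by simp)
    · exact Or.inr ⟨w, v, h.1, rfl⟩
    · rcases ih h.2 hr with h1 | h1
      · exact Or.inl (List.mem_cons_of_mem _ h1)
      · exact Or.inr h1

theorem isChain_fareyLevel (n : ℕ) : (fareyLevel n).IsChain FareyNeighbors := by
  induction n with
  | zero => simpa [fareyLevel] using ⟨[], [], by simp⟩
  | succ n ih => exact isChain_fareyInsert ih

theorem exists_of_mem_fareySet {r : List ℕ} (hr : r ∈ FareySet) :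
    ∃ u v, FareyNeighbors u v ∧ r = u ++ v := by
  obtain ⟨⟨n, hn⟩, h0, h1⟩ := hr
  induction n with
  | zero => simp [fareyLevel, h0, h1] at hn
  | succ n ih =>
    rcases mem_fareyInsert (isChain_fareyLevel n) hn with h | h
    · exact ih h
    · exact h

theorem admissible_map_add_of_mem_fareySet {r : List ℕ} (hr : r ∈ FareySet) (c : ℕ) :
    Admissible (r.map (· + c)) := by
  obtain ⟨u, v, ⟨x, y, rfl, rfl, he, hx, hy⟩, rfl⟩ := exists_of_mem_fareySet hr
  rw [show 0 :: y ++ (x ++ [1]) = 0 :: (y ++ x) ++ [1] by simp]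
  have hC := christoffelSeq_of_word he c
  have hpair := hC.extremalPair
  rw [← List.length_map (· + c)] at hpair
  have hmax := ps_maxCyc (by simp) hpair
  refine ⟨by simp, ?_, hmax ▸ hpair, hmax ▸ hC.gammaSet_countable⟩
  rw [ps_map_add (by simp), List.length_map, ps_last]
  omega

theorem binary_ps {w : List ℕ} (hw : w ≠ []) (hbin : ∀ d ∈ w, d ≤ 1) : Binary (ps w) := fun i => by
  have hlt := Nat.mod_lt i (List.length_pos_of_ne_nil hw)
  have := hbin _ (List.getElem_mem hlt)
  rw [← ps_mod, ps_of_lt hlt]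
  omega

theorem binaryPair_of_mem_fareySet {r : List ℕ} (hr : r ∈ FareySet) :
    (∀ d ∈ r, d ≤ 1) ∧ BinaryPair r.length (ps r) (ps (maxCyc r)) := by
  have hadm := admissible_map_add_of_mem_fareySet hr 0
  simp only [add_zero, List.map_id'] at hadm
  obtain ⟨u, v, ⟨x, y, rfl, rfl, he, hx, hy⟩, rfl⟩ := exists_of_mem_fareySet hr
  rw [show 0 :: y ++ (x ++ [1]) = 0 :: (y ++ x) ++ [1] by simp] at *
  have hC := christoffelSeq_of_word he 0
  simp only [add_zero, List.map_id'] at hC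
  have hmax := ps_maxCyc hadm.ne_nil hC.extremalPair
  have hbin : ∀ d ∈ 0 :: (y ++ x) ++ [1], d ≤ 1 := by
    intro d hd
    simp only [List.cons_append, List.mem_cons, List.mem_append, List.not_mem_nil, or_false] at hd
    rcases hd with rfl | (hd | hd) | rfl
    · exact zero_le_one
    · exact hy d hd
    · exact hx d hd
    · exact le_rfl
  have hb := binary_ps hadm.ne_nil hbin
  have h0 : ps (0 :: (y ++ x) ++ [1]) 0 = 0 := by rw [ps_of_lt (by simp)]; simp
  have h1 : ps (0 :: (y ++ x) ++ [1]) ((0 :: (y ++ x) ++ [1]).length - 1) = 1 :=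
    ps_last _
  have hnd : ¬ (0 :: (y ++ x) ++ [1]).length ∣ 1 := by simp
  have hN := hC.pos
  have hnd' : ¬ (0 :: (y ++ x) ++ [1]).length ∣ (0 :: (y ++ x) ++ [1]).length - 1 :=
    Nat.not_dvd_of_pos_of_lt (by simp) (by omega)
  refine ⟨hbin, ⟨hadm.pair, hb, ?_, h0, ?_, h1, ?_⟩⟩
  · rw [hmax]; exact hb.sh _
  · rw [hmax, sh, hC.swap, h0, if_pos (dvd_zero _), zero_add, if_neg hnd]; norm_num
  · rw [hmax, sh, hC.swap, h1, if_neg hnd', Nat.sub_add_cancel hN, if_pos dvd_rfl]; norm_num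

theorem admissible_singleton (c : ℕ) : Admissible [c + 1] := by
  have hps : ∀ i, ps [c + 1] i = c + 1 := fun i => by simp [ps, perSeq, Nat.mod_one]
  have hpair : ExtremalPair [c + 1].length (ps [c + 1]) (ps [c + 1]) :=
    { pos := by simp
      perX := ps_add_length _
      perA := ps_add_length _
      conj := ⟨0, rfl⟩
      ltX := fun i hi => absurd (one_dvd i) hi
      ltA := fun i hi => absurd (one_dvd i) hi }
  have hmax := ps_maxCyc (by simp) hpair
  refine ⟨by simp, by rw [hps]; omega, hmax.symm ▸ hpair, ?_⟩
  rw [hmax]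
  refine (Set.countable_singleton (ps [c + 1])).mono fun z hz => ?_
  exact eq_of_not_lexLt (hz 0).1 (hz 0).2

theorem admissible_of_mem_fareyExt (h : s ∈ FareyExt) : Admissible s := by
  obtain ⟨v, hv, k, rfl⟩ := h
  rw [iterate_theta]
  rcases hv with hv | hv
  · exact admissible_map_add_of_mem_fareySet hv k
  · rw [Set.mem_singleton_iff.1 hv]
    simpa [add_comm] using admissible_singleton k

theorem admissible_foldl {rs : List (List ℕ)} (hrs : ∀ r ∈ rs, r ∈ FareySet) (h : Admissible s) :
    Admissible (rs.foldl subst s) := by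
  induction rs generalizing s with
  | nil => exact h
  | cons r rs ih =>
    have hr := hrs r (by simp)
    obtain ⟨hbin, hB⟩ := binaryPair_of_mem_fareySet hr
    have hadm := admissible_map_add_of_mem_fareySet hr 0
    simp only [add_zero, List.map_id'] at hadm
    exact ih (fun r' hr' => hrs r' (by simp [hr'])) (h.subst hadm hbin hB)

theorem admissible_of_mem_lambdaExt (h : s ∈ LambdaExt) : Admissible s := by
  simp only [LambdaExt, Set.mem_iUnion] at h
  obtain ⟨m, -, s₁, hs₁, rs, -, hrs, rfl⟩ := h
  exact admissible_foldl hrs (admissible_of_mem_fareyExt hs₁)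

theorem not_lexLt_of_seqLe {x y : ℕ → ℕ} (h : seqLe x y) :
    ¬ LexLt (fun i => (y i : ℤ)) fun i => (x i : ℤ) := by
  rcases h with rfl | ⟨n, hn, hlt⟩
  · exact lexLt_irrefl _
  · exact LexLt.asymm ⟨n, fun i hi => by simp [hn i hi], by simpa using hlt⟩

end Words

/-- Let `S ∈ Λ_e` and `M ∈ ℕ` with `J^S ⊆ [M, M+1)`.  Then the set
`Γ(S) = {z ∈ {0,…,M}^ℕ : S^∞ ≼ σⁿ(z) ≼ L(S)^∞ for all n ≥ 0}` is countable. -/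
theorem gamma_countable (S : List ℕ) (hS : S ∈ LambdaExt) (M : ℕ)
    (hM : Jint S ⊆ Set.Ico (M : ℝ) ((M : ℝ) + 1)) :
    Set.Countable {z : ℕ → ℕ | (∀ i, z i ≤ M) ∧
      ∀ n : ℕ, seqLe (perSeq S) (shiftn n z) ∧ seqLe (shiftn n z) (perSeq (maxCyc S))} := by
  have h := (admissible_of_mem_lambdaExt hS).countable
  have hinj : Function.Injective fun (z : ℕ → ℕ) (i : ℕ) => (z i : ℤ) := fun z z' he =>
    funext fun i => by simpa using congrFun he i
  refine (h.preimage hinj).mono ?_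
  intro z hz
  exact fun n => ⟨not_lexLt_of_seqLe (hz.2 n).1, not_lexLt_of_seqLe (hz.2 n).2⟩
end
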